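/- (Glimm's theorem.) Let N ≥ 1, let K ⊂ ℝ^N be compact, let O ⊇ K be an open neighborhood of K, and let F : O → ℝ^N be C² such that the system ∂_t U + ∂_x F(U) = 0 is strictly hyperbolic on O, i.e., for every U ∈ O the Jacobian matrix DF(U) has N distinct real eigenvalues. Then there exist constants δ > 0 and C > 0 such that: for every U₀ : ℝ → ℝ^N with total variation Tot.Var{U₀} < δ and with lim_{x → −∞} U₀(x) ∈ K, there exists a global weak solution U : (0,∞) × ℝ → O of ∂_t U + ∂_x F(U) = 0 with initial data U₀ satisfying Tot.Var{U(t,·)} ≤ C · Tot.Var{U₀} for almost every t > 0. -/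

import Mathlib

open MeasureTheory Filter Set Matrix

/-!
The solution is a limit of a Glimm scheme built from Rankine-Hugoniot jumps only: the weak
formulation carries no entropy condition, so that the `k`-th wave curve may be taken to be the full
Hugoniot curve through `U`, written as `U + σ ρ_k(σ, U)` with `ρ_k` Lipschitz (`hugoniot`). Every
fan then consists of `N` discontinuities, and neither rarefactions nor genuine nonlinearity play any
role. A compactness argument (`patch`) reduces to data near one state `P`, and a linear change of
`(t, x)` (`Sol.galilean`) to characteristic speeds in `(0, 1)`, so that with equal time and space
steps all waves move to the right by at most one cell per step.

*Bounds.* `exists_sys` collects what is needed near `P`: jump relations, speeds ordered by family,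
and solvability of the Riemann problem with Lipschitz dependence. Composing two fans produces an
error bounded by the products of strengths of approaching waves, whence Glimm's functional, total
strength plus a multiple of the interaction potential, decreases (`glimm_decay`), and the total
variation stays bounded whatever intermediate state of each fan is sampled (`St.step`).

*Consistency.* Instead of sampling at random, the sampled state is chosen greedily. A fan prescribes
by conservation a certain average of its intermediate states; because the speeds increase with the
family, this average is a convex combination of the intermediate states, so that in every direction
some choice of sample deviates from it non-positively (`exists_cut`). Choosing it against the error
accumulated so far over a block of `M` cells keeps the squared error at most the sum of the squared
deviations (`greedy`), so after `n` steps the error grows only like `√n`. The deviations split into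
a time difference of the block averages and a space difference of terms living inside a block
(`decomposition`); for a suitable choice of `M` both vanish in the limit when tested
(`exists_approx`).

*Limit.* The bound on the variation in `x` and the Lipschitz bound in `t` yield a subsequence
converging almost everywhere (`exists_subseq`), and dominated convergence yields a weak solution
(`solution_of_approx`).
-/

namespace Glimm

/-! ### Perturbations of linear isomorphisms -/

/-- A map that is close to a linear isomorphism in the Lipschitz sense on a ball is bi-Lipschitz
there. -/
lemma antilip_of_approx {Y : Type*} [NormedAddCommGroup Y] [NormedSpace ℝ Y]
    (L : Y ≃L[ℝ] Y) {κ : ℝ} (hκ : 0 < κ) (hL : ∀ z, ‖L.symm z‖ ≤ κ * ‖z‖)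
    {f : Y → Y} {y y' : Y} (h : ‖f y - f y' - L (y - y')‖ ≤ (1 / (2 * κ)) * ‖y - y'‖) :
    ‖y - y'‖ ≤ 2 * κ * ‖f y - f y'‖ := by
  have h1 := hL (L (y - y'))
  rw [ContinuousLinearEquiv.symm_apply_apply] at h1
  have h2 : ‖L (y - y')‖ ≤ ‖f y - f y'‖ + (1 / (2 * κ)) * ‖y - y'‖ := by
    have := norm_sub_norm_le (L (y - y')) (f y - f y')
    rw [norm_sub_rev (L (y - y')) (f y - f y')] at this
    linarith
  have h3 : κ * ‖L (y - y')‖ ≤ κ * ‖f y - f y'‖ + (1 / 2) * ‖y - y'‖ := by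
    calc κ * ‖L (y - y')‖ ≤ κ * (‖f y - f y'‖ + (1 / (2 * κ)) * ‖y - y'‖) := by gcongr
      _ = _ := by field_simp
  linarith

/-- A map that is close to a linear isomorphism in the Lipschitz sense on a ball is onto a ball. -/
lemma surj_of_approx {Y : Type*} [NormedAddCommGroup Y] [NormedSpace ℝ Y] [CompleteSpace Y]
    (L : Y ≃L[ℝ] Y) {κ : ℝ} (hκ : 0 < κ) (hL : ∀ z, ‖L.symm z‖ ≤ κ * ‖z‖)
    {f : Y → Y} {y0 : Y} {ε : ℝ} (hε : 0 ≤ ε)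
    (h : ∀ y y', ‖y - y0‖ ≤ ε → ‖y' - y0‖ ≤ ε →
      ‖f y - f y' - L (y - y')‖ ≤ (1 / (2 * κ)) * ‖y - y'‖)
    {z : Y} (hz : ‖z - f y0‖ ≤ ε / (2 * κ)) : ∃ y, ‖y - y0‖ ≤ ε ∧ f y = z := by
  have hA : ApproximatesLinearOn f (L : Y →L[ℝ] Y) (Metric.closedBall y0 ε)
      ⟨1 / (2 * κ), by positivity⟩ := by
    intro y hy y' hy'
    exact h y y' (by simpa [dist_eq_norm] using hy) (by simpa [dist_eq_norm] using hy')
  let R : (L : Y →L[ℝ] Y).NonlinearRightInverse :=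
    { toFun := L.symm
      nnnorm := ⟨κ, hκ.le⟩
      bound' := hL
      right_inv' := fun y => L.apply_symm_apply y }
  have hS := hA.surjOn_closedBall_of_nonlinearRightInverse R hε (Subset.refl _)
  have hz' : z ∈ Metric.closedBall (f y0)
      ((((R.nnnorm : NNReal) : ℝ)⁻¹ - ((⟨1 / (2 * κ), by positivity⟩ : NNReal) : ℝ)) * ε) := by
    rw [Metric.mem_closedBall, dist_eq_norm]
    refine hz.trans (le_of_eq ?_)
    change ε / (2 * κ) = (κ⁻¹ - 1 / (2 * κ)) * ε
    field_simp
    ring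
  obtain ⟨y, hy, hyz⟩ := hS hz'
  exact ⟨y, by simpa [dist_eq_norm] using hy, hyz⟩

/-! ### Hugoniot curves -/

section Hugoniot

variable {V : Type*} [NormedAddCommGroup V] [NormedSpace ℝ V]

/-- The averaged Jacobian between `U` and `U + σ v`, applied to `v`: the quotient
`(F (U + σ v) - F U) / σ`, continued to `σ = 0`. -/
noncomputable def avgJac (F : V → V) (σ : ℝ) (U v : V) : V :=
  ∫ τ in (0 : ℝ)..1, fderiv ℝ F (U + (τ * σ) • v) v

lemma avgJac_props [CompleteSpace V] (F : V → V) (P : V) {R Λ m : ℝ} (hR : 0 < R) (hm : 0 < m)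
    (hΛ0 : 0 ≤ Λ) (hd : ∀ U, ‖U - P‖ ≤ R → DifferentiableAt ℝ F U)
    (hΛ : ∀ U U', ‖U - P‖ ≤ R → ‖U' - P‖ ≤ R →
      ‖fderiv ℝ F U - fderiv ℝ F U'‖ ≤ Λ * ‖U - U'‖) :
    ∃ ε > 0,
      (∀ σ U v, |σ| ≤ ε → ‖U - P‖ ≤ ε → ‖v‖ ≤ m →
        σ • avgJac F σ U v = F (U + σ • v) - F U) ∧
      (∀ σ U v v', |σ| ≤ ε → ‖U - P‖ ≤ ε → ‖v‖ ≤ m → ‖v'‖ ≤ m →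
        ‖avgJac F σ U v - avgJac F σ U v' - fderiv ℝ F P (v - v')‖
          ≤ Λ * (‖U - P‖ + 2 * |σ| * m) * ‖v - v'‖) ∧
      (∀ σ σ' U U' v, |σ| ≤ ε → ‖U - P‖ ≤ ε → |σ'| ≤ ε → ‖U' - P‖ ≤ ε → ‖v‖ ≤ m →
        ‖avgJac F σ U v - avgJac F σ' U' v‖ ≤ Λ * (‖U - U'‖ + m * |σ - σ'|) * m) := by
  have hε : 0 < min (R / 2) (R / (2 * m)) := by positivity
  refine ⟨min (R / 2) (R / (2 * m)), hε, ?_⟩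
  set ε := min (R / 2) (R / (2 * m)) with hεdef
  have hεm : ε * m ≤ R / 2 := by
    calc ε * m ≤ R / (2 * m) * m := by gcongr; exact min_le_right _ _
      _ = R / 2 := by field_simp
  have hεR : ε ≤ R / 2 := min_le_left _ _
  have key : ∀ σ U v (τ : ℝ), |σ| ≤ ε → ‖v‖ ≤ m → τ ∈ Icc (0 : ℝ) 1 →
      ‖U + (τ * σ) • v - P‖ ≤ ‖U - P‖ + |σ| * m := by
    intro σ U v τ hσ hv hτ
    have e : U + (τ * σ) • v - P = (U - P) + (τ * σ) • v := by abel
    rw [e]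
    refine (norm_add_le _ _).trans ?_
    gcongr
    rw [norm_smul, Real.norm_eq_abs, abs_mul, abs_of_nonneg hτ.1]
    calc τ * |σ| * ‖v‖ ≤ 1 * |σ| * m := by
          gcongr
          exact hτ.2
      _ = |σ| * m := by ring
  have keyR : ∀ σ U v (τ : ℝ), |σ| ≤ ε → ‖U - P‖ ≤ ε → ‖v‖ ≤ m → τ ∈ Icc (0 : ℝ) 1 →
      ‖U + (τ * σ) • v - P‖ ≤ R := by
    intro σ U v τ hσ hU hv hτ
    have h1 := key σ U v τ hσ hv hτ
    have h2 : |σ| * m ≤ ε * m := by gcongr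
    linarith
  have hDc : ContinuousOn (fderiv ℝ F) (Metric.closedBall P R) := by
    have : LipschitzOnWith ⟨Λ, hΛ0⟩ (fderiv ℝ F) (Metric.closedBall P R) := by
      refine LipschitzOnWith.of_dist_le_mul fun U hU U' hU' => ?_
      rw [dist_eq_norm, dist_eq_norm]
      exact hΛ U U' (by simpa [dist_eq_norm] using hU) (by simpa [dist_eq_norm] using hU')
    exact this.continuousOn
  have hcont : ∀ σ U v w, |σ| ≤ ε → ‖U - P‖ ≤ ε → ‖v‖ ≤ m →
      ContinuousOn (fun τ : ℝ => fderiv ℝ F (U + (τ * σ) • v) w) (Icc 0 1) := by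
    intro σ U v w hσ hU hv
    refine ContinuousOn.clm_apply (hDc.comp (Continuous.continuousOn (by fun_prop)) ?_)
      continuousOn_const
    intro τ hτ
    simpa [dist_eq_norm] using keyR σ U v τ hσ hU hv hτ
  have h_intble : ∀ σ U v w, |σ| ≤ ε → ‖U - P‖ ≤ ε → ‖v‖ ≤ m →
      IntervalIntegrable (fun τ : ℝ => fderiv ℝ F (U + (τ * σ) • v) w) volume 0 1 := by
    intro σ U v w hσ hU hv
    refine ContinuousOn.intervalIntegrable ?_
    rw [uIcc_of_le zero_le_one]
    exact hcont σ U v w hσ hU hv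
  refine ⟨?_, ?_, ?_⟩
  · intro σ U v hσ hU hv
    have h1 : ∀ τ ∈ uIcc (0 : ℝ) 1, HasDerivAt (fun τ : ℝ => F (U + (τ * σ) • v))
        (σ • fderiv ℝ F (U + (τ * σ) • v) v) τ := by
      intro τ hτ
      rw [uIcc_of_le zero_le_one] at hτ
      have hF := (hd _ (keyR σ U v τ hσ hU hv hτ)).hasFDerivAt
      have hg : HasDerivAt (fun τ : ℝ => U + (τ * σ) • v) (σ • v) τ := by
        have := (((hasDerivAt_id τ).mul_const σ).smul_const v).const_add U
        simpa using this
      have := hF.comp_hasDerivAt τ hg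
      simpa [Function.comp_def] using this
    have h2 := intervalIntegral.integral_eq_sub_of_hasDerivAt h1
      ((h_intble σ U v v hσ hU hv).smul σ)
    rw [intervalIntegral.integral_smul] at h2
    simpa [avgJac] using h2
  · intro σ U v v' hσ hU hv hv'
    have e : avgJac F σ U v - avgJac F σ U v' - fderiv ℝ F P (v - v') =
        ∫ τ in (0 : ℝ)..1, (fderiv ℝ F (U + (τ * σ) • v) v - fderiv ℝ F (U + (τ * σ) • v') v'
          - fderiv ℝ F P (v - v')) := by
      rw [intervalIntegral.integral_sub, intervalIntegral.integral_sub]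
      · simp [avgJac]
      · exact h_intble σ U v v hσ hU hv
      · exact h_intble σ U v' v' hσ hU hv'
      · exact (h_intble σ U v v hσ hU hv).sub (h_intble σ U v' v' hσ hU hv')
      · simp
    rw [e]
    have := intervalIntegral.norm_integral_le_of_norm_le_const (a := (0 : ℝ)) (b := 1)
      (f := fun τ => (fderiv ℝ F (U + (τ * σ) • v) v - fderiv ℝ F (U + (τ * σ) • v') v'
          - fderiv ℝ F P (v - v'))) (C := Λ * (‖U - P‖ + 2 * |σ| * m) * ‖v - v'‖) ?_
    · simpa using this
    intro τ hτ
    rw [uIoc_of_le zero_le_one] at hτ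
    have hτ' : τ ∈ Icc (0 : ℝ) 1 := ⟨hτ.1.le, hτ.2⟩
    have e2 : fderiv ℝ F (U + (τ * σ) • v) v - fderiv ℝ F (U + (τ * σ) • v') v'
          - fderiv ℝ F P (v - v') =
        (fderiv ℝ F (U + (τ * σ) • v) - fderiv ℝ F P) (v - v') +
        (fderiv ℝ F (U + (τ * σ) • v) - fderiv ℝ F (U + (τ * σ) • v')) v' := by
      simp only [_root_.sub_apply, map_sub]
      abel
    rw [e2]
    have hPP : ‖P - P‖ ≤ R := by simpa using hR.le
    have b1 : ‖fderiv ℝ F (U + (τ * σ) • v) - fderiv ℝ F P‖ ≤ Λ * (‖U - P‖ + |σ| * m) :=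
      (hΛ _ _ (keyR σ U v τ hσ hU hv hτ') hPP).trans (by
        gcongr; exact key σ U v τ hσ hv hτ')
    have b2 : ‖fderiv ℝ F (U + (τ * σ) • v) - fderiv ℝ F (U + (τ * σ) • v')‖ ≤
        Λ * (|σ| * ‖v - v'‖) := by
      refine (hΛ _ _ (keyR σ U v τ hσ hU hv hτ') (keyR σ U v' τ hσ hU hv' hτ')).trans ?_
      gcongr
      have : U + (τ * σ) • v - (U + (τ * σ) • v') = (τ * σ) • (v - v') := by
        rw [smul_sub]; abel
      rw [this, norm_smul, Real.norm_eq_abs, abs_mul, abs_of_nonneg hτ'.1]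
      gcongr
      nlinarith [abs_nonneg σ, hτ'.2]
    calc _ ≤ ‖(fderiv ℝ F (U + (τ * σ) • v) - fderiv ℝ F P) (v - v')‖ +
        ‖(fderiv ℝ F (U + (τ * σ) • v) - fderiv ℝ F (U + (τ * σ) • v')) v'‖ := norm_add_le _ _
      _ ≤ Λ * (‖U - P‖ + |σ| * m) * ‖v - v'‖ + Λ * (|σ| * ‖v - v'‖) * m := by
        gcongr
        · exact (ContinuousLinearMap.le_opNorm _ _).trans (by gcongr)
        · exact (ContinuousLinearMap.le_opNorm _ _).trans (by gcongr)
      _ = _ := by ring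
  · intro σ σ' U U' v hσ hU hσ' hU' hv
    have e : avgJac F σ U v - avgJac F σ' U' v =
        ∫ τ in (0 : ℝ)..1, (fderiv ℝ F (U + (τ * σ) • v) v -
          fderiv ℝ F (U' + (τ * σ') • v) v) := by
      rw [intervalIntegral.integral_sub (h_intble σ U v v hσ hU hv) (h_intble σ' U' v v hσ' hU' hv)]
      simp [avgJac]
    rw [e]
    have := intervalIntegral.norm_integral_le_of_norm_le_const (a := (0 : ℝ)) (b := 1)
      (f := fun τ => (fderiv ℝ F (U + (τ * σ) • v) v - fderiv ℝ F (U' + (τ * σ') • v) v))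
      (C := Λ * (‖U - U'‖ + m * |σ - σ'|) * m) ?_
    · simpa using this
    intro τ hτ
    rw [uIoc_of_le zero_le_one] at hτ
    have hτ' : τ ∈ Icc (0 : ℝ) 1 := ⟨hτ.1.le, hτ.2⟩
    rw [← _root_.sub_apply]
    refine (ContinuousLinearMap.le_opNorm _ _).trans ?_
    gcongr
    refine (hΛ _ _ (keyR σ U v τ hσ hU hv hτ') (keyR σ' U' v τ hσ' hU' hv hτ')).trans ?_
    gcongr
    have : U + (τ * σ) • v - (U' + (τ * σ') • v) = (U - U') + (τ * (σ - σ')) • v := by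
      rw [mul_sub, sub_smul]; abel
    rw [this]
    refine (norm_add_le _ _).trans ?_
    gcongr
    rw [norm_smul, Real.norm_eq_abs, abs_mul, abs_of_nonneg hτ'.1]
    calc τ * |σ - σ'| * ‖v‖ ≤ 1 * |σ - σ'| * m := by
          gcongr
          exact hτ'.2
      _ = _ := by ring

/-- The Hugoniot curve through `U` of a simple eigenvalue `lam` of `DF(P)`: the jump from `U` to
`U + σ ρ(σ, U)` satisfies the Rankine-Hugoniot relation with speed `s(σ, U)`, and `ρ`, `s` are
Lipschitz near `(0, P)`. It solves `avgJac F σ U v = s v`, `ℓ v = 1` for `(v, s)`. -/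
lemma hugoniot [FiniteDimensional ℝ V] (F : V → V) (P : V) {R Λ : ℝ} (hR : 0 < R)
    (hΛ0 : 0 ≤ Λ) (hd : ∀ U, ‖U - P‖ ≤ R → DifferentiableAt ℝ F U)
    (hΛ : ∀ U U', ‖U - P‖ ≤ R → ‖U' - P‖ ≤ R →
      ‖fderiv ℝ F U - fderiv ℝ F U'‖ ≤ Λ * ‖U - U'‖)
    (r : V) (lam : ℝ) (l : V →L[ℝ] ℝ) (hr : fderiv ℝ F P r = lam • r) (hlr : l r = 1)
    (hl : ∀ w, l (fderiv ℝ F P w) = lam * l w)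
    (hker : ∀ w, fderiv ℝ F P w = lam • w → ∃ c : ℝ, w = c • r) :
    ∃ ε > 0, ∃ B : ℝ, 0 ≤ B ∧ ∃ ρ : ℝ → V → V, ∃ s : ℝ → V → ℝ, ρ 0 P = r ∧ s 0 P = lam ∧
      (∀ σ σ' U U', |σ| ≤ ε → ‖U - P‖ ≤ ε → |σ'| ≤ ε → ‖U' - P‖ ≤ ε →
        ‖ρ σ U - ρ σ' U'‖ ≤ B * (|σ - σ'| + ‖U - U'‖) ∧
        |s σ U - s σ' U'| ≤ B * (|σ - σ'| + ‖U - U'‖)) ∧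
      (∀ σ U, |σ| ≤ ε → ‖U - P‖ ≤ ε →
        F (U + σ • ρ σ U) - F U = s σ U • σ • ρ σ U) := by
  have : CompleteSpace V := FiniteDimensional.complete ℝ V
  set A := fderiv ℝ F P with hA
  -- the derivative in `(v, s)` of the system solved below
  let L0 : V × ℝ →ₗ[ℝ] V × ℝ :=
    { toFun := fun y => (A y.1 - lam • y.1 - y.2 • r, l y.1)
      map_add' := by
        intro x y
        ext
        · simp only [Prod.fst_add, Prod.snd_add, map_add, smul_add, add_smul]
          abel
        · simp
      map_smul' := by
        intro c x
        ext
        · simp only [Prod.smul_fst, Prod.smul_snd, map_smul, RingHom.id_apply, smul_sub,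
            smul_smul, smul_eq_mul, mul_comm]
        · simp }
  have hinj : Function.Injective L0 := by
    rw [injective_iff_map_eq_zero]
    rintro ⟨w, q⟩ h
    have h1 : A w - lam • w - q • r = 0 := congrArg Prod.fst h
    have h2 : l w = 0 := congrArg Prod.snd h
    have h3 : q = 0 := by
      have := congrArg l h1
      simp only [map_sub, map_smul, hl, hlr, h2] at this
      simpa using this
    subst h3
    obtain ⟨c, rfl⟩ := hker w (by simpa [sub_eq_zero] using h1)
    have h4 : c = 0 := by simpa [hlr] using h2
    simp [h4]
  let L : (V × ℝ) ≃L[ℝ] (V × ℝ) := (LinearEquiv.ofInjectiveEndo L0 hinj).toContinuousLinearEquiv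
  have hLapp : ∀ y, L y = (A y.1 - lam • y.1 - y.2 • r, l y.1) := fun y => rfl
  obtain ⟨κ, hκ, hLκ⟩ : ∃ κ : ℝ, 0 < κ ∧ ∀ z, ‖L.symm z‖ ≤ κ * ‖z‖ := by
    refine ⟨‖(L.symm : V × ℝ →L[ℝ] V × ℝ)‖ + 1, by positivity, fun z => ?_⟩
    refine ((L.symm : V × ℝ →L[ℝ] V × ℝ).le_opNorm z).trans ?_
    gcongr
    linarith
  set m : ℝ := ‖r‖ + 1 with hmdef
  have hm : 0 < m := by positivity
  obtain ⟨ε1, hε1, p1, p2, p3⟩ := avgJac_props F P hR hm hΛ0 hd hΛ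
  set η : ℝ := min 1 (1 / (8 * κ)) with hη
  have hη0 : 0 < η := by positivity
  have hη1 : η ≤ 1 := min_le_left _ _
  have hηκ : 2 * η ≤ 1 / (4 * κ) := by
    have : η ≤ 1 / (8 * κ) := min_le_right _ _
    calc 2 * η ≤ 2 * (1 / (8 * κ)) := by gcongr
      _ = 1 / (4 * κ) := by field_simp; norm_num
  obtain ⟨ε, hε, hεε1, hεa, hεb⟩ : ∃ ε > 0, ε ≤ ε1 ∧ Λ * (ε + 2 * ε * m) ≤ 1 / (4 * κ) ∧
      Λ * (ε + m * ε) * m ≤ η / (2 * κ) := by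
    refine ⟨min ε1 (min (1 / (4 * κ) / ((Λ + 1) * (1 + 2 * m)))
      (η / (2 * κ) / ((Λ + 1) * (1 + m) * m))), by positivity, min_le_left _ _, ?_, ?_⟩
    · set ε := min ε1 (min (1 / (4 * κ) / ((Λ + 1) * (1 + 2 * m)))
        (η / (2 * κ) / ((Λ + 1) * (1 + m) * m)))
      have h0 : 0 < ε := by positivity
      have h : ε ≤ 1 / (4 * κ) / ((Λ + 1) * (1 + 2 * m)) :=
        (min_le_right _ _).trans (min_le_left _ _)
      rw [le_div_iff₀ (by positivity)] at h
      refine le_trans ?_ h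
      have : Λ * (ε + 2 * ε * m) = ε * (Λ * (1 + 2 * m)) := by ring
      rw [this]
      gcongr
      linarith
    · set ε := min ε1 (min (1 / (4 * κ) / ((Λ + 1) * (1 + 2 * m)))
        (η / (2 * κ) / ((Λ + 1) * (1 + m) * m)))
      have h0 : 0 < ε := by positivity
      have h : ε ≤ η / (2 * κ) / ((Λ + 1) * (1 + m) * m) :=
        (min_le_right _ _).trans (min_le_right _ _)
      rw [le_div_iff₀ (by positivity)] at h
      refine le_trans ?_ h
      have : Λ * (ε + m * ε) * m = ε * (Λ * (1 + m) * m) := by ring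
      rw [this]
      gcongr
      linarith
  let G : ℝ → V → V × ℝ → V × ℝ := fun σ U y => (avgJac F σ U y.1 - y.2 • y.1, l y.1 - 1)
  set y0 : V × ℝ := (r, lam) with hy0
  have hball : ∀ y : V × ℝ, ‖y - y0‖ ≤ η → ‖y.1 - r‖ ≤ η ∧ |y.2 - lam| ≤ η ∧ ‖y.1‖ ≤ m := by
    intro y hy
    have h1 : ‖y.1 - r‖ ≤ η := (norm_fst_le (y - y0)).trans hy
    have h2 : |y.2 - lam| ≤ η := (norm_snd_le (y - y0)).trans hy
    refine ⟨h1, h2, ?_⟩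
    have := norm_le_norm_add_norm_sub' y.1 r
    linarith
  have happ : ∀ σ U, |σ| ≤ ε → ‖U - P‖ ≤ ε → ∀ y y', ‖y - y0‖ ≤ η → ‖y' - y0‖ ≤ η →
      ‖G σ U y - G σ U y' - L (y - y')‖ ≤ (1 / (2 * κ)) * ‖y - y'‖ := by
    intro σ U hσ hU y y' hy hy'
    obtain ⟨a1, a2, a3⟩ := hball y hy
    obtain ⟨b1, b2, b3⟩ := hball y' hy'
    have e : G σ U y - G σ U y' - L (y - y') =
        ((avgJac F σ U y.1 - avgJac F σ U y'.1 - A (y.1 - y'.1)) -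
          ((y.2 - lam) • (y.1 - y'.1) + (y.2 - y'.2) • (y'.1 - r)), 0) := by
      rw [hLapp]
      ext
      · simp only [G, Prod.fst_sub, Prod.snd_sub, map_sub, smul_sub, sub_smul]
        abel
      · simp [G]
    rw [e, Prod.norm_mk, norm_zero, max_eq_left (norm_nonneg _)]
    have q1 := p2 σ U y.1 y'.1 (hσ.trans hεε1) (hU.trans hεε1) a3 b3
    have n1 : ‖y.1 - y'.1‖ ≤ ‖y - y'‖ := norm_fst_le (y - y')
    have n2 : |y.2 - y'.2| ≤ ‖y - y'‖ := norm_snd_le (y - y')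
    have q2 : ‖(y.2 - lam) • (y.1 - y'.1) + (y.2 - y'.2) • (y'.1 - r)‖ ≤ 2 * η * ‖y - y'‖ := by
      refine (norm_add_le _ _).trans ?_
      rw [norm_smul, norm_smul, Real.norm_eq_abs, Real.norm_eq_abs]
      calc _ ≤ η * ‖y - y'‖ + ‖y - y'‖ * η := by gcongr
        _ = _ := by ring
    have q3 : Λ * (‖U - P‖ + 2 * |σ| * m) * ‖y.1 - y'.1‖ ≤ 1 / (4 * κ) * ‖y - y'‖ := by
      have : Λ * (‖U - P‖ + 2 * |σ| * m) ≤ 1 / (4 * κ) := le_trans (by gcongr) hεa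
      gcongr
    refine (norm_sub_le _ _).trans ?_
    calc _ ≤ 1 / (4 * κ) * ‖y - y'‖ + 1 / (4 * κ) * ‖y - y'‖ := by
          refine add_le_add (q1.trans q3) (q2.trans ?_)
          gcongr
      _ = _ := by field_simp; ring
  have hP0 : ‖P - P‖ ≤ ε := by simpa using hε.le
  have h00 : |(0 : ℝ)| ≤ ε := by simpa using hε.le
  have hJ0 : avgJac F 0 P r = A r := by simp [avgJac, hA]
  have hG0 : G 0 P y0 = 0 := by
    ext
    · simp [G, hy0, hJ0, hr]
    · simp [G, hy0, hlr]
  have hGlip : ∀ σ σ' U U', |σ| ≤ ε → ‖U - P‖ ≤ ε → |σ'| ≤ ε → ‖U' - P‖ ≤ ε →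
      ∀ y, ‖y - y0‖ ≤ η → ‖G σ U y - G σ' U' y‖ ≤ Λ * (‖U - U'‖ + m * |σ - σ'|) * m := by
    intro σ σ' U U' hσ hU hσ' hU' y hy
    have e : G σ U y - G σ' U' y = (avgJac F σ U y.1 - avgJac F σ' U' y.1, 0) := by
      ext
      · simp [G]
      · simp [G]
    rw [e, Prod.norm_mk, norm_zero, max_eq_left (norm_nonneg _)]
    exact p3 σ σ' U U' y.1 (hσ.trans hεε1) (hU.trans hεε1) (hσ'.trans hεε1) (hU'.trans hεε1)
      (hball y hy).2.2
  have hy00 : ‖y0 - y0‖ ≤ η := by simpa using hη0.le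
  have hex : ∀ σ U, ∃ y : V × ℝ, |σ| ≤ ε → ‖U - P‖ ≤ ε → ‖y - y0‖ ≤ η ∧ G σ U y = 0 := by
    intro σ U
    by_cases h : |σ| ≤ ε ∧ ‖U - P‖ ≤ ε
    · obtain ⟨hσ, hU⟩ := h
      obtain ⟨y, hy, hy2⟩ := surj_of_approx L hκ hLκ hη0.le (happ σ U hσ hU) (z := 0) (by
        have := hGlip σ 0 U P hσ hU h00 hP0 y0 hy00
        rw [hG0, sub_zero, sub_zero] at this
        rw [zero_sub, norm_neg]
        refine this.trans (le_trans ?_ hεb)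
        gcongr)
      exact ⟨y, fun _ _ => ⟨hy, hy2⟩⟩
    · exact ⟨0, fun h1 h2 => absurd ⟨h1, h2⟩ h⟩
  choose Y hY using hex
  have hYlip : ∀ σ σ' U U', |σ| ≤ ε → ‖U - P‖ ≤ ε → |σ'| ≤ ε → ‖U' - P‖ ≤ ε →
      ‖Y σ U - Y σ' U'‖ ≤ (2 * κ * Λ * (1 + m) * m) * (|σ - σ'| + ‖U - U'‖) := by
    intro σ σ' U U' hσ hU hσ' hU'
    obtain ⟨u1, u2⟩ := hY σ U hσ hU
    obtain ⟨v1, v2⟩ := hY σ' U' hσ' hU'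
    have h1 := antilip_of_approx L hκ hLκ (happ σ U hσ hU _ _ u1 v1)
    have h2 := hGlip σ σ' U U' hσ hU hσ' hU' _ v1
    rw [u2, zero_sub, norm_neg] at h1
    rw [v2, sub_zero] at h2
    calc _ ≤ 2 * κ * (Λ * (‖U - U'‖ + m * |σ - σ'|) * m) := h1.trans (by gcongr)
      _ ≤ 2 * κ * (Λ * ((1 + m) * (|σ - σ'| + ‖U - U'‖)) * m) := by
        gcongr
        nlinarith [abs_nonneg (σ - σ'), norm_nonneg (U - U')]
      _ = _ := by ring
  have hY0 : Y 0 P = y0 := by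
    obtain ⟨u1, u2⟩ := hY 0 P h00 hP0
    have h1 := antilip_of_approx L hκ hLκ (happ 0 P h00 hP0 _ _ u1 hy00)
    rw [u2, hG0, sub_zero, norm_zero, mul_zero] at h1
    exact sub_eq_zero.1 (norm_le_zero_iff.1 h1)
  refine ⟨ε, hε, 2 * κ * Λ * (1 + m) * m, by positivity, fun σ U => (Y σ U).1,
    fun σ U => (Y σ U).2, by simp [hY0, hy0], by simp [hY0, hy0], ?_, ?_⟩
  · intro σ σ' U U' hσ hU hσ' hU'
    have h := hYlip σ σ' U U' hσ hU hσ' hU'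
    exact ⟨(norm_fst_le (Y σ U - Y σ' U')).trans h, (norm_snd_le (Y σ U - Y σ' U')).trans h⟩
  · intro σ U hσ hU
    obtain ⟨u1, u2⟩ := hY σ U hσ hU
    have h1 : avgJac F σ U (Y σ U).1 - (Y σ U).2 • (Y σ U).1 = 0 := congrArg Prod.fst u2
    rw [← p1 σ U (Y σ U).1 (hσ.trans hεε1) (hU.trans hεε1) (hball _ u1).2.2,
      sub_eq_zero.1 h1, smul_comm]

end Hugoniot
end Glimm

namespace Glimm

/-! ### Composed wave curves and interaction estimates -/

section Waves

variable {V : Type*} [NormedAddCommGroup V] [NormedSpace ℝ V]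

/-- The `k`-th wave curve through `U`: the state reached from `U` by a `k`-wave of strength `σ`,
in terms of the secant directions `ρ`. -/
def wv (ρ : ℕ → ℝ → V → V) (k : ℕ) (σ : ℝ) (U : V) : V := U + σ • ρ k σ U

/-- The state reached from `U` by crossing the waves of families `0, …, k - 1` with strengths
`α 0, …, α (k - 1)`. -/
def om (ρ : ℕ → ℝ → V → V) (α : ℕ → ℝ) (U : V) : ℕ → V
  | 0 => U
  | k + 1 => wv ρ k (α k) (om ρ α U k)

/-- Total strength of a fan of `N` waves. -/
def nrm (N : ℕ) (α : ℕ → ℝ) : ℝ := ∑ k ∈ Finset.range N, |α k|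

/-- Amount of approaching waves between a fan with strengths `x` on the left and a fan with
strengths `y` on the right: a left wave approaches all right waves of its own or slower families. -/
def appr (N : ℕ) (x y : ℕ → ℝ) : ℝ :=
  ∑ i ∈ Finset.range N, ∑ l ∈ Finset.range (i + 1), x i * y l

/-- Uniform boundedness and Lipschitz continuity of the secant directions of the wave curves. -/
structure Reg (ρ : ℕ → ℝ → V → V) (B : ℝ) : Prop where
  one_le : 1 ≤ B
  bound : ∀ k σ U, ‖ρ k σ U‖ ≤ B
  lip : ∀ k σ σ' U U', ‖ρ k σ U - ρ k σ' U'‖ ≤ B * (|σ - σ'| + ‖U - U'‖)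

variable {ρ : ℕ → ℝ → V → V} {B : ℝ}

lemma wv_disp (h : Reg ρ B) (k : ℕ) (σ : ℝ) (U : V) : ‖wv ρ k σ U - U‖ ≤ B * |σ| := by
  have := h.one_le
  rw [wv, add_sub_cancel_left, norm_smul, Real.norm_eq_abs, mul_comm]
  gcongr
  exact h.bound _ _ _

lemma wv_lip (h : Reg ρ B) (k : ℕ) (a b : ℝ) (Z Z' : V) :
    ‖wv ρ k a Z - wv ρ k b Z'‖ ≤ (1 + |b| * B) * ‖Z - Z'‖ + (B + |b| * B) * |a - b| := by
  have h1 := h.one_le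
  have e : wv ρ k a Z - wv ρ k b Z' = (Z - Z') + (a - b) • ρ k a Z
      + b • (ρ k a Z - ρ k b Z') := by simp only [wv]; module
  rw [e]
  refine (norm_add_le _ _).trans ?_
  have h2 := norm_add_le (Z - Z') ((a - b) • ρ k a Z)
  rw [norm_smul, Real.norm_eq_abs] at h2
  rw [norm_smul, Real.norm_eq_abs]
  have h3 : |a - b| * ‖ρ k a Z‖ ≤ |a - b| * B := by gcongr; exact h.bound _ _ _
  have h4 : |b| * ‖ρ k a Z - ρ k b Z'‖ ≤ |b| * (B * (|a - b| + ‖Z - Z'‖)) := by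
    gcongr; exact h.lip _ _ _ _ _
  linarith

lemma wv_lip' (h : Reg ρ B) (k : ℕ) {a : ℝ} (ha : |a| ≤ 1) (Z Z' : V) :
    ‖wv ρ k a Z - wv ρ k a Z'‖ ≤ (1 + B) * ‖Z - Z'‖ := by
  have h1 := h.one_le
  refine (wv_lip h k a a Z Z').trans ?_
  rw [sub_self, abs_zero, mul_zero, add_zero]
  gcongr
  nlinarith

lemma om_disp (h : Reg ρ B) (α : ℕ → ℝ) (U : V) (n : ℕ) :
    ‖om ρ α U n - U‖ ≤ B * nrm n α := by
  induction n with
  | zero => simp [om, nrm]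
  | succ n ih =>
    have h1 := wv_disp h n (α n) (om ρ α U n)
    have h2 := norm_sub_le_norm_sub_add_norm_sub (om ρ α U (n + 1)) (om ρ α U n) U
    rw [nrm, Finset.sum_range_succ]
    rw [nrm] at ih
    have h3 : om ρ α U (n + 1) = wv ρ n (α n) (om ρ α U n) := rfl
    rw [h3] at h2 ⊢
    linarith

lemma om_lip (h : Reg ρ B) (α β : ℕ → ℝ) (U : V) (n : ℕ) (hβ : ∀ k < n, |β k| ≤ 1) :
    ‖om ρ α U n - om ρ β U n‖ ≤ 2 * B * (1 + B) ^ n * nrm n (fun k => α k - β k) := by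
  have h1 := h.one_le
  induction n with
  | zero => simp [om, nrm]
  | succ n ih =>
    have ih := ih (fun k hk => hβ k (by omega))
    have h2 := wv_lip h n (α n) (β n) (om ρ α U n) (om ρ β U n)
    have hb := hβ n (by omega)
    have e : nrm (n + 1) (fun k => α k - β k) = nrm n (fun k => α k - β k) + |α n - β n| := by
      simp [nrm, Finset.sum_range_succ]
    rw [e]
    have hp : 1 ≤ (1 + B) ^ (n + 1) := one_le_pow₀ (by linarith)
    calc _ ≤ _ := h2
      _ ≤ (1 + B) * (2 * B * (1 + B) ^ n * nrm n (fun k => α k - β k))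
          + 2 * B * 1 * |α n - β n| := by
          gcongr <;> nlinarith
      _ ≤ (1 + B) * (2 * B * (1 + B) ^ n * nrm n (fun k => α k - β k))
          + 2 * B * (1 + B) ^ (n + 1) * |α n - β n| := by gcongr
      _ = _ := by ring

lemma wv_comm (h : Reg ρ B) (j k : ℕ) (a b : ℝ) (Z : V) :
    ‖wv ρ j b (wv ρ k a Z) - wv ρ k a (wv ρ j b Z)‖ ≤ 2 * B ^ 2 * (|a| * |b|) := by
  have h1 := h.one_le
  have e : wv ρ j b (wv ρ k a Z) - wv ρ k a (wv ρ j b Z)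
      = b • (ρ j b (wv ρ k a Z) - ρ j b Z) - a • (ρ k a (wv ρ j b Z) - ρ k a Z) := by
    simp only [wv]; module
  rw [e]
  refine (norm_sub_le _ _).trans ?_
  rw [norm_smul, norm_smul, Real.norm_eq_abs, Real.norm_eq_abs]
  have h2 := h.lip j b b (wv ρ k a Z) Z
  have h3 := h.lip k a a (wv ρ j b Z) Z
  rw [sub_self, abs_zero, zero_add] at h2 h3
  have h4 := wv_disp h k a Z
  have h5 := wv_disp h j b Z
  calc _ ≤ |b| * (B * (B * |a|)) + |a| * (B * (B * |b|)) := by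
        gcongr
        · exact h2.trans (by gcongr)
        · exact h3.trans (by gcongr)
    _ = _ := by ring

lemma wv_merge (h : Reg ρ B) (k : ℕ) (a b : ℝ) (Z : V) :
    ‖wv ρ k b (wv ρ k a Z) - wv ρ k (a + b) Z‖ ≤ 3 * B ^ 2 * (|a| * |b|) := by
  have h1 := h.one_le
  have e : wv ρ k b (wv ρ k a Z) - wv ρ k (a + b) Z
      = a • (ρ k a Z - ρ k (a + b) Z) + b • (ρ k b (wv ρ k a Z) - ρ k (a + b) Z) := by
    simp only [wv]; module
  rw [e]
  refine (norm_add_le _ _).trans ?_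
  rw [norm_smul, norm_smul, Real.norm_eq_abs, Real.norm_eq_abs]
  have h2 := h.lip k a (a + b) Z Z
  have h3 := h.lip k b (a + b) (wv ρ k a Z) Z
  rw [sub_self, norm_zero, add_zero, sub_add_cancel_left, abs_neg] at h2
  rw [sub_add_cancel_right, abs_neg] at h3
  have h4 := wv_disp h k a Z
  calc _ ≤ |a| * (B * |b|) + |b| * (B * (|a| + B * |a|)) := by
        gcongr
        exact h3.trans (by gcongr)
    _ = (2 * B + B ^ 2) * (|a| * |b|) := by ring
    _ ≤ _ := by gcongr; nlinarith

lemma om_comm (h : Reg ρ B) (k : ℕ) {σ : ℝ} (b : ℕ → ℝ) (W : V) (j : ℕ)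
    (hb : ∀ i < j, |b i| ≤ 1) :
    ‖om ρ b (wv ρ k σ W) j - wv ρ k σ (om ρ b W j)‖
      ≤ 2 * B ^ 2 * (1 + B) ^ j * (|σ| * nrm j b) := by
  have h1 := h.one_le
  induction j with
  | zero => simp [om, nrm]
  | succ j ih =>
    have ih := ih (fun k hk => hb k (by omega))
    have h2 := wv_lip' h j (hb j (by omega)) (om ρ b (wv ρ k σ W) j) (wv ρ k σ (om ρ b W j))
    have h3 := wv_comm h j k σ (b j) (om ρ b W j)
    have e : nrm (j + 1) b = nrm j b + |b j| := by simp [nrm, Finset.sum_range_succ]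
    rw [e]
    have hp : 1 ≤ (1 + B) ^ (j + 1) := one_le_pow₀ (by linarith)
    calc _ ≤ _ := norm_sub_le_norm_sub_add_norm_sub _
            (wv ρ j (b j) (wv ρ k σ (om ρ b W j))) _
      _ ≤ (1 + B) * (2 * B ^ 2 * (1 + B) ^ j * (|σ| * nrm j b))
          + 2 * B ^ 2 * 1 * (|σ| * |b j|) := by
          rw [mul_one]
          refine add_le_add (h2.trans ?_) h3
          gcongr
      _ ≤ (1 + B) * (2 * B ^ 2 * (1 + B) ^ j * (|σ| * nrm j b))
          + 2 * B ^ 2 * (1 + B) ^ (j + 1) * (|σ| * |b j|) := by gcongr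
      _ = _ := by ring

/-- Glimm's interaction estimate: two successive fans agree with the fan of summed strengths up to
an error controlled by the amount of approaching waves. -/
lemma interaction (h : Reg ρ B) (a b : ℕ → ℝ) (U : V) (n : ℕ)
    (ha : ∀ i < n, |a i| ≤ 1) (hb : ∀ i < n, |b i| ≤ 1) :
    ‖om ρ b (om ρ a U n) n - om ρ (fun k => a k + b k) U n‖
      ≤ 5 * B ^ 2 * (1 + 2 * B) ^ n * appr n (fun k => |a k|) (fun k => |b k|) := by
  have h1 := h.one_le
  induction n with
  | zero => simp [om, appr]
  | succ k ih =>
    have ih := ih (fun k hk => ha k (by omega)) (fun k hk => hb k (by omega))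
    set W := om ρ a U k with hW
    have e1 : om ρ b (om ρ a U (k + 1)) (k + 1)
      = wv ρ k (b k) (om ρ b (wv ρ k (a k) W) k) := rfl
    have e2 : om ρ (fun k => a k + b k) U (k + 1)
      = wv ρ k (a k + b k) (om ρ (fun k => a k + b k) U k) := rfl
    have e3 : appr (k + 1) (fun k => |a k|) (fun k => |b k|)
      = appr k (fun k => |a k|) (fun k => |b k|) + |a k| * (nrm k b + |b k|) := by
      simp only [appr, nrm]
      rw [Finset.sum_range_succ, ← Finset.mul_sum, Finset.sum_range_succ]
    rw [e1, e2, e3]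
    have q1 := wv_lip' h k (hb k (by omega)) (om ρ b (wv ρ k (a k) W) k)
      (wv ρ k (a k) (om ρ b W k))
    have q2 := om_comm h k (σ := a k) b W k (fun k hk => hb k (by omega))
    have q3 := wv_merge h k (a k) (b k) (om ρ b W k)
    have q4 := wv_lip h k (a k + b k) (a k + b k) (om ρ b W k) (om ρ (fun k => a k + b k) U k)
    rw [sub_self, abs_zero, mul_zero, add_zero] at q4
    have hab : |a k + b k| ≤ 2 := (abs_add_le _ _).trans
      (by linarith [ha k (by omega), hb k (by omega)])
    have hp : 1 ≤ (1 + 2 * B) ^ (k + 1) := one_le_pow₀ (by linarith)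
    have hn : 0 ≤ nrm k b := Finset.sum_nonneg fun _ _ => abs_nonneg _
    have f1 : (1 + B) * ‖om ρ b (wv ρ k (a k) W) k - wv ρ k (a k) (om ρ b W k)‖
        ≤ 5 * B ^ 2 * (1 + 2 * B) ^ (k + 1) * (|a k| * nrm k b) := by
      calc _ ≤ (1 + B) * (2 * B ^ 2 * (1 + B) ^ k * (|a k| * nrm k b)) := by gcongr
        _ = 2 * B ^ 2 * (1 + B) ^ (k + 1) * (|a k| * nrm k b) := by ring
        _ ≤ _ := by gcongr <;> linarith
    have f2 : 3 * B ^ 2 * (|a k| * |b k|)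
        ≤ 5 * B ^ 2 * (1 + 2 * B) ^ (k + 1) * (|a k| * |b k|) := by
      calc _ = 3 * B ^ 2 * 1 * (|a k| * |b k|) := by ring
        _ ≤ _ := by gcongr; linarith
    have f3 : (1 + |a k + b k| * B) * ‖om ρ b W k - om ρ (fun k => a k + b k) U k‖
        ≤ (1 + 2 * B) * (5 * B ^ 2 * (1 + 2 * B) ^ k
            * appr k (fun k => |a k|) (fun k => |b k|)) := by
      gcongr
    have t1 := norm_sub_le_norm_sub_add_norm_sub
      (wv ρ k (b k) (om ρ b (wv ρ k (a k) W) k)) (wv ρ k (b k) (wv ρ k (a k) (om ρ b W k)))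
      (wv ρ k (a k + b k) (om ρ (fun k => a k + b k) U k))
    have t2 := norm_sub_le_norm_sub_add_norm_sub
      (wv ρ k (b k) (wv ρ k (a k) (om ρ b W k))) (wv ρ k (a k + b k) (om ρ b W k))
      (wv ρ k (a k + b k) (om ρ (fun k => a k + b k) U k))
    have t3 : 5 * B ^ 2 * (1 + 2 * B) ^ (k + 1) *
        (appr k (fun k => |a k|) (fun k => |b k|) + |a k| * (nrm k b + |b k|))
        = (1 + 2 * B) * (5 * B ^ 2 * (1 + 2 * B) ^ k
            * appr k (fun k => |a k|) (fun k => |b k|))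
          + 5 * B ^ 2 * (1 + 2 * B) ^ (k + 1) * (|a k| * nrm k b)
          + 5 * B ^ 2 * (1 + 2 * B) ^ (k + 1) * (|a k| * |b k|) := by ring
    rw [t3]
    linarith

lemma om_congr {α β : ℕ → ℝ} (U : V) {n : ℕ} (h : ∀ k < n, α k = β k) :
    om ρ α U n = om ρ β U n := by
  induction n with
  | zero => rfl
  | succ n ih =>
    rw [om, om, ih (fun k hk => h k (by omega)), h n (by omega)]

/-- The part of a fan made of the families below `k`. -/
def lowPart (α : ℕ → ℝ) (k : ℕ) (i : ℕ) : ℝ := if i < k then α i else 0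

/-- The part of a fan made of the families from `k` on. -/
def highPart (α : ℕ → ℝ) (k : ℕ) (i : ℕ) : ℝ := if i < k then 0 else α i

lemma om_lowPart (α : ℕ → ℝ) (U : V) (k n : ℕ) :
    om ρ (lowPart α k) U (k + n) = om ρ α U k := by
  induction n with
  | zero =>
    apply om_congr
    intro i hi
    simp only [add_zero] at hi
    simp [lowPart, hi]
  | succ n ih =>
    rw [← add_assoc, om, ih]
    simp [lowPart, wv]

lemma om_highPart_self (α : ℕ → ℝ) (U : V) (k j : ℕ) (hj : j ≤ k) :
    om ρ (highPart α k) U j = U := by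
  induction j with
  | zero => rfl
  | succ j ih =>
    rw [om, ih (by omega)]
    simp [highPart, wv, show j < k by omega]

lemma om_highPart (α : ℕ → ℝ) (U : V) (k n : ℕ) :
    om ρ (highPart α k) (om ρ α U k) (k + n) = om ρ α U (k + n) := by
  induction n with
  | zero => exact om_highPart_self _ _ _ _ le_rfl
  | succ n ih =>
    rw [← add_assoc, om, om, ih]
    simp [highPart]

lemma om_sub_eq_sum (α : ℕ → ℝ) (U : V) (n : ℕ) :
    om ρ α U n = U + ∑ k ∈ Finset.range n, α k • ρ k (α k) (om ρ α U k) := by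
  induction n with
  | zero => simp [om]
  | succ n ih => rw [Finset.sum_range_succ, ← add_assoc, ← ih]; rfl

end Waves

end Glimm

namespace Glimm

/-! ### The Riemann problem -/

lemma nrm_nonneg (N : ℕ) (α : ℕ → ℝ) : 0 ≤ nrm N α := Finset.sum_nonneg fun _ _ => abs_nonneg _

lemma abs_le_nrm {N k : ℕ} (hk : k < N) (α : ℕ → ℝ) : |α k| ≤ nrm N α :=
  Finset.single_le_sum (f := fun k => |α k|) (fun _ _ => abs_nonneg _) (Finset.mem_range.2 hk)

lemma nrm_mono {N k : ℕ} (hk : k ≤ N) (α : ℕ → ℝ) : nrm k α ≤ nrm N α :=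
  Finset.sum_le_sum_of_subset_of_nonneg (Finset.range_mono hk) fun _ _ _ => abs_nonneg _

/-- Extension by zero of a vector of wave strengths. -/
def ext {N : ℕ} (α : Fin N → ℝ) (k : ℕ) : ℝ := if h : k < N then α ⟨k, h⟩ else 0

lemma ext_val {N : ℕ} (α : Fin N → ℝ) (i : Fin N) : ext α i = α i := by simp [ext]

lemma ext_abs {N : ℕ} (α : Fin N → ℝ) (k : ℕ) : |ext α k| ≤ ‖α‖ := by
  unfold ext
  split_ifs with h
  · exact norm_le_pi_norm α ⟨k, h⟩
  · simp

lemma ext_sub {N : ℕ} (α β : Fin N → ℝ) : (fun k => ext α k - ext β k) = ext (α - β) := by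
  funext k
  unfold ext
  split_ifs <;> simp

lemma nrm_ext_le {N : ℕ} (α : Fin N → ℝ) (n : ℕ) (hn : n ≤ N) : nrm n (ext α) ≤ N * ‖α‖ := by
  calc nrm n (ext α) ≤ ∑ _k ∈ Finset.range n, ‖α‖ := Finset.sum_le_sum fun k _ => ext_abs α k
    _ = n * ‖α‖ := by simp
    _ ≤ _ := by gcongr

lemma riemann {N : ℕ} {ρ : ℕ → ℝ → (Fin N → ℝ) → (Fin N → ℝ)} {B : ℝ} (h : Reg ρ B)
    (P : Fin N → ℝ) (hli : LinearIndependent ℝ (fun i : Fin N => ρ i 0 P)) :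
    ∃ η > 0, ∃ Λ ≥ 1,
      (∀ U W, ‖U - P‖ ≤ η → ‖W - U‖ ≤ η →
        ∃ α, om ρ α U N = W ∧ nrm N α ≤ Λ * ‖W - U‖) ∧
      (∀ U α β, ‖U - P‖ ≤ η → (∀ k < N, |α k| ≤ η) → (∀ k < N, |β k| ≤ η) →
        nrm N (fun k => α k - β k) ≤ Λ * ‖om ρ α U N - om ρ β U N‖) := by
  have h1 := h.one_le
  let b := basisOfLinearIndependentOfCardEqFinrank' _ hli (by simp)
  have hb : ∀ i, b i = ρ i 0 P := fun i => by simp [b]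
  let L : (Fin N → ℝ) ≃L[ℝ] (Fin N → ℝ) := b.equivFun.symm.toContinuousLinearEquiv
  have hLa : ∀ α, L α = ∑ i, α i • ρ i 0 P := by
    intro α
    change b.equivFun.symm α = _
    rw [Module.Basis.equivFun_symm_apply]
    simp [hb]
  set κ : ℝ := ‖(L.symm : (Fin N → ℝ) →L[ℝ] (Fin N → ℝ))‖ + 1 with hκd
  have hκ : 0 < κ := by positivity
  have hL : ∀ z, ‖L.symm z‖ ≤ κ * ‖z‖ := by
    intro z
    refine ((L.symm : (Fin N → ℝ) →L[ℝ] (Fin N → ℝ)).le_opNorm z).trans ?_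
    gcongr
    linarith
  set D : ℝ := B * (2 + B * N) + B * (1 + 2 * B * (1 + B) ^ N * N) with hD
  have hD0 : 0 ≤ D := by positivity
  set η : ℝ := min 1 (1 / (2 * κ * (N * D + 1))) with hηd
  have hη : 0 < η := by positivity
  have hη1 : η ≤ 1 := min_le_left _ _
  have hη2 : N * D * η ≤ 1 / (2 * κ) := by
    calc N * D * η ≤ (N * D + 1) * (1 / (2 * κ * (N * D + 1))) := by
          gcongr
          · linarith
          · exact min_le_right _ _
      _ = _ := by field_simp
  have happ : ∀ U, ‖U - P‖ ≤ η → ∀ α β : Fin N → ℝ, ‖α‖ ≤ η → ‖β‖ ≤ η →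
      ‖om ρ (ext α) U N - om ρ (ext β) U N - L (α - β)‖ ≤ (1 / (2 * κ)) * ‖α - β‖ := by
    intro U hU α β hα hβ
    have e : om ρ (ext α) U N - om ρ (ext β) U N - L (α - β)
        = ∑ i : Fin N, ((α i - β i) • (ρ i (α i) (om ρ (ext α) U i) - ρ i 0 P)
          + β i • (ρ i (α i) (om ρ (ext α) U i) - ρ i (β i) (om ρ (ext β) U i))) := by
      rw [om_sub_eq_sum (ext α), om_sub_eq_sum (ext β), add_sub_add_left_eq_sub, hLa,
        Finset.sum_range, Finset.sum_range, ← Finset.sum_sub_distrib, ← Finset.sum_sub_distrib]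
      refine Finset.sum_congr rfl fun i _ => ?_
      simp only [ext_val, Pi.sub_apply]
      module
    rw [e]
    have hterm : ∀ i : Fin N, ‖(α i - β i) • (ρ i (α i) (om ρ (ext α) U i) - ρ i 0 P)
          + β i • (ρ i (α i) (om ρ (ext α) U i) - ρ i (β i) (om ρ (ext β) U i))‖
          ≤ η * D * ‖α - β‖ := by
      intro i
      have a1 : |α i - β i| ≤ ‖α - β‖ := norm_le_pi_norm (α - β) i
      have a2 : |α i| ≤ η := (norm_le_pi_norm α i).trans hα
      have a3 : |β i| ≤ η := (norm_le_pi_norm β i).trans hβ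
      have a4 : ‖om ρ (ext α) U i - P‖ ≤ η + B * N * η := by
        have q1 := om_disp h (ext α) U i
        have q2 : nrm i (ext α) ≤ N * η := (nrm_ext_le α i i.2.le).trans (by gcongr)
        calc _ ≤ _ := norm_sub_le_norm_sub_add_norm_sub _ U _
          _ ≤ B * (N * η) + η := by gcongr; exact q1.trans (by gcongr)
          _ = _ := by ring
      have a5 : ‖om ρ (ext α) U i - om ρ (ext β) U i‖ ≤ 2 * B * (1 + B) ^ N * (N * ‖α - β‖) := by
        refine (om_lip h (ext α) (ext β) U i
          (fun k _ => (ext_abs β k).trans (hβ.trans hη1))).trans ?_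
        rw [ext_sub]
        have := nrm_ext_le (α - β) i i.2.le
        have hi := i.2.le
        gcongr
        all_goals first | exact nrm_nonneg _ _ | linarith
      have b1 := h.lip i (α i) 0 (om ρ (ext α) U i) P
      have b2 := h.lip i (α i) (β i) (om ρ (ext α) U i) (om ρ (ext β) U i)
      rw [sub_zero] at b1
      refine (norm_add_le _ _).trans ?_
      rw [norm_smul, norm_smul, Real.norm_eq_abs, Real.norm_eq_abs]
      calc _ ≤ ‖α - β‖ * (B * (η + (η + B * N * η)))
            + η * (B * (‖α - β‖ + 2 * B * (1 + B) ^ N * (N * ‖α - β‖))) := by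
            gcongr
            · exact b1.trans (by gcongr)
            · exact b2.trans (by gcongr)
        _ = _ := by rw [hD]; ring
    calc _ ≤ ∑ _i : Fin N, η * D * ‖α - β‖ :=
          (norm_sum_le _ _).trans (Finset.sum_le_sum fun i _ => hterm i)
      _ = (N * D * η) * ‖α - β‖ := by simp; ring
      _ ≤ _ := by gcongr
  have hinj : ∀ U (α β : ℕ → ℝ), ‖U - P‖ ≤ η → (∀ k < N, |α k| ≤ η) → (∀ k < N, |β k| ≤ η) →
        nrm N (fun k => α k - β k) ≤ N * (2 * κ) * ‖om ρ α U N - om ρ β U N‖ := by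
    intro U α β hU hα hβ
    let α' : Fin N → ℝ := fun i => α i
    let β' : Fin N → ℝ := fun i => β i
    have eα : ∀ k < N, ext α' k = α k := fun k hk => by simp [ext, hk, α']
    have eβ : ∀ k < N, ext β' k = β k := fun k hk => by simp [ext, hk, β']
    have q := antilip_of_approx L hκ hL (f := fun a => om ρ (ext a) U N) (y := α') (y' := β')
      (happ U hU α' β' ((pi_norm_le_iff_of_nonneg hη.le).2 fun i => hα i i.2)
        ((pi_norm_le_iff_of_nonneg hη.le).2 fun i => hβ i i.2))
    simp only [om_congr U eα, om_congr U eβ] at q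
    have q2 := nrm_ext_le (α' - β') N le_rfl
    have q3 : nrm N (fun k => α k - β k) = nrm N (ext (α' - β')) := by
      refine Finset.sum_congr rfl fun k hk => ?_
      have := Finset.mem_range.1 hk
      simp [ext, this, α', β']
    rw [q3]
    refine q2.trans ?_
    rw [mul_assoc]
    gcongr
  refine ⟨min η (η / (2 * κ)), by positivity, N * (2 * κ) + 1, ?_, ?_, ?_⟩
  · have : (0 : ℝ) ≤ N * (2 * κ) := by positivity
    linarith
  · intro U W hU hW
    have h0 : om ρ (ext (0 : Fin N → ℝ)) U N = U := by
      rw [om_sub_eq_sum]; simp [ext]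
    obtain ⟨y, hy, hyW⟩ := surj_of_approx L hκ hL (f := fun a => om ρ (ext a) U N) (y0 := 0)
      hη.le (fun y y' hy hy' => happ U (hU.trans (min_le_left _ _)) y y' (by simpa using hy)
        (by simpa using hy')) (z := W) (by rw [h0]; exact hW.trans (min_le_right _ _))
    rw [sub_zero] at hy
    refine ⟨ext y, hyW, ?_⟩
    have := hinj U (ext y) (ext (0 : Fin N → ℝ)) (hU.trans (min_le_left _ _))
      (fun k _ => (ext_abs y k).trans hy) (fun k _ => by simp [ext, hη.le])
    rw [ext_sub, sub_zero, h0] at this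
    rw [hyW] at this
    refine this.trans ?_
    gcongr
    linarith
  · intro U α β hU hα hβ
    refine (hinj U α β (hU.trans (min_le_left _ _)) (fun k hk => (hα k hk).trans (min_le_left _ _))
      (fun k hk => (hβ k hk).trans (min_le_left _ _))).trans ?_
    gcongr
    linarith

/-- Wave curves for the flux `F` near the state `P`, along which the Rankine-Hugoniot relations
hold with speeds in `[0, 1]` that are ordered by family, and which solve the Riemann problem. -/
structure Sys (N : ℕ) (F : (Fin N → ℝ) → (Fin N → ℝ)) (P : Fin N → ℝ) where
  ρ : ℕ → ℝ → (Fin N → ℝ) → (Fin N → ℝ)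
  s : ℕ → ℝ → (Fin N → ℝ) → ℝ
  B : ℝ
  ε : ℝ
  Λ : ℝ
  reg : Reg ρ B
  ε_pos : 0 < ε
  ε_le : ε ≤ 1
  one_le_Λ : 1 ≤ Λ
  rh : ∀ k < N, ∀ σ U, |σ| ≤ ε → ‖U - P‖ ≤ ε →
    F (wv ρ k σ U) - F U = s k σ U • (wv ρ k σ U - U)
  s_nonneg : ∀ k < N, ∀ σ U, |σ| ≤ ε → ‖U - P‖ ≤ ε → 0 ≤ s k σ U
  s_le_one : ∀ k < N, ∀ σ U, |σ| ≤ ε → ‖U - P‖ ≤ ε → s k σ U ≤ 1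
  s_mono : ∀ i j, i < j → j < N → ∀ σ σ' U U', |σ| ≤ ε → ‖U - P‖ ≤ ε → |σ'| ≤ ε →
    ‖U' - P‖ ≤ ε → s i σ U ≤ s j σ' U'
  solve : ∀ U W, ‖U - P‖ ≤ ε → ‖W - U‖ ≤ ε → ∃ α, om ρ α U N = W ∧ nrm N α ≤ Λ * ‖W - U‖
  inj : ∀ U α β, ‖U - P‖ ≤ ε → (∀ k < N, |α k| ≤ ε) → (∀ k < N, |β k| ≤ ε) →
    nrm N (fun k => α k - β k) ≤ Λ * ‖om ρ α U N - om ρ β U N‖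

end Glimm

namespace Glimm

/-! ### Wave curves of a strictly hyperbolic flux -/

/-- Truncation of a real number to `[-ε, ε]`. -/
noncomputable def clamp (ε a : ℝ) : ℝ := max (min a ε) (-ε)

lemma abs_clamp {ε : ℝ} (hε : 0 ≤ ε) (a : ℝ) : |clamp ε a| ≤ ε := by
  rw [abs_le, clamp]
  exact ⟨le_max_right _ _, max_le (min_le_right _ _) (by linarith)⟩

lemma clamp_lip (ε a b : ℝ) : |clamp ε a - clamp ε b| ≤ |a - b| := by
  refine (abs_max_sub_max_le_abs _ _ _).trans ((abs_min_sub_min_le_max a ε b ε).trans ?_)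
  simp

lemma clamp_eq {ε a : ℝ} (h : |a| ≤ ε) : clamp ε a = a := by
  rw [abs_le] at h
  rw [clamp, min_eq_left h.2, max_eq_left h.1]

/-- Truncation of a state to the sup-norm ball of radius `ε` about `P`. -/
noncomputable def clampV {N : ℕ} (P : Fin N → ℝ) (ε : ℝ) (U : Fin N → ℝ) : Fin N → ℝ :=
  fun i => P i + clamp ε (U i - P i)

lemma norm_clampV {N : ℕ} (P : Fin N → ℝ) {ε : ℝ} (hε : 0 ≤ ε) (U : Fin N → ℝ) :
    ‖clampV P ε U - P‖ ≤ ε := by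
  rw [pi_norm_le_iff_of_nonneg hε]
  intro i
  simpa [clampV] using abs_clamp hε _

lemma clampV_lip {N : ℕ} (P : Fin N → ℝ) (ε : ℝ) (U U' : Fin N → ℝ) :
    ‖clampV P ε U - clampV P ε U'‖ ≤ ‖U - U'‖ := by
  rw [pi_norm_le_iff_of_nonneg (norm_nonneg _)]
  intro i
  have h1 := clamp_lip ε (U i - P i) (U' i - P i)
  have h2 : ‖U i - U' i‖ ≤ ‖U - U'‖ := norm_le_pi_norm (U - U') i
  simp only [clampV, Pi.sub_apply, add_sub_add_left_eq_sub, Real.norm_eq_abs] at *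
  rw [sub_sub_sub_cancel_right] at h1
  exact h1.trans h2

lemma clampV_eq {N : ℕ} {P : Fin N → ℝ} {ε : ℝ} {U : Fin N → ℝ} (h : ‖U - P‖ ≤ ε) :
    clampV P ε U = U := by
  funext i
  rw [clampV, clamp_eq]
  · ring
  · exact (norm_le_pi_norm (U - P) i).trans h

lemma ev_small (K : ℝ) {c : ℝ} (hc : 0 < c) : ∀ᶠ ε in nhdsWithin (0 : ℝ) (Ioi 0), K * ε ≤ c := by
  have : Tendsto (fun ε : ℝ => K * ε) (nhdsWithin 0 (Ioi 0)) (nhds (K * 0)) :=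
    ((continuous_const.mul continuous_id).tendsto 0).mono_left nhdsWithin_le_nhds
  rw [mul_zero] at this
  filter_upwards [this (Iio_mem_nhds hc)] with ε hε using hε.le

lemma exists_sys {N : ℕ} {O : Set (Fin N → ℝ)} (hO : IsOpen O) {F : (Fin N → ℝ) → (Fin N → ℝ)}
    (hF : ContDiffOn ℝ 2 F O) {P : Fin N → ℝ} (hP : P ∈ O) {lam : Fin N → ℝ}
    (hmono : StrictMono lam)
    (hev : ∀ i, Module.End.HasEigenvalue
        ((fderiv ℝ F P).toLinearMap : Module.End ℝ (Fin N → ℝ)) (lam i))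
    (h0 : ∀ i, 0 < lam i) (h1 : ∀ i, lam i < 1) : Nonempty (Sys N F P) := by
  have hFP : ContDiffAt ℝ 2 F P := hF.contDiffAt (hO.mem_nhds hP)
  obtain ⟨Kl, t, ht, hKl⟩ := (hFP.fderiv_right (m := 1) (by norm_num)).exists_lipschitzOnWith
  obtain ⟨R, hR, hRt⟩ := Metric.nhds_basis_closedBall.mem_iff.1
    (inter_mem ht (hO.mem_nhds hP))
  have hmem : ∀ U, ‖U - P‖ ≤ R → U ∈ t ∧ U ∈ O := fun U hU => by
    have : U ∈ Metric.closedBall P R := by simpa [dist_eq_norm] using hU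
    exact hRt this
  have hd : ∀ U, ‖U - P‖ ≤ R → DifferentiableAt ℝ F U := fun U hU =>
    (hF.contDiffAt (hO.mem_nhds (hmem U hU).2)).differentiableAt (by norm_num)
  have hlip : ∀ U U', ‖U - P‖ ≤ R → ‖U' - P‖ ≤ R →
      ‖fderiv ℝ F U - fderiv ℝ F U'‖ ≤ Kl * ‖U - U'‖ := fun U U' hU hU' => by
    have := hKl.dist_le_mul U (hmem U hU).1 U' (hmem U' hU').1
    simpa [dist_eq_norm] using this
  choose r hrv using fun i => (hev i).exists_hasEigenvector
  have hli := Module.End.eigenvectors_linearIndependent' _ lam hmono.injective r hrv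
  have hr : ∀ i, fderiv ℝ F P (r i) = lam i • r i := fun i => (hrv i).apply_eq_smul
  let b := basisOfLinearIndependentOfCardEqFinrank' _ hli (by simp)
  have hb : ∀ i, b i = r i := fun i => by simp [b]
  let l : Fin N → ((Fin N → ℝ) →L[ℝ] ℝ) := fun i => LinearMap.toContinuousLinearMap (b.coord i)
  have hlr : ∀ i, l i (r i) = 1 := fun i => by
    change b.coord i (r i) = 1
    rw [← hb]; simp
  have hl : ∀ i w, l i (fderiv ℝ F P w) = lam i * l i w := by
    intro i w
    have : (b.coord i) ∘ₗ (fderiv ℝ F P).toLinearMap = lam i • b.coord i := by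
      apply b.ext
      intro j
      by_cases hij : j = i
      · subst hij
        simp [hb, hr]
      · have : b.coord i (r j) = 0 := by rw [← hb]; simp [hij]
        simp only [LinearMap.comp_apply, hb, ContinuousLinearMap.coe_coe, hr,
          LinearMap.smul_apply, map_smul, this, smul_zero]
    exact congrArg (fun f => f w) this
  have hker : ∀ i w, fderiv ℝ F P w = lam i • w → ∃ c : ℝ, w = c • r i := by
    intro i w hw
    refine ⟨l i w, ?_⟩
    have hz : ∀ j, j ≠ i → b.repr w j = 0 := by
      intro j hj
      have h2 := hl j w
      rw [hw, map_smul, smul_eq_mul] at h2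
      have h3 : (lam i - lam j) * l j w = 0 := by linarith
      rcases mul_eq_zero.1 h3 with h4 | h4
      · exact absurd (hmono.injective (sub_eq_zero.1 h4)).symm hj
      · exact h4
    conv_lhs => rw [← b.sum_repr w]
    rw [Finset.sum_eq_single i (fun j _ hj => by rw [hz j hj, zero_smul]) (by simp), hb]
    rfl
  choose ε' hε' B' hB' ρ' s' hρ0 hs0 hlip' hrh using fun i =>
    hugoniot F P hR Kl.coe_nonneg hd hlip (r i) (lam i) (l i) (hr i) (hlr i) (hl i) (hker i)
  -- a common Lipschitz constant
  set B0 : ℝ := ∑ i, B' i with hB0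
  have hB0n : 0 ≤ B0 := Finset.sum_nonneg fun i _ => hB' i
  have hBB : ∀ i, B' i ≤ B0 := fun i =>
    Finset.single_le_sum (f := B') (fun j _ => hB' j) (Finset.mem_univ i)
  -- a common radius, on which the speeds stay separated
  obtain ⟨ε, hεpos, hε1, hεε, hs1, hs2, hs3⟩ : ∃ ε > 0, ε ≤ 1 ∧ (∀ i, ε ≤ ε' i) ∧
      (∀ i, 2 * B0 * ε ≤ lam i) ∧ (∀ i, 2 * B0 * ε ≤ 1 - lam i) ∧
      (∀ i j, i < j → 4 * B0 * ε ≤ lam j - lam i) := by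
    have e1 : ∀ᶠ ε in nhdsWithin (0 : ℝ) (Ioi 0), ∀ i, 1 * ε ≤ ε' i :=
      Filter.eventually_all.2 fun i => ev_small 1 (hε' i)
    have e2 : ∀ᶠ ε in nhdsWithin (0 : ℝ) (Ioi 0), ∀ i, 2 * B0 * ε ≤ lam i :=
      Filter.eventually_all.2 fun i => ev_small _ (h0 i)
    have e3 : ∀ᶠ ε in nhdsWithin (0 : ℝ) (Ioi 0), ∀ i, 2 * B0 * ε ≤ 1 - lam i :=
      Filter.eventually_all.2 fun i => ev_small _ (sub_pos.2 (h1 i))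
    have e4 : ∀ᶠ ε in nhdsWithin (0 : ℝ) (Ioi 0), ∀ i j, i < j →
        4 * B0 * ε ≤ lam j - lam i :=
      Filter.eventually_all.2 fun i => Filter.eventually_all.2 fun j => by
        by_cases hij : i < j
        · filter_upwards [ev_small (4 * B0) (sub_pos.2 (hmono hij))] with ε h _ using h
        · exact Eventually.of_forall fun _ h => absurd h hij
    obtain ⟨ε, a1, a2, a3, a4, a5, a6⟩ :=
      (e1.and (e2.and (e3.and (e4.and ((ev_small 1 one_pos).and self_mem_nhdsWithin))))).exists
    simp only [one_mul] at a1 a5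
    exact ⟨ε, a6, a5, a1, a2, a3, a4⟩
  have hsp : ∀ i σ U, |σ| ≤ ε → ‖U - P‖ ≤ ε → |s' i σ U - lam i| ≤ 2 * B0 * ε := by
    intro i σ U hσ hU
    have := (hlip' i σ 0 U P (hσ.trans (hεε i)) (hU.trans (hεε i)) (by simpa using (hε' i).le)
      (by simpa using (hε' i).le)).2
    rw [hs0, sub_zero] at this
    calc _ ≤ _ := this
      _ ≤ B0 * (ε + ε) := by gcongr; exact hBB i
      _ = _ := by ring
  let ρ : ℕ → ℝ → (Fin N → ℝ) → (Fin N → ℝ) := fun k σ U =>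
    if h : k < N then ρ' ⟨k, h⟩ (clamp ε σ) (clampV P ε U) else 0
  let s : ℕ → ℝ → (Fin N → ℝ) → ℝ := fun k σ U => if h : k < N then s' ⟨k, h⟩ σ U else 0
  set Bt : ℝ := 1 + 2 * B0 + ∑ i, ‖r i‖ with hBt
  have hrn : 0 ≤ ∑ i, ‖r i‖ := Finset.sum_nonneg fun _ _ => norm_nonneg _
  have hreg : Reg ρ Bt := by
    refine ⟨by linarith, fun k σ U => ?_, fun k σ σ' U U' => ?_⟩
    · by_cases h : k < N
      · simp only [ρ, h, dif_pos]
        have := (hlip' ⟨k, h⟩ (clamp ε σ) 0 (clampV P ε U) P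
          ((abs_clamp hεpos.le _).trans (hεε _)) ((norm_clampV P hεpos.le _).trans (hεε _))
          (by simpa using (hε' _).le) (by simpa using (hε' _).le)).1
        rw [hρ0, sub_zero] at this
        have h2 : ‖r ⟨k, h⟩‖ ≤ ∑ i, ‖r i‖ :=
          Finset.single_le_sum (f := fun i => ‖r i‖) (fun j _ => norm_nonneg _)
            (Finset.mem_univ _)
        have h3 := norm_sub_norm_le (ρ' ⟨k, h⟩ (clamp ε σ) (clampV P ε U)) (r ⟨k, h⟩)
        have h4 : B' ⟨k, h⟩ * (|clamp ε σ| + ‖clampV P ε U - P‖) ≤ B0 * (1 + 1) := by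
          gcongr
          · exact hBB _
          · exact (abs_clamp hεpos.le _).trans hε1
          · exact (norm_clampV P hεpos.le _).trans hε1
        linarith
      · simp only [ρ, h, dif_neg, not_false_iff, norm_zero]
        linarith
    · by_cases h : k < N
      · simp only [ρ, h, dif_pos]
        refine (hlip' ⟨k, h⟩ _ _ _ _
          ((abs_clamp hεpos.le _).trans (hεε _)) ((norm_clampV P hεpos.le _).trans (hεε _))
          ((abs_clamp hεpos.le _).trans (hεε _)) ((norm_clampV P hεpos.le _).trans (hεε _))).1.trans
            ?_
        have q1 := clamp_lip ε σ σ'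
        have q2 := clampV_lip P ε U U'
        have q3 : B' ⟨k, h⟩ ≤ Bt := by linarith [hBB ⟨k, h⟩]
        have q4 := hB' ⟨k, h⟩
        exact mul_le_mul q3 (add_le_add q1 q2) (by positivity) (by linarith)
      · simp only [ρ, h, dif_neg, not_false_iff, sub_self, norm_zero]
        positivity
  have hρeq : ∀ k (h : k < N) σ U, |σ| ≤ ε → ‖U - P‖ ≤ ε → ρ k σ U = ρ' ⟨k, h⟩ σ U := by
    intro k h σ U hσ hU
    simp only [ρ, h, dif_pos, clamp_eq hσ, clampV_eq hU]
  have hli2 : LinearIndependent ℝ (fun i : Fin N => ρ i 0 P) := by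
    have : (fun i : Fin N => ρ i 0 P) = r := by
      funext i
      rw [hρeq i i.2 0 P (by simpa using hεpos.le) (by simpa using hεpos.le)]
      exact hρ0 i
    rw [this]; exact hli
  obtain ⟨η, hη, Λ, hΛ, hsolve, hinj⟩ := riemann hreg P hli2
  have m1 : min ε η ≤ ε := min_le_left _ _
  have m2 : min ε η ≤ η := min_le_right _ _
  refine ⟨⟨ρ, s, Bt, min ε η, Λ, hreg, lt_min hεpos hη, m1.trans hε1, hΛ, ?_, ?_, ?_, ?_, ?_, ?_⟩⟩
  · intro k hk σ U hσ hU
    have := hrh ⟨k, hk⟩ σ U (hσ.trans (m1.trans (hεε _))) (hU.trans (m1.trans (hεε _)))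
    simp only [wv, hρeq k hk σ U (hσ.trans m1) (hU.trans m1), add_sub_cancel_left]
    rw [this]
    simp [s, hk]
  · intro k hk σ U hσ hU
    have := abs_le.1 (hsp ⟨k, hk⟩ σ U (hσ.trans m1) (hU.trans m1))
    simp only [s, hk, dif_pos]
    linarith [hs1 ⟨k, hk⟩]
  · intro k hk σ U hσ hU
    have := abs_le.1 (hsp ⟨k, hk⟩ σ U (hσ.trans m1) (hU.trans m1))
    simp only [s, hk, dif_pos]
    linarith [hs2 ⟨k, hk⟩]
  · intro i j hij hj σ σ' U U' hσ hU hσ' hU'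
    have hi : i < N := hij.trans hj
    have q1 := abs_le.1 (hsp ⟨i, hi⟩ σ U (hσ.trans m1) (hU.trans m1))
    have q2 := abs_le.1 (hsp ⟨j, hj⟩ σ' U' (hσ'.trans m1) (hU'.trans m1))
    simp only [s, hi, hj, dif_pos]
    linarith [hs3 ⟨i, hi⟩ ⟨j, hj⟩ hij]
  · exact fun U W hU hW => hsolve U W (hU.trans m2) (hW.trans m2)
  · exact fun U α β hU hα hβ => hinj U α β (hU.trans m2) (fun k hk => (hα k hk).trans m2)
      (fun k hk => (hβ k hk).trans m2)

end Glimm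

namespace Glimm

/-! ### Glimm's interaction functional -/

/-- Sum of the entries of a (nonnegative) vector of strengths. -/
def mass (N : ℕ) (x : ℕ → ℝ) : ℝ := ∑ i ∈ Finset.range N, x i

/-- Sum of the first `L` vectors of a sequence. -/
def cum (x : ℕ → ℕ → ℝ) (L : ℕ) (i : ℕ) : ℝ := ∑ j ∈ Finset.range L, x j i

/-- Glimm's interaction potential of the first `L` fans. -/
def pot (N : ℕ) (x : ℕ → ℕ → ℝ) (L : ℕ) : ℝ := ∑ k ∈ Finset.range L, appr N (cum x k) (x k)

lemma appr_add_left (N : ℕ) (x x' y : ℕ → ℝ) :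
    appr N (fun i => x i + x' i) y = appr N x y + appr N x' y := by
  simp [appr, add_mul, Finset.sum_add_distrib]

lemma appr_add_right (N : ℕ) (x y y' : ℕ → ℝ) :
    appr N x (fun i => y i + y' i) = appr N x y + appr N x y' := by
  simp [appr, mul_add, Finset.sum_add_distrib]

lemma appr_nonneg {N : ℕ} {x y : ℕ → ℝ} (hx : ∀ i, 0 ≤ x i) (hy : ∀ i, 0 ≤ y i) :
    0 ≤ appr N x y :=
  Finset.sum_nonneg fun i _ => Finset.sum_nonneg fun l _ => mul_nonneg (hx i) (hy l)

lemma appr_mono {N : ℕ} {x y x' y' : ℕ → ℝ} (hx : ∀ i, 0 ≤ x i) (hy : ∀ i, 0 ≤ y i)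
    (hxx : ∀ i, x i ≤ x' i) (hyy : ∀ i, y i ≤ y' i) : appr N x y ≤ appr N x' y' :=
  Finset.sum_le_sum fun i _ => Finset.sum_le_sum fun l _ =>
    mul_le_mul (hxx i) (hyy l) (hy l) ((hx i).trans (hxx i))

lemma mass_nonneg {N : ℕ} {x : ℕ → ℝ} (hx : ∀ i, 0 ≤ x i) : 0 ≤ mass N x :=
  Finset.sum_nonneg fun i _ => hx i

lemma appr_le {N : ℕ} {x y : ℕ → ℝ} (hx : ∀ i, 0 ≤ x i) (hy : ∀ i, 0 ≤ y i) :
    appr N x y ≤ mass N x * mass N y := by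
  rw [mass, Finset.sum_mul]
  refine Finset.sum_le_sum fun i hi => ?_
  rw [← Finset.mul_sum]
  refine mul_le_mul_of_nonneg_left ?_ (hx i)
  refine Finset.sum_le_sum_of_subset_of_nonneg ?_ fun l _ _ => hy l
  intro l hl
  simp only [Finset.mem_range] at *
  omega

lemma cum_succ (x : ℕ → ℕ → ℝ) (L : ℕ) : cum x (L + 1) = fun i => cum x L i + x L i := by
  funext i; simp [cum, Finset.sum_range_succ]

lemma cum_nonneg {x : ℕ → ℕ → ℝ} (hx : ∀ j i, 0 ≤ x j i) (L i : ℕ) : 0 ≤ cum x L i :=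
  Finset.sum_nonneg fun j _ => hx j i

lemma mass_cum (N : ℕ) (x : ℕ → ℕ → ℝ) (L : ℕ) :
    mass N (cum x L) = ∑ j ∈ Finset.range L, mass N (x j) := by
  simp only [mass, cum]; exact Finset.sum_comm

lemma pot_succ (N : ℕ) (x : ℕ → ℕ → ℝ) (L : ℕ) :
    pot N x (L + 1) = pot N x L + appr N (cum x L) (x L) := by
  simp [pot, Finset.sum_range_succ]

lemma pot_nonneg {N : ℕ} {x : ℕ → ℕ → ℝ} (hx : ∀ j i, 0 ≤ x j i) (L : ℕ) : 0 ≤ pot N x L :=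
  Finset.sum_nonneg fun k _ => appr_nonneg (cum_nonneg hx k) (hx k)

lemma pot_mono {N : ℕ} {x y : ℕ → ℕ → ℝ} (hx : ∀ j i, 0 ≤ x j i) (hxy : ∀ j i, x j i ≤ y j i)
    (L : ℕ) : pot N x L ≤ pot N y L :=
  Finset.sum_le_sum fun k _ => appr_mono (cum_nonneg hx k) (hx k)
    (fun i => Finset.sum_le_sum fun j _ => hxy j i) (hxy k)

/-- Total strength of the first `L` fans. -/
def tot (N : ℕ) (x : ℕ → ℕ → ℝ) (L : ℕ) : ℝ := ∑ j ∈ Finset.range L, mass N (x j)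

lemma tot_succ (N : ℕ) (x : ℕ → ℕ → ℝ) (L : ℕ) :
    tot N x (L + 1) = tot N x L + mass N (x L) := by simp [tot, Finset.sum_range_succ]

lemma tot_nonneg {N : ℕ} {x : ℕ → ℕ → ℝ} (hx : ∀ j i, 0 ≤ x j i) (L : ℕ) : 0 ≤ tot N x L :=
  Finset.sum_nonneg fun k _ => mass_nonneg (hx k)

lemma pot_le_sq {N : ℕ} {x : ℕ → ℕ → ℝ} (hx : ∀ j i, 0 ≤ x j i) (L : ℕ) :
    pot N x L ≤ tot N x L ^ 2 := by
  induction L with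
  | zero => simp [pot, tot]
  | succ L ih =>
    rw [pot_succ, tot_succ]
    have h1 := appr_le (N := N) (cum_nonneg hx L) (hx L)
    rw [mass_cum] at h1
    change _ ≤ tot N x L * _ at h1
    nlinarith [tot_nonneg (N := N) hx L, mass_nonneg (N := N) (hx L)]

lemma pot_add_le {N : ℕ} {w e : ℕ → ℕ → ℝ} (hw : ∀ j i, 0 ≤ w j i) (he : ∀ j i, 0 ≤ e j i)
    (L : ℕ) : pot N (fun j i => w j i + e j i) L
      ≤ pot N w L + 2 * tot N w L * tot N e L + tot N e L ^ 2 := by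
  induction L with
  | zero => simp [pot, tot]
  | succ L ih =>
    have hc : cum (fun j i => w j i + e j i) L = fun i => cum w L i + cum e L i := by
      funext i; simp [cum, Finset.sum_add_distrib]
    rw [pot_succ, pot_succ, tot_succ, tot_succ, hc, appr_add_left, appr_add_right,
      appr_add_right]
    have h1 := appr_le (N := N) (cum_nonneg hw L) (he L)
    have h2 := appr_le (N := N) (cum_nonneg he L) (hw L)
    have h3 := appr_le (N := N) (cum_nonneg he L) (he L)
    rw [mass_cum] at h1 h2 h3
    change _ ≤ tot N _ L * _ at h1
    change _ ≤ tot N _ L * _ at h2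
    change _ ≤ tot N _ L * _ at h3
    have p1 := tot_nonneg (N := N) hw L
    have p2 := tot_nonneg (N := N) he L
    have p3 := mass_nonneg (N := N) (hw L)
    have p4 := mass_nonneg (N := N) (he L)
    have := mul_nonneg p3 p4
    have := mul_nonneg p1 p4
    have := mul_nonneg p2 p3
    have := mul_nonneg p2 p4
    nlinarith

/-- The fans meeting at interface `j` after a time step: the fast part `hi (j - 1)` of the fan on
the left and the slow part `lo j` of the fan on the right. -/
def regroup (lo hi : ℕ → ℕ → ℝ) : ℕ → ℕ → ℝ
  | 0, i => lo 0 i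
  | j + 1, i => hi j i + lo (j + 1) i

/-- The amount of interaction at interface `j` after a time step. -/
def inter (N : ℕ) (lo hi : ℕ → ℕ → ℝ) : ℕ → ℝ
  | 0 => 0
  | j + 1 => appr N (hi j) (lo (j + 1))

lemma cum_regroup (lo hi : ℕ → ℕ → ℝ) (L : ℕ) :
    cum (regroup lo hi) (L + 1)
      = fun i => cum (fun j i => lo j i + hi j i) L i + lo L i := by
  induction L with
  | zero => funext i; simp [cum, regroup]
  | succ L ih =>
    rw [cum_succ, ih, cum_succ]
    funext i
    simp only [regroup]
    ring

lemma tot_regroup {N : ℕ} {lo hi : ℕ → ℕ → ℝ} (hhi : ∀ j i, 0 ≤ hi j i) (L : ℕ) :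
    tot N (regroup lo hi) L ≤ tot N (fun j i => lo j i + hi j i) L := by
  cases L with
  | zero => simp [tot]
  | succ L =>
    rw [tot, ← mass_cum, cum_regroup, tot_succ, tot, ← mass_cum, mass, mass, mass,
      ← Finset.sum_add_distrib]
    refine Finset.sum_le_sum fun i _ => ?_
    have := hhi L i
    linarith

lemma pot_regroup_eq {N : ℕ} {lo hi : ℕ → ℕ → ℝ} (h0 : ∀ j, appr N (lo j) (hi j) = 0) (L : ℕ) :
    pot N (regroup lo hi) (L + 1) + ∑ j ∈ Finset.range (L + 1), inter N lo hi j
      = pot N (fun j i => lo j i + hi j i) L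
        + appr N (cum (fun j i => lo j i + hi j i) L) (lo L) := by
  induction L with
  | zero => simp [pot, inter, cum, appr]
  | succ L ih =>
    rw [pot_succ N _ (L + 1), Finset.sum_range_succ, cum_regroup,
      pot_succ N (fun j i => lo j i + hi j i) L, cum_succ]
    have e : regroup lo hi (L + 1) = fun i => hi L i + lo (L + 1) i := rfl
    have e2 : inter N lo hi (L + 1) = appr N (hi L) (lo (L + 1)) := rfl
    rw [e, e2]
    simp only [appr_add_left, appr_add_right, h0]
    linarith

/-- Regrouping the waves after a time step lowers the potential by the amount of interaction. -/
lemma pot_regroup {N : ℕ} {lo hi : ℕ → ℕ → ℝ} (hlo : ∀ j i, 0 ≤ lo j i) (hhi : ∀ j i, 0 ≤ hi j i)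
    (h0 : ∀ j, appr N (lo j) (hi j) = 0) (L : ℕ) :
    pot N (regroup lo hi) L + ∑ j ∈ Finset.range L, inter N lo hi j
      ≤ pot N (fun j i => lo j i + hi j i) L := by
  cases L with
  | zero => simp [pot]
  | succ L =>
    rw [pot_regroup_eq h0, pot_succ]
    have := appr_mono (N := N) (x := cum (fun j i => lo j i + hi j i) L)
      (x' := cum (fun j i => lo j i + hi j i) L) (y := lo L) (y' := fun i => lo L i + hi L i)
      (cum_nonneg (fun j i => add_nonneg (hlo j i) (hhi j i)) L) (hlo L) (fun _ => le_rfl)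
      (fun i => by linarith [hhi L i])
    linarith

/-- Decay of Glimm's functional over one time step. -/
lemma glimm_decay {N : ℕ} {lo hi e x' : ℕ → ℕ → ℝ} {C κ : ℝ} (hC : 0 ≤ C)
    (hκ : 5 * C * κ ≤ 1)
    (hlo : ∀ j i, 0 ≤ lo j i) (hhi : ∀ j i, 0 ≤ hi j i) (he : ∀ j i, 0 ≤ e j i)
    (hx' : ∀ j i, 0 ≤ x' j i)
    (h0 : ∀ j, appr N (lo j) (hi j) = 0)
    (hE : ∀ j, mass N (e j) ≤ C * inter N lo hi j)
    (hxe : ∀ j, ∀ i, x' j i ≤ regroup lo hi j i + e j i)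
    {L : ℕ} (hG : tot N (fun j i => lo j i + hi j i) L
      + 2 * C * pot N (fun j i => lo j i + hi j i) L ≤ κ) :
    tot N x' L + 2 * C * pot N x' L ≤ κ := by
  set V := tot N (fun j i => lo j i + hi j i) L with hV
  set Q := pot N (fun j i => lo j i + hi j i) L with hQ
  set D := ∑ j ∈ Finset.range L, inter N lo hi j with hD
  have hw : ∀ j i, 0 ≤ regroup lo hi j i := by
    intro j i
    cases j with
    | zero => exact hlo 0 i
    | succ j => exact add_nonneg (hhi j i) (hlo (j + 1) i)
  have hx : ∀ j i, 0 ≤ lo j i + hi j i := fun j i => add_nonneg (hlo j i) (hhi j i)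
  have hD0 : 0 ≤ D := Finset.sum_nonneg fun j _ => by
    cases j with
    | zero => exact le_rfl
    | succ j => exact appr_nonneg (hhi j) (hlo (j + 1))
  have hV0 : 0 ≤ V := tot_nonneg hx L
  have hQ0 : 0 ≤ Q := pot_nonneg hx L
  have t0 : tot N e L ≤ C * D := by
    rw [tot, hD, Finset.mul_sum]
    exact Finset.sum_le_sum fun j _ => hE j
  have te : 0 ≤ tot N e L := tot_nonneg he L
  have t1 := tot_regroup (N := N) (lo := lo) hhi L
  have tw : 0 ≤ tot N (regroup lo hi) L := tot_nonneg hw L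
  have t2 := pot_regroup (N := N) hlo hhi h0 L
  have t3 := pot_add_le (N := N) hw he L
  have t4 := pot_mono (N := N) hx' hxe L
  have t5 : tot N x' L ≤ tot N (regroup lo hi) L + tot N e L := by
    rw [tot, tot, tot, ← Finset.sum_add_distrib]
    refine Finset.sum_le_sum fun j _ => ?_
    rw [mass, mass, mass, ← Finset.sum_add_distrib]
    exact Finset.sum_le_sum fun i _ => hxe j i
  have hpw := pot_nonneg (N := N) hw L
  have hDQ : D ≤ Q := by linarith
  have hCQ := mul_nonneg hC hQ0
  have hCD : C * D ≤ κ / 2 := by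
    have := mul_le_mul_of_nonneg_left hDQ hC
    linarith
  have hCD0 : 0 ≤ C * D := mul_nonneg hC hD0
  have hVκ : V ≤ κ := by linarith
  have hκ0 : 0 ≤ κ := by linarith
  have b1 : 2 * tot N (regroup lo hi) L * tot N e L + tot N e L ^ 2 ≤ (5 / 2 * κ) * (C * D) := by
    have : 2 * tot N (regroup lo hi) L * tot N e L ≤ 2 * κ * (C * D) := by
      gcongr; linarith
    have : tot N e L ^ 2 ≤ κ / 2 * (C * D) := by
      rw [sq]; gcongr; linarith
    linarith
  have b2 : pot N x' L ≤ Q - D + (5 / 2 * κ) * (C * D) := by linarith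
  have b3 : 2 * C * pot N x' L ≤ 2 * C * (Q - D + (5 / 2 * κ) * (C * D)) := by gcongr
  have b4 : 5 * C * κ * (C * D) ≤ 1 * (C * D) := by gcongr
  linarith

end Glimm

namespace Glimm

/-! ### One time step of the scheme -/

variable {N : ℕ} {F : (Fin N → ℝ) → (Fin N → ℝ)} {P : Fin N → ℝ}

/-- The constant in the interaction estimate for wave strengths. -/
def Sys.C (S : Sys N F P) : ℝ := S.Λ * (5 * S.B ^ 2 * (1 + 2 * S.B) ^ N)

lemma Sys.C_nonneg (S : Sys N F P) : 0 ≤ S.C := by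
  have := S.one_le_Λ
  have := S.reg.one_le
  unfold Sys.C
  positivity

/-- A state of the scheme at a fixed time: cell values `u j`, and the strengths `α j` of the fan
joining `u j` to `u (j + 1)`, whose Glimm functional is at most `κ`. -/
structure St (S : Sys N F P) (u0 : Fin N → ℝ) (κ : ℝ) where
  u : ℕ → (Fin N → ℝ)
  α : ℕ → ℕ → ℝ
  conn : ∀ j, om S.ρ (α j) (u j) N = u (j + 1)
  u_zero : u 0 = u0
  glimm : ∀ L, tot N (fun j i => |α j i|) L + 2 * S.C * pot N (fun j i => |α j i|) L ≤ κ

/-- Smallness conditions on the left-most state and on the Glimm functional. -/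
structure Small (S : Sys N F P) (u0 : Fin N → ℝ) (κ : ℝ) : Prop where
  near : ‖u0 - P‖ ≤ S.ε / 2
  small : 4 * S.Λ * S.B * κ ≤ S.ε
  decay : 5 * S.C * κ ≤ 1
  nonneg : 0 ≤ κ

namespace St

variable {S : Sys N F P} {u0 : Fin N → ℝ} {κ : ℝ}

lemma sum_nrm (st : St S u0 κ) (L : ℕ) : ∑ j ∈ Finset.range L, nrm N (st.α j) ≤ κ := by
  have h1 := st.glimm L
  have h2 := pot_nonneg (N := N) (x := fun j i => |st.α j i|) (fun _ _ => abs_nonneg _) L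
  have h3 := mul_nonneg S.C_nonneg h2
  have h4 : tot N (fun j i => |st.α j i|) L = ∑ j ∈ Finset.range L, nrm N (st.α j) := rfl
  linarith

lemma nrm_le (st : St S u0 κ) (j : ℕ) : nrm N (st.α j) ≤ κ :=
  (Finset.single_le_sum (f := fun j => nrm N (st.α j)) (fun _ _ => nrm_nonneg _ _)
    (Finset.mem_range.2 (Nat.lt_succ_self j))).trans (st.sum_nrm (j + 1))

lemma dist_le (st : St S u0 κ) (j : ℕ) : ‖st.u (j + 1) - st.u j‖ ≤ S.B * nrm N (st.α j) := by
  rw [← st.conn]; exact om_disp S.reg _ _ _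

lemma sum_dist (st : St S u0 κ) (L : ℕ) :
    ∑ j ∈ Finset.range L, ‖st.u (j + 1) - st.u j‖ ≤ S.B * κ := by
  have := S.reg.one_le
  calc _ ≤ ∑ j ∈ Finset.range L, S.B * nrm N (st.α j) :=
        Finset.sum_le_sum fun j _ => st.dist_le j
    _ = S.B * ∑ j ∈ Finset.range L, nrm N (st.α j) := by rw [Finset.mul_sum]
    _ ≤ _ := by gcongr; exact st.sum_nrm L

lemma u_sub (st : St S u0 κ) (j : ℕ) : ‖st.u j - u0‖ ≤ S.B * κ := by
  refine le_trans ?_ (st.sum_dist j)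
  have : st.u j - u0 = ∑ i ∈ Finset.range j, (st.u (i + 1) - st.u i) := by
    rw [Finset.sum_range_sub, st.u_zero]
  rw [this]
  exact norm_sum_le _ _

lemma Bκ_le (h : Small S u0 κ) : S.B * κ ≤ S.ε / 4 := by
  have h1 := S.reg.one_le
  have h2 := S.one_le_Λ
  have h3 : 0 ≤ S.B * κ := mul_nonneg (by linarith) h.nonneg
  have h4 := h.small
  have h5 : 1 * (S.B * κ) ≤ S.Λ * (S.B * κ) := by gcongr
  linarith

lemma κ_le (h : Small S u0 κ) : κ ≤ S.ε / 4 := by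
  have h1 := S.reg.one_le
  have h5 : 1 * κ ≤ S.B * κ := by have := h.nonneg; gcongr
  linarith [Bκ_le h]

lemma om_sub (st : St S u0 κ) (j k : ℕ) (hk : k ≤ N) :
    ‖om S.ρ (st.α j) (st.u j) k - st.u j‖ ≤ S.B * nrm N (st.α j) := by
  have h1 := S.reg.one_le
  refine (om_disp S.reg _ _ _).trans ?_
  gcongr
  exact nrm_mono hk _

lemma om_near (h : Small S u0 κ) (st : St S u0 κ) (j k : ℕ) (hk : k ≤ N) :
    ‖om S.ρ (st.α j) (st.u j) k - P‖ ≤ S.ε := by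
  have h1 := S.reg.one_le
  have q1 := st.om_sub j k hk
  have q2 := st.u_sub j
  have q3 : S.B * nrm N (st.α j) ≤ S.B * κ := by gcongr; exact st.nrm_le j
  have q4 := Bκ_le h
  have q5 := h.near
  have q6 := norm_sub_le_norm_sub_add_norm_sub (om S.ρ (st.α j) (st.u j) k) (st.u j) P
  have q7 := norm_sub_le_norm_sub_add_norm_sub (st.u j) u0 P
  linarith

lemma u_near (h : Small S u0 κ) (st : St S u0 κ) (j : ℕ) : ‖st.u j - P‖ ≤ S.ε :=
  om_near h st j 0 (Nat.zero_le _)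

lemma strength_le (h : Small S u0 κ) (st : St S u0 κ) (j k : ℕ) (hk : k < N) :
    |st.α j k| ≤ S.ε := by
  have := (abs_le_nrm hk (st.α j)).trans (st.nrm_le j)
  have := κ_le h
  have := S.ε_pos
  linarith

lemma flux_sum (h : Small S u0 κ) (st : St S u0 κ) (j n : ℕ) (hn : n ≤ N) :
    F (om S.ρ (st.α j) (st.u j) n) - F (st.u j)
      = ∑ i ∈ Finset.range n, S.s i (st.α j i) (om S.ρ (st.α j) (st.u j) i) •
        (om S.ρ (st.α j) (st.u j) (i + 1) - om S.ρ (st.α j) (st.u j) i) := by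
  induction n with
  | zero => simp [om]
  | succ n ih =>
    rw [Finset.sum_range_succ, ← ih (by omega)]
    have := S.rh n (by omega) (st.α j n) (om S.ρ (st.α j) (st.u j) n)
      (strength_le h st j n (by omega)) (om_near h st j n (by omega))
    rw [show om S.ρ (st.α j) (st.u j) (n + 1)
      = wv S.ρ n (st.α j n) (om S.ρ (st.α j) (st.u j) n) from rfl, ← this]
    abel

lemma flux_le (h : Small S u0 κ) (st : St S u0 κ) (j : ℕ) :
    ‖F (st.u (j + 1)) - F (st.u j)‖ ≤ S.B * nrm N (st.α j) := by
  rw [← st.conn j, flux_sum h st j N le_rfl, nrm, Finset.mul_sum]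
  refine (norm_sum_le _ _).trans (Finset.sum_le_sum fun i hi => ?_)
  have hi := Finset.mem_range.1 hi
  rw [norm_smul, Real.norm_eq_abs]
  have a1 := strength_le h st j i hi
  have a2 := om_near h st j i hi.le
  have h1 := S.s_le_one i hi _ _ a1 a2
  have h2 := S.s_nonneg i hi _ _ a1 a2
  rw [abs_of_nonneg h2]
  have h3 := wv_disp S.reg i (st.α j i) (om S.ρ (st.α j) (st.u j) i)
  calc _ ≤ 1 * (S.B * |st.α j i|) := by
        gcongr; exact h3
    _ = _ := one_mul _

/-- Deviation of the sampled value from the value prescribed by conservation, when the fan at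
interface `j` is sampled between the families `k - 1` and `k`. -/
noncomputable def dev (st : St S u0 κ) (j k : ℕ) : Fin N → ℝ :=
  om S.ρ (st.α j) (st.u j) k - (st.u (j + 1) - (F (st.u (j + 1)) - F (st.u j)))

lemma sample_sub (st : St S u0 κ) (j k : ℕ) (hk : k ≤ N) :
    ‖om S.ρ (st.α j) (st.u j) k - st.u (j + 1)‖ ≤ 2 * S.B * nrm N (st.α j) := by
  have h1 := st.om_sub j k hk
  have h2 := st.dist_le j
  have h3 := norm_sub_le_norm_sub_add_norm_sub (om S.ρ (st.α j) (st.u j) k) (st.u j)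
    (st.u (j + 1))
  rw [norm_sub_rev (st.u j)] at h3
  linarith

lemma dev_le (h : Small S u0 κ) (st : St S u0 κ) (j k : ℕ) (hk : k ≤ N) :
    ‖st.dev j k‖ ≤ 3 * S.B * nrm N (st.α j) := by
  have h1 := st.sample_sub j k hk
  have h2 := flux_le h st j
  have : st.dev j k = (om S.ρ (st.α j) (st.u j) k - st.u (j + 1))
    + (F (st.u (j + 1)) - F (st.u j)) := by simp only [dev]; abel
  rw [this]
  refine (norm_add_le _ _).trans ?_
  linarith

/-- Abel summation: with nondecreasing weights in `[0, 1]`, a weighted sum of increments of `g`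
does not exceed the final height of `g` above its minimum. -/
lemma weighted_le {g s : ℕ → ℝ} {m : ℝ} (n : ℕ) (hm : ∀ k ≤ n, m ≤ g k)
    (hs : ∀ i j, i < j → j < n → s i ≤ s j) (h0 : ∀ i < n, 0 ≤ s i) {T : ℝ} (hT0 : 0 ≤ T)
    (hT : ∀ i < n, s i ≤ T) :
    ∑ i ∈ Finset.range n, s i * (g (i + 1) - g i) ≤ T * (g n - m) := by
  induction n generalizing T with
  | zero => simpa using mul_nonneg hT0 (sub_nonneg.2 (hm 0 le_rfl))
  | succ n ih =>
    rw [Finset.sum_range_succ]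
    have h1 := ih (fun k hk => hm k (by omega)) (fun i j hij hj => hs i j hij (by omega))
      (fun i hi => h0 i (by omega)) (h0 n (by omega)) (fun i hi => hs i n hi (by omega))
    have h2 : s n * (g (n + 1) - m) ≤ T * (g (n + 1) - m) :=
      mul_le_mul_of_nonneg_right (hT n (by omega)) (sub_nonneg.2 (hm _ le_rfl))
    linarith

/-- In any given direction some sampling of the fan deviates non-positively. This is where the
ordering of the speeds by family enters. -/
lemma exists_cut (h : Small S u0 κ) (st : St S u0 κ) (j : ℕ) (E : Fin N → ℝ) :
    ∃ k ≤ N, E ⬝ᵥ st.dev j k ≤ 0 := by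
  set g : ℕ → ℝ := fun k => E ⬝ᵥ om S.ρ (st.α j) (st.u j) k with hg
  obtain ⟨k, hk, hmin⟩ := Finset.exists_min_image (Finset.range (N + 1)) g ⟨0, by simp⟩
  have hk : k ≤ N := by simpa [Nat.lt_succ_iff] using hk
  refine ⟨k, hk, ?_⟩
  have q := weighted_le (g := g) (s := fun i => S.s i (st.α j i) (om S.ρ (st.α j) (st.u j) i))
    (m := g k) N (fun i hi => hmin i (by simp; omega))
    (fun i i' hii' hi' => S.s_mono i i' hii' hi' _ _ _ _ (strength_le h st j i (by omega))
      (om_near h st j i (by omega)) (strength_le h st j i' (by omega))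
      (om_near h st j i' (by omega)))
    (fun i hi => S.s_nonneg i hi _ _ (strength_le h st j i hi) (om_near h st j i hi.le))
    zero_le_one
    (fun i hi => S.s_le_one i hi _ _ (strength_le h st j i hi) (om_near h st j i hi.le))
  have e : E ⬝ᵥ (F (st.u (j + 1)) - F (st.u j))
      = ∑ i ∈ Finset.range N, S.s i (st.α j i) (om S.ρ (st.α j) (st.u j) i)
        * (g (i + 1) - g i) := by
    rw [← st.conn j, flux_sum h st j N le_rfl, dotProduct_sum]
    refine Finset.sum_congr rfl fun i _ => ?_
    rw [dotProduct_smul, dotProduct_sub, smul_eq_mul]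
  simp only [dev, dotProduct_sub]
  rw [dotProduct_sub] at e
  have e2 : E ⬝ᵥ st.u (j + 1) = g N := by rw [← st.conn j]
  have e3 : E ⬝ᵥ om S.ρ (st.α j) (st.u j) k = g k := rfl
  linarith

lemma appr_parts (α : ℕ → ℝ) (k : ℕ) :
    appr N (fun i => |lowPart α k i|) (fun i => |highPart α k i|) = 0 := by
  refine Finset.sum_eq_zero fun i _ => Finset.sum_eq_zero fun l hl => ?_
  have hl := Finset.mem_range.1 hl
  by_cases hi : i < k
  · simp [highPart, show l < k by omega]
  · simp [lowPart, hi]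

lemma abs_parts (α : ℕ → ℝ) (k i : ℕ) : |lowPart α k i| + |highPart α k i| = |α i| := by
  by_cases hi : i < k <;> simp [lowPart, highPart, hi]

lemma om_zero (ρ : ℕ → ℝ → (Fin N → ℝ) → (Fin N → ℝ)) (U : Fin N → ℝ) (n : ℕ) :
    om ρ (fun _ => 0) U n = U := by
  rw [om_sub_eq_sum]; simp

lemma nrm_low (α : ℕ → ℝ) (k : ℕ) : nrm N (lowPart α k) ≤ nrm N α :=
  Finset.sum_le_sum fun i _ => by linarith [abs_parts α k i, abs_nonneg (highPart α k i)]

lemma nrm_high (α : ℕ → ℝ) (k : ℕ) : nrm N (highPart α k) ≤ nrm N α :=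
  Finset.sum_le_sum fun i _ => by linarith [abs_parts α k i, abs_nonneg (lowPart α k i)]

/-- For any choice of sampling positions the sampled states again form a state of the scheme, with
the same bound on the Glimm functional. -/
lemma step (h : Small S u0 κ) (st : St S u0 κ) (kk : ℕ → ℕ) (hkk : ∀ j, kk j ≤ N) :
    ∃ st' : St S u0 κ, ∀ j, st'.u (j + 1) = om S.ρ (st.α j) (st.u j) (kk j) := by
  have hB := S.reg.one_le
  have hΛ := S.one_le_Λ
  have hBκ := Bκ_le h
  have hκε := κ_le h
  have hε := S.ε_pos
  let u' : ℕ → (Fin N → ℝ) := fun j => match j with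
    | 0 => u0
    | j + 1 => om S.ρ (st.α j) (st.u j) (kk j)
  -- incoming waves from the left and from the right at the new interface `j`
  let a : ℕ → ℕ → ℝ := fun j => match j with
    | 0 => fun _ => 0
    | j + 1 => highPart (st.α j) (kk j)
  let b : ℕ → ℕ → ℝ := fun j => lowPart (st.α j) (kk j)
  have ha : ∀ j, om S.ρ (a j) (u' j) N = st.u j := by
    intro j
    cases j with
    | zero => change om S.ρ (fun _ => 0) u0 N = _; rw [om_zero, st.u_zero]
    | succ j =>
      change om S.ρ (highPart (st.α j) (kk j)) (om S.ρ (st.α j) (st.u j) (kk j)) N = _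
      obtain ⟨n, hn⟩ := Nat.exists_eq_add_of_le (hkk j)
      have := om_highPart (ρ := S.ρ) (st.α j) (st.u j) (kk j) n
      rw [← hn] at this
      rw [this, st.conn]
  have hb : ∀ j, om S.ρ (b j) (st.u j) N = u' (j + 1) := by
    intro j
    obtain ⟨n, hn⟩ := Nat.exists_eq_add_of_le (hkk j)
    have := om_lowPart (ρ := S.ρ) (st.α j) (st.u j) (kk j) n
    rw [← hn] at this
    exact this
  have hna : ∀ j, nrm N (a j) ≤ κ := by
    intro j
    cases j with
    | zero => simpa [a, nrm] using h.nonneg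
    | succ j => exact (nrm_high _ _).trans (st.nrm_le j)
  have hnb : ∀ j, nrm N (b j) ≤ κ := fun j => (nrm_low _ _).trans (st.nrm_le j)
  have hu'P : ∀ j, ‖u' j - P‖ ≤ S.ε := by
    intro j
    cases j with
    | zero => exact h.near.trans (by linarith)
    | succ j => exact om_near h st j _ (hkk j)
  have hdist : ∀ j, ‖u' (j + 1) - u' j‖ ≤ 2 * (S.B * κ) := by
    intro j
    have q1 := om_disp S.reg (a j) (u' j) N
    have q2 := om_disp S.reg (b j) (st.u j) N
    rw [ha] at q1
    rw [hb] at q2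
    have q3 : S.B * nrm N (a j) ≤ S.B * κ := by gcongr; exact hna j
    have q4 : S.B * nrm N (b j) ≤ S.B * κ := by gcongr; exact hnb j
    have := norm_sub_le_norm_sub_add_norm_sub (u' (j + 1)) (st.u j) (u' j)
    linarith
  choose α' hα' hα'n using fun j => S.solve (u' j) (u' (j + 1)) (hu'P j)
    ((hdist j).trans (by linarith))
  have hα'ε : ∀ j, nrm N (α' j) ≤ S.ε := by
    intro j
    have h1 : S.Λ * ‖u' (j + 1) - u' j‖ ≤ S.Λ * (2 * (S.B * κ)) := by gcongr; exact hdist j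
    have h2 := h.small
    have h3 : 0 ≤ S.Λ * (S.B * κ) :=
      mul_nonneg (by linarith) (mul_nonneg (by linarith) h.nonneg)
    linarith [hα'n j]
  have hab : ∀ j, ∀ k < N, |a j k + b j k| ≤ S.ε := by
    intro j k hk
    have q1 := (abs_le_nrm hk (a j)).trans (hna j)
    have q2 := (abs_le_nrm hk (b j)).trans (hnb j)
    have := abs_add_le (a j k) (b j k)
    linarith
  let lo : ℕ → ℕ → ℝ := fun j i => |b j i|
  let hi : ℕ → ℕ → ℝ := fun j i => |highPart (st.α j) (kk j) i|
  have hrg : ∀ j i, |a j i| + |b j i| = regroup lo hi j i := by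
    intro j i
    cases j with
    | zero => simp [a, regroup, lo]
    | succ j => rfl
  have hint : ∀ j, appr N (fun i => |a j i|) (fun i => |b j i|) = inter N lo hi j := by
    intro j
    cases j with
    | zero => simp [a, appr, inter]
    | succ j => rfl
  have hsum : (fun j i => lo j i + hi j i) = fun j i => |st.α j i| := by
    funext j i; exact abs_parts _ _ _
  have hε1 := S.ε_le
  have hE : ∀ j, mass N (fun i => |α' j i - (a j i + b j i)|) ≤ S.C * inter N lo hi j := by
    intro j
    have q1 := S.inj (u' j) (α' j) (fun k => a j k + b j k) (hu'P j)
      (fun k hk => (abs_le_nrm hk _).trans (hα'ε j)) (hab j)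
    have q2 := interaction S.reg (a j) (b j) (u' j) N
      (fun k hk => (abs_le_nrm hk _).trans ((hna j).trans (by linarith)))
      (fun k hk => (abs_le_nrm hk _).trans ((hnb j).trans (by linarith)))
    rw [ha, hb, hint] at q2
    rw [hα'] at q1
    refine q1.trans ?_
    rw [Sys.C, mul_assoc]
    gcongr
  refine ⟨⟨u', α', hα', rfl, fun L => ?_⟩, fun j => rfl⟩
  have hG := st.glimm L
  rw [← hsum] at hG
  refine glimm_decay S.C_nonneg h.decay (lo := lo) (hi := hi)
    (e := fun j i => |α' j i - (a j i + b j i)|)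
    (fun _ _ => abs_nonneg _) (fun _ _ => abs_nonneg _) (fun _ _ => abs_nonneg _)
    (fun _ _ => abs_nonneg _) (fun j => appr_parts _ _) hE ?_ hG
  intro j i
  rw [← hrg]
  have q1 := abs_add_le (a j i + b j i) (α' j i - (a j i + b j i))
  have q2 := abs_add_le (a j i) (b j i)
  rw [add_sub_cancel] at q1
  linarith

end St

end Glimm

namespace Glimm

/-! ### The scheme -/

section Greedy

variable {N : ℕ}

/-- The running error within block `b` when the deviations are picked greedily. -/
def running (M : ℕ) (E : ℕ → (Fin N → ℝ)) (pick : ℕ → (Fin N → ℝ) → (Fin N → ℝ)) (b : ℕ) :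
    ℕ → (Fin N → ℝ)
  | 0 => E b
  | i + 1 => running M E pick b i + pick (b * M + i) (running M E pick b i)

/-- If in every direction there is an admissible deviation that is non-positive in that direction,
deviations can be chosen so that the squared error grows at most by the sum of their squares. -/
lemma greedy {M : ℕ} (hM : 0 < M) (E : ℕ → (Fin N → ℝ)) (Opt : ℕ → (Fin N → ℝ) → Prop)
    (h : ∀ j dir, ∃ J, Opt j J ∧ dir ⬝ᵥ J ≤ 0) :
    ∃ J : ℕ → (Fin N → ℝ), (∀ j, Opt j (J j)) ∧ ∀ b,
      (E b + ∑ i ∈ Finset.range M, J (b * M + i)) ⬝ᵥ (E b + ∑ i ∈ Finset.range M, J (b * M + i))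
        ≤ E b ⬝ᵥ E b + ∑ i ∈ Finset.range M, J (b * M + i) ⬝ᵥ J (b * M + i) := by
  choose pick hp1 hp2 using h
  let J : ℕ → (Fin N → ℝ) := fun j => pick j (running M E pick (j / M) (j % M))
  have hJ : ∀ b i, i < M → J (b * M + i) = pick (b * M + i) (running M E pick b i) := by
    intro b i hi
    have h1 : (b * M + i) / M = b := by
      rw [mul_comm, Nat.mul_add_div hM, Nat.div_eq_of_lt hi, add_zero]
    have h2 : (b * M + i) % M = i := by
      rw [mul_comm, Nat.mul_add_mod, Nat.mod_eq_of_lt hi]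
    simp only [J, h1, h2]
  refine ⟨J, fun j => hp1 _ _, fun b => ?_⟩
  have key : ∀ m ≤ M, E b + ∑ i ∈ Finset.range m, J (b * M + i) = running M E pick b m ∧
      running M E pick b m ⬝ᵥ running M E pick b m
        ≤ E b ⬝ᵥ E b + ∑ i ∈ Finset.range m, J (b * M + i) ⬝ᵥ J (b * M + i) := by
    intro m hm
    induction m with
    | zero => simp [running]
    | succ m ih =>
      obtain ⟨i1, i2⟩ := ih (by omega)
      rw [Finset.sum_range_succ, ← add_assoc, i1, hJ b m (by omega), Finset.sum_range_succ,
        hJ b m (by omega)]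
      refine ⟨rfl, ?_⟩
      have := hp2 (b * M + m) (running M E pick b m)
      simp only [running, add_dotProduct, dotProduct_add]
      rw [dotProduct_comm (pick (b * M + m) (running M E pick b m)) (running M E pick b m)]
      linarith
  rw [(key M le_rfl).1]
  exact (key M le_rfl).2

lemma dot_self_le (v : Fin N → ℝ) : v ⬝ᵥ v ≤ N * ‖v‖ ^ 2 := by
  calc v ⬝ᵥ v ≤ ∑ _i : Fin N, ‖v‖ ^ 2 := Finset.sum_le_sum fun i _ => by
        have := norm_le_pi_norm v i
        rw [Real.norm_eq_abs] at this
        rw [← sq, ← sq_abs]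
        gcongr
    _ = _ := by simp

lemma norm_sq_le_dot (v : Fin N → ℝ) : ‖v‖ ^ 2 ≤ v ⬝ᵥ v := by
  have h0 : 0 ≤ v ⬝ᵥ v := Finset.sum_nonneg fun i _ => mul_self_nonneg _
  rw [← Real.le_sqrt (norm_nonneg _) h0, pi_norm_le_iff_of_nonneg (Real.sqrt_nonneg _)]
  intro i
  apply Real.le_sqrt_of_sq_le
  rw [Real.norm_eq_abs, sq_abs, sq]
  exact Finset.single_le_sum (f := fun i => v i * v i) (fun i _ => mul_self_nonneg _)
    (Finset.mem_univ i)

end Greedy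

variable {N : ℕ} {F : (Fin N → ℝ) → (Fin N → ℝ)} {P : Fin N → ℝ}

lemma init_state (S : Sys N F P) {W : ℕ → (Fin N → ℝ)} {T : ℝ}
    (hs : Small S (W 0) (2 * S.Λ * T))
    (hW : ∀ L, ∑ j ∈ Finset.range L, ‖W (j + 1) - W j‖ ≤ T) :
    ∃ st : St S (W 0) (2 * S.Λ * T), st.u = W := by
  have hB := S.reg.one_le
  have hΛ := S.one_le_Λ
  have hT0 : 0 ≤ T := by simpa using hW 0
  have hε := S.ε_pos
  have hκ := St.κ_le hs
  have hT : T ≤ S.ε / 4 := by nlinarith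
  have hd : ∀ j, ‖W (j + 1) - W j‖ ≤ T := fun j =>
    (Finset.single_le_sum (f := fun j => ‖W (j + 1) - W j‖) (fun _ _ => norm_nonneg _)
      (Finset.mem_range.2 (Nat.lt_succ_self j))).trans (hW (j + 1))
  have hP : ∀ j, ‖W j - P‖ ≤ S.ε := by
    intro j
    have h1 : ‖W j - W 0‖ ≤ T := by
      rw [← Finset.sum_range_sub]
      exact (norm_sum_le _ _).trans (hW j)
    have h2 := norm_sub_le_norm_sub_add_norm_sub (W j) (W 0) P
    linarith [hs.near]
  choose α hα hαn using fun j => S.solve (W j) (W (j + 1)) (hP j) ((hd j).trans (by linarith))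
  refine ⟨⟨W, α, hα, rfl, fun L => ?_⟩, rfl⟩
  have hV : tot N (fun j i => |α j i|) L ≤ S.Λ * T := by
    calc tot N (fun j i => |α j i|) L = ∑ j ∈ Finset.range L, nrm N (α j) := rfl
      _ ≤ ∑ j ∈ Finset.range L, S.Λ * ‖W (j + 1) - W j‖ := Finset.sum_le_sum fun j _ => hαn j
      _ = S.Λ * ∑ j ∈ Finset.range L, ‖W (j + 1) - W j‖ := by rw [Finset.mul_sum]
      _ ≤ _ := by gcongr; exact hW L
  have hV0 : 0 ≤ tot N (fun j i => |α j i|) L := tot_nonneg (fun _ _ => abs_nonneg _) L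
  have hQ := pot_le_sq (N := N) (x := fun j i => |α j i|) (fun _ _ => abs_nonneg _) L
  have hC := S.C_nonneg
  have hdec := hs.decay
  set V := tot N (fun j i => |α j i|) L
  have h1 : 2 * S.C * pot N (fun j i => |α j i|) L ≤ 2 * S.C * V ^ 2 := by gcongr
  have h2 : S.C * V ≤ S.C * (S.Λ * T) := by gcongr
  have h3 : 2 * S.C * V ≤ 1 := by
    have : 0 ≤ S.C * (S.Λ * T) := mul_nonneg hC (mul_nonneg (by linarith) hT0)
    linarith
  have h4 : 2 * S.C * V ^ 2 ≤ 1 * V := by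
    calc 2 * S.C * V ^ 2 = (2 * S.C * V) * V := by ring
      _ ≤ _ := by gcongr
  linarith

/-- The discrete output of the scheme on cells `j` and times `n`: `u n j` solves the upwind
difference scheme up to deviations `J n j`, whose sums over blocks of `M` cells grow only like the
square root of the number of steps. -/
structure Scheme (F : (Fin N → ℝ) → (Fin N → ℝ)) (P : Fin N → ℝ) (ε A : ℝ) (M : ℕ)
    (W : ℕ → (Fin N → ℝ)) (u J : ℕ → ℕ → (Fin N → ℝ)) : Prop where
  init : u 0 = W
  left : ∀ n, u n 0 = W 0
  near : ∀ n j, ‖u n j - P‖ ≤ ε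
  var : ∀ n L, ∑ j ∈ Finset.range L, ‖u n (j + 1) - u n j‖ ≤ A
  time : ∀ n L, ∑ j ∈ Finset.range L, ‖u (n + 1) j - u n j‖ ≤ A
  J_zero : ∀ n, J n 0 = 0
  J_sum : ∀ n L, ∑ j ∈ Finset.range L, ‖J n j‖ ≤ A
  upwind : ∀ n j, u (n + 1) (j + 1) = u n (j + 1) - (F (u n (j + 1)) - F (u n j)) + J n (j + 1)
  block : ∀ n b, ‖∑ m ∈ Finset.range n, ∑ i ∈ Finset.range M, J m (b * M + i)‖
    ≤ A * Real.sqrt (N * n)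

lemma scheme (S : Sys N F P) {M : ℕ} (hM : 0 < M) {W : ℕ → (Fin N → ℝ)} {T : ℝ}
    (hs : Small S (W 0) (2 * S.Λ * T))
    (hW : ∀ L, ∑ j ∈ Finset.range L, ‖W (j + 1) - W j‖ ≤ T) :
    ∃ u J, Scheme F P S.ε (6 * S.B * S.Λ * T) M W u J := by
  have hB := S.reg.one_le
  have hinit := init_state S hs hW
  obtain ⟨κ, hκ⟩ : ∃ κ, κ = 2 * S.Λ * T := ⟨_, rfl⟩
  rw [← hκ] at hs hinit
  obtain ⟨st0, hst0⟩ := hinit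
  have hκ0 : 0 ≤ κ := hs.nonneg
  obtain ⟨A, hA⟩ : ∃ A, A = 6 * S.B * S.Λ * T := ⟨_, rfl⟩
  rw [← hA]
  have hAκ : A = 3 * S.B * κ := by rw [hA, hκ]; ring
  -- one step, with the deviations picked greedily
  have hstep : ∀ x : St S (W 0) κ × (ℕ → (Fin N → ℝ)),
      ∃ y : (St S (W 0) κ × (ℕ → (Fin N → ℝ))) × (ℕ → (Fin N → ℝ)),
        y.2 0 = 0 ∧
        (∀ j, ∃ k ≤ N, y.1.1.u (j + 1) = om S.ρ (x.1.α j) (x.1.u j) k ∧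
          y.2 (j + 1) = x.1.dev j k) ∧
        (∀ b, y.1.2 b = x.2 b + ∑ i ∈ Finset.range M, y.2 (b * M + i)) ∧
        (∀ b, y.1.2 b ⬝ᵥ y.1.2 b ≤ x.2 b ⬝ᵥ x.2 b
          + ∑ i ∈ Finset.range M, y.2 (b * M + i) ⬝ᵥ y.2 (b * M + i)) := by
    intro x
    obtain ⟨J, hJ1, hJ2⟩ := greedy hM x.2
      (fun j v => match j with
        | 0 => v = 0
        | j + 1 => ∃ k ≤ N, v = x.1.dev j k)
      (by
        intro j dir
        cases j with
        | zero => exact ⟨0, rfl, by simp⟩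
        | succ j =>
          obtain ⟨k, hk, hk2⟩ := St.exists_cut hs x.1 j dir
          exact ⟨_, ⟨k, hk, rfl⟩, hk2⟩)
    choose kk hkk hJk using fun j => (hJ1 (j + 1) : ∃ k ≤ N, J (j + 1) = x.1.dev j k)
    obtain ⟨st', hst'⟩ := St.step hs x.1 kk hkk
    exact ⟨((st', fun b => x.2 b + ∑ i ∈ Finset.range M, J (b * M + i)), J), hJ1 0,
      fun j => ⟨kk j, hkk j, hst' j, hJk j⟩, fun b => rfl, hJ2⟩
  choose nx hn0 hn1 hn2 hn3 using hstep
  let f : ℕ → St S (W 0) κ × (ℕ → (Fin N → ℝ)) := fun n =>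
    Nat.rec (st0, fun _ => 0) (fun _ x => (nx x).1) n
  have hf : ∀ n, f (n + 1) = (nx (f n)).1 := fun n => rfl
  let u : ℕ → ℕ → (Fin N → ℝ) := fun n => (f n).1.u
  let J : ℕ → ℕ → (Fin N → ℝ) := fun n => (nx (f n)).2
  have hleft : ∀ n, u n 0 = W 0 := fun n => (f n).1.u_zero
  have hsumA : ∀ n L, ∑ j ∈ Finset.range L, 3 * S.B * nrm N ((f n).1.α j) ≤ A := by
    intro n L
    rw [← Finset.mul_sum, hAκ]
    gcongr
    exact (f n).1.sum_nrm L
  have hpred : ∀ (g : ℕ → ℝ) n, g 0 = 0 → (∀ j, g (j + 1) ≤ 3 * S.B * nrm N ((f n).1.α j)) →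
      ∀ L, ∑ j ∈ Finset.range L, g j ≤ A := by
    intro g n h0 hg L
    cases L with
    | zero => simpa [hAκ] using (by positivity : 0 ≤ 3 * S.B * κ)
    | succ L =>
      rw [Finset.sum_range_succ', h0, add_zero]
      exact (Finset.sum_le_sum fun j _ => hg j).trans (hsumA n L)
  have hJsum : ∀ n L, ∑ j ∈ Finset.range L, ‖J n j‖ ≤ A := by
    intro n
    refine hpred _ n (by simp [J, hn0]) fun j => ?_
    obtain ⟨k, hk, _, hk3⟩ := hn1 (f n) j
    simp only [J, hk3]
    exact St.dev_le hs _ j k hk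
  have hA0 : 0 ≤ A := by rw [hAκ]; positivity
  have hJsq : ∀ n b, ∑ i ∈ Finset.range M, J n (b * M + i) ⬝ᵥ J n (b * M + i) ≤ N * A ^ 2 := by
    intro n b
    have h1 : ∑ i ∈ Finset.range M, ‖J n (b * M + i)‖ ≤ A := by
      have := hJsum n (b * M + M)
      rw [Finset.sum_range_add] at this
      have h0 : 0 ≤ ∑ j ∈ Finset.range (b * M), ‖J n j‖ :=
        Finset.sum_nonneg fun _ _ => norm_nonneg _
      linarith
    calc _ ≤ ∑ i ∈ Finset.range M, (N : ℝ) * ‖J n (b * M + i)‖ ^ 2 :=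
          Finset.sum_le_sum fun i _ => dot_self_le _
      _ = N * ∑ i ∈ Finset.range M, ‖J n (b * M + i)‖ ^ 2 := by rw [Finset.mul_sum]
      _ ≤ N * (∑ i ∈ Finset.range M, ‖J n (b * M + i)‖) ^ 2 := by
          gcongr
          exact Finset.sum_sq_le_sq_sum_of_nonneg fun _ _ => norm_nonneg _
      _ ≤ _ := by
          gcongr
  have hE : ∀ n b, (f n).2 b = ∑ m ∈ Finset.range n, ∑ i ∈ Finset.range M, J m (b * M + i) := by
    intro n b
    induction n with
    | zero => rfl
    | succ n ih => rw [Finset.sum_range_succ, ← ih, hf, hn2]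
  have hE2 : ∀ n b, (f n).2 b ⬝ᵥ (f n).2 b ≤ n * (N * A ^ 2) := by
    intro n b
    induction n with
    | zero => simp [f]
    | succ n ih =>
      rw [hf]
      have h1 := hn3 (f n) b
      have h2 := hJsq n b
      push_cast
      linarith
  refine ⟨u, J, hst0, hleft, fun n j => St.u_near hs _ j, ?_, ?_, fun n => hn0 _, hJsum, ?_, ?_⟩
  · intro n L
    refine ((f n).1.sum_dist L).trans ?_
    rw [hAκ]
    have : 0 ≤ S.B * κ := by positivity
    linarith
  · intro n
    refine hpred _ n (by simp only [hleft, sub_self, norm_zero]) fun j => ?_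
    obtain ⟨k, hk, hk2, _⟩ := hn1 (f n) j
    have e : u (n + 1) (j + 1) = _ := hk2
    rw [e]
    refine ((f n).1.sample_sub j k hk).trans ?_
    have := nrm_nonneg N ((f n).1.α j)
    gcongr
    norm_num
  · intro n j
    obtain ⟨k, hk, hk2, hk3⟩ := hn1 (f n) j
    have e : u (n + 1) (j + 1) = _ := hk2
    have e' : J n (j + 1) = _ := hk3
    rw [e, e', St.dev]
    simp only [u]
    abel
  · intro n b
    rw [← hE]
    have h1 := (norm_sq_le_dot ((f n).2 b)).trans (hE2 n b)
    have h2 : n * (N * A ^ 2) = (A * Real.sqrt (N * n)) ^ 2 := by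
      rw [mul_pow A, Real.sq_sqrt (by positivity)]; ring
    rw [h2] at h1
    exact le_of_sq_le_sq h1 (by positivity)

end Glimm

namespace Glimm

/-! ### Splitting the deviations into discrete derivatives -/

variable {N : ℕ}

/-- Block averages `e` of the accumulated deviations absorb the mean of `J` over each block of `M`
cells; what is left has mean zero on every block and is hence the space difference of an array `c`
supported, block by block, by the deviations of that block. -/
lemma decomposition {M : ℕ} (hM : 0 < M) (J : ℕ → ℕ → (Fin N → ℝ)) :
    ∃ c e : ℕ → ℕ → (Fin N → ℝ), (∀ j, e 0 j = 0) ∧ (∀ n, c n 0 = 0) ∧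
      (∀ n j, J n j = c n (j + 1) - c n j + (e (n + 1) j - e n j)) ∧
      (∀ n j, e n j = (M : ℝ)⁻¹ • ∑ m ∈ Finset.range n, ∑ i ∈ Finset.range M,
        J m (j / M * M + i)) ∧
      (∀ n j, ‖c n j‖ ≤ 2 * (∑ i ∈ Finset.range (j + M), ‖J n i‖
        - ∑ i ∈ Finset.range (j - M), ‖J n i‖)) := by
  have hM0 : (M : ℝ) ≠ 0 := by positivity
  let e : ℕ → ℕ → (Fin N → ℝ) := fun n j =>
    (M : ℝ)⁻¹ • ∑ m ∈ Finset.range n, ∑ i ∈ Finset.range M, J m (j / M * M + i)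
  let r : ℕ → ℕ → (Fin N → ℝ) := fun n j => J n j - (e (n + 1) j - e n j)
  have he : ∀ n j, e (n + 1) j - e n j
      = (M : ℝ)⁻¹ • ∑ i ∈ Finset.range M, J n (j / M * M + i) := by
    intro n j
    simp only [e]
    rw [Finset.sum_range_succ, smul_add, add_sub_cancel_left]
  have hdiv : ∀ b i, i < M → (b * M + i) / M = b := by
    intro b i hi
    rw [mul_comm, Nat.mul_add_div hM, Nat.div_eq_of_lt hi, add_zero]
  have hblock : ∀ n b, ∑ i ∈ Finset.range M, r n (b * M + i) = 0 := by
    intro n b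
    have h1 : ∀ i ∈ Finset.range M, r n (b * M + i) = J n (b * M + i)
        - (M : ℝ)⁻¹ • ∑ i ∈ Finset.range M, J n (b * M + i) := by
      intro i hi
      simp only [r]
      rw [he, hdiv b i (Finset.mem_range.1 hi)]
    rw [Finset.sum_congr rfl h1, Finset.sum_sub_distrib, Finset.sum_const, Finset.card_range,
      ← Nat.cast_smul_eq_nsmul ℝ, smul_smul, mul_inv_cancel₀ hM0, one_smul, sub_self]
  have hblocks : ∀ n b, ∑ i ∈ Finset.range (b * M), r n i = 0 := by
    intro n b
    induction b with
    | zero => simp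
    | succ b ih => rw [Nat.succ_mul, Finset.sum_range_add, ih, hblock, add_zero]
  refine ⟨fun n j => ∑ i ∈ Finset.range j, r n i, e, fun j => by simp [e], fun n => by simp,
    fun n j => ?_, fun n j => rfl, fun n j => ?_⟩
  · simp only [Finset.sum_range_succ, add_sub_cancel_left, r]
    abel
  · obtain ⟨b, hb⟩ : ∃ b, b = j / M := ⟨_, rfl⟩
    obtain ⟨i0, hi0⟩ : ∃ i0, i0 = j % M := ⟨_, rfl⟩
    have hj : j = b * M + i0 := by rw [hb, hi0, mul_comm]; exact (Nat.div_add_mod j M).symm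
    have hlt : i0 < M := hi0 ▸ Nat.mod_lt j hM
    have hr : ∀ i ∈ Finset.range M, ‖r n (b * M + i)‖ ≤ ‖J n (b * M + i)‖
        + (M : ℝ)⁻¹ * ∑ i ∈ Finset.range M, ‖J n (b * M + i)‖ := by
      intro i hi
      simp only [r]
      rw [he, hdiv b i (Finset.mem_range.1 hi)]
      refine (norm_sub_le _ _).trans ?_
      rw [norm_smul, Real.norm_of_nonneg (by positivity)]
      gcongr
      exact norm_sum_le _ _
    have h2 : ∑ i ∈ Finset.range M, ‖J n (b * M + i)‖ ≤ ∑ i ∈ Finset.range (j + M), ‖J n i‖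
        - ∑ i ∈ Finset.range (j - M), ‖J n i‖ := by
      have e1 := Finset.sum_range_add (fun i => ‖J n i‖) (b * M) M
      have e2 : ∑ i ∈ Finset.range (b * M + M), ‖J n i‖ ≤ ∑ i ∈ Finset.range (j + M), ‖J n i‖ :=
        Finset.sum_le_sum_of_subset_of_nonneg (Finset.range_mono (by omega))
          fun _ _ _ => norm_nonneg _
      have e3 : ∑ i ∈ Finset.range (j - M), ‖J n i‖ ≤ ∑ i ∈ Finset.range (b * M), ‖J n i‖ :=
        Finset.sum_le_sum_of_subset_of_nonneg (Finset.range_mono (by omega))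
          fun _ _ _ => norm_nonneg _
      linarith
    refine le_trans ?_ (mul_le_mul_of_nonneg_left h2 (by norm_num))
    show ‖∑ i ∈ Finset.range j, r n i‖ ≤ _
    rw [hj, Finset.sum_range_add, hblocks, zero_add]
    calc ‖∑ i ∈ Finset.range i0, r n (b * M + i)‖
        ≤ ∑ i ∈ Finset.range i0, ‖r n (b * M + i)‖ := norm_sum_le _ _
      _ ≤ ∑ i ∈ Finset.range M, ‖r n (b * M + i)‖ :=
          Finset.sum_le_sum_of_subset_of_nonneg (Finset.range_mono hlt.le)
            fun _ _ _ => norm_nonneg _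
      _ ≤ _ := Finset.sum_le_sum hr
      _ = _ := by
          rw [Finset.sum_add_distrib, Finset.sum_const, Finset.card_range, nsmul_eq_mul,
            ← mul_assoc, mul_inv_cancel₀ hM0]
          ring

end Glimm

namespace Glimm

/-! ### Grid functions -/

variable {N : ℕ} {F : (Fin N → ℝ) → (Fin N → ℝ)} {P : Fin N → ℝ}

/-- Translating a monotone function with values in `[0, A]` by `h` changes its integral by at most
`h * A`. -/
lemma mono_shift {g : ℝ → ℝ} (hg : Monotone g) {A : ℝ} (h0 : ∀ x, 0 ≤ g x) (hA : ∀ x, g x ≤ A)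
    {h : ℝ} (hh : 0 ≤ h) (a b : ℝ) :
    ∫⁻ x in Icc a b, ENNReal.ofReal (g (x + h) - g x) ≤ ENNReal.ofReal (h * A) := by
  rcases lt_or_ge b a with hab | hab
  · simp [Icc_eq_empty_of_lt hab]
  have hg' : Monotone fun x => g (x + h) := fun x y hxy => hg (by linarith)
  have i1 : ∀ p q : ℝ, IntervalIntegrable g volume p q := fun p q => hg.intervalIntegrable
  have i2 : IntervalIntegrable (fun x => g (x + h)) volume a b := hg'.intervalIntegrable
  have key : ∫ x in a..b, (g (x + h) - g x) ≤ h * A := by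
    rw [intervalIntegral.integral_sub i2 (i1 a b), intervalIntegral.integral_comp_add_right,
      intervalIntegral.integral_interval_sub_interval_comm (i1 _ _) (i1 _ _) (i1 _ _)]
    have h1 : 0 ≤ ∫ x in a..a + h, g x :=
      intervalIntegral.integral_nonneg (by linarith) fun x _ => h0 x
    have h2 : ∫ x in b..b + h, g x ≤ ∫ x in b..b + h, A :=
      intervalIntegral.integral_mono_on (by linarith) (i1 _ _) (by simp) fun x _ => hA x
    rw [intervalIntegral.integral_const, add_sub_cancel_left, smul_eq_mul] at h2
    rw [intervalIntegral.integral_symm a, intervalIntegral.integral_symm b]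
    linarith
  rw [Measure.restrict_congr_set Ioc_ae_eq_Icc.symm, ← ofReal_integral_eq_lintegral_ofReal]
  · rw [← intervalIntegral.integral_of_le hab]
    exact ENNReal.ofReal_le_ofReal key
  · exact (i2.sub (i1 a b)).1
  · exact Eventually.of_forall fun x => sub_nonneg.2 (hg (by linarith))

/-- The index of the grid cell of size `d`, counted from `-R`, containing `x`; points to the left
of `-R` belong to cell `0`. -/
noncomputable def ix (d R x : ℝ) : ℕ := ⌊(x + R) / d⌋₊

lemma ix_mono {d : ℝ} (hd : 0 < d) (R : ℝ) : Monotone (ix d R) := fun x y h =>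
  Nat.floor_mono (by gcongr)

lemma measurable_ix (d R : ℝ) : Measurable (ix d R) :=
  Nat.measurable_floor.comp ((measurable_id.add_const R).div_const d)

lemma ix_sub {d : ℝ} (hd : 0 < d) (R x : ℝ) (m : ℕ) : ix d R (x - m * d) = ix d R x - m := by
  have : (x - m * d + R) / d = (x + R) / d - m := by field_simp; ring
  rw [ix, this, Nat.floor_sub_natCast, ix]

lemma ix_add {d : ℝ} (hd : 0 < d) {R x : ℝ} (hx : 0 ≤ x + R) (m : ℕ) :
    ix d R (x + m * d) = ix d R x + m := by
  have : (x + m * d + R) / d = (x + R) / d + m := by field_simp; ring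
  rw [ix, this, Nat.floor_add_natCast (by positivity), ix]

lemma ix_neg {d : ℝ} (hd : 0 < d) {R x : ℝ} (hx : x + R < d) : ix d R x = 0 :=
  Nat.floor_eq_zero.2 ((div_lt_one hd).2 hx)

lemma ix_bounds {d : ℝ} (hd : 0 < d) {R x : ℝ} (hx : 0 ≤ x + R) :
    ix d R x * d ≤ x + R ∧ x + R < ix d R x * d + d := by
  have h1 := Nat.floor_le (a := (x + R) / d) (by positivity)
  have h2 := Nat.lt_floor_add_one ((x + R) / d)
  rw [le_div_iff₀ hd] at h1
  rw [div_lt_iff₀ hd] at h2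
  exact ⟨h1, by rw [ix]; linarith⟩

/-- The cumulative sums of a nonnegative sequence, read on the grid, are monotone. -/
lemma mono_cum {d : ℝ} (hd : 0 < d) (R : ℝ) {q : ℕ → ℝ} (hq : ∀ j, 0 ≤ q j) :
    Monotone fun x => ∑ i ∈ Finset.range (ix d R x), q i := fun _ _ h =>
  Finset.sum_le_sum_of_subset_of_nonneg (Finset.range_mono (ix_mono hd R h)) fun i _ _ => hq i

lemma cell_L1 {d : ℝ} (hd : 0 < d) (R : ℝ) {q : ℕ → ℝ} (hq : ∀ j, 0 ≤ q j) (h0 : q 0 = 0)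
    {A : ℝ} (hA : ∀ L, ∑ j ∈ Finset.range L, q j ≤ A) (a b : ℝ) :
    ∫⁻ x in Icc a b, ENNReal.ofReal (q (ix d R x)) ≤ ENNReal.ofReal (d * A) := by
  refine le_trans (lintegral_mono fun x => ?_) (mono_shift (mono_cum hd R hq)
    (fun x => Finset.sum_nonneg fun i _ => hq i) (fun x => hA _) hd.le a b)
  apply ENNReal.ofReal_le_ofReal
  rcases lt_or_ge (x + R) 0 with hx | hx
  · rw [ix_neg hd (by linarith : x + R < d), ix_neg hd (by linarith : x + d + R < d), h0]; simp
  · have := ix_add hd hx 1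
    rw [Nat.cast_one, one_mul] at this
    simp only [this]
    rw [Finset.sum_range_succ]
    simp

/-- The function on the plane which is constant on grid cells, with values given by an array. -/
noncomputable def cell {E : Type*} (d R : ℝ) (a : ℕ → ℕ → E) (t x : ℝ) : E :=
  a (ix d 0 t) (ix d R x)

lemma measurable_cell {E : Type*} [MeasurableSpace E] (d R : ℝ) (a : ℕ → ℕ → E) :
    Measurable fun z : ℝ × ℝ => cell d R a z.1 z.2 := by
  have h1 : Measurable fun p : ℕ × ℕ => a p.1 p.2 := Measurable.of_discrete
  exact h1.comp (((measurable_ix d 0).comp measurable_fst).prodMk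
    ((measurable_ix d R).comp measurable_snd))

/-- The properties of the approximate solutions used for compactness: bounded variation in space
and approximate Lipschitz continuity in time with values in `L¹`. -/
structure Approx (F : (Fin N → ℝ) → (Fin N → ℝ)) (P : Fin N → ℝ) (ε A d : ℝ)
    (V : ℝ → ℝ → (Fin N → ℝ)) : Prop where
  meas : Measurable fun z : ℝ × ℝ => V z.1 z.2
  measF : Measurable fun z : ℝ × ℝ => F (V z.1 z.2)
  near : ∀ t x, ‖V t x - P‖ ≤ ε
  var : ∀ t, ∃ g : ℝ → ℝ, Monotone g ∧ (∀ x, 0 ≤ g x) ∧ (∀ x, g x ≤ A) ∧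
    ∀ x y, x ≤ y → ‖V t y - V t x‖ ≤ g y - g x
  time : ∀ s t a b, 0 ≤ s → s ≤ t →
    ∫⁻ x in Icc a b, ‖V t x - V s x‖ₑ ≤ ENNReal.ofReal (A * (t - s + d))

lemma norm_sub_le_sum {E : Type*} [NormedAddCommGroup E] (w : ℕ → E) {i j : ℕ} (h : i ≤ j) :
    ‖w j - w i‖ ≤ ∑ k ∈ Finset.range j, ‖w (k + 1) - w k‖
      - ∑ k ∈ Finset.range i, ‖w (k + 1) - w k‖ := by
  induction j, h using Nat.le_induction with
  | base => simp
  | succ j _ ih =>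
    rw [Finset.sum_range_succ]
    have := norm_sub_le_norm_sub_add_norm_sub (w (j + 1)) (w j) (w i)
    linarith

lemma Scheme.approx {ε A : ℝ} {M : ℕ} {W : ℕ → (Fin N → ℝ)} {u J : ℕ → ℕ → (Fin N → ℝ)}
    (h : Scheme F P ε A M W u J) {d : ℝ} (hd : 0 < d) (R : ℝ) :
    Approx F P ε A d (cell d R u) where
  meas := measurable_cell d R u
  measF := measurable_cell d R fun n j => F (u n j)
  near := fun t x => h.near _ _
  var := fun t => ⟨_, mono_cum hd R (q := fun k => ‖u (ix d 0 t) (k + 1) - u (ix d 0 t) k‖)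
    fun _ => norm_nonneg _, fun x => Finset.sum_nonneg fun _ _ => norm_nonneg _,
    fun x => h.var _ _, fun x y hxy => norm_sub_le_sum (u (ix d 0 t)) (ix_mono hd R hxy)⟩
  time := by
    intro s t a b hs hst
    have hA0 : 0 ≤ A := by simpa using h.var 0 0
    have hm : ∀ n m L, ∑ j ∈ Finset.range L, ‖u (n + m) j - u n j‖ ≤ m * A := by
      intro n m L
      induction m with
      | zero => simp
      | succ m ih =>
        calc _ ≤ ∑ j ∈ Finset.range L, (‖u (n + m + 1) j - u (n + m) j‖
              + ‖u (n + m) j - u n j‖) :=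
            Finset.sum_le_sum fun j _ => norm_sub_le_norm_sub_add_norm_sub _ _ _
          _ ≤ _ := by
            rw [Finset.sum_add_distrib]
            have := h.time (n + m) L
            push_cast
            linarith
    obtain ⟨m, hm'⟩ := Nat.exists_eq_add_of_le (ix_mono hd 0 hst)
    have hmd : m * d ≤ t - s + d := by
      have h1 := (ix_bounds hd (by linarith : 0 ≤ t + 0)).1
      have h2 := (ix_bounds hd (by linarith : 0 ≤ s + 0)).2
      rw [hm'] at h1
      push_cast at h1
      linarith
    have key := cell_L1 hd R (q := fun j => ‖u (ix d 0 s + m) j - u (ix d 0 s) j‖)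
      (fun _ => norm_nonneg _) (by simp [h.left]) (hm _ _) a b
    refine le_trans (le_of_eq ?_) (key.trans (ENNReal.ofReal_le_ofReal ?_))
    · refine lintegral_congr fun x => ?_
      rw [cell, cell, hm', ofReal_norm]
    · nlinarith

end Glimm

namespace Glimm

/-! ### Consistency of the scheme with the weak formulation -/

variable {N : ℕ} {F : (Fin N → ℝ) → (Fin N → ℝ)} {P : Fin N → ℝ}

/-- A Lipschitz test function on the plane, vanishing outside the open square of half-side `k - 1`.
The margin ensures that translates by vectors of norm at most `1` vanish outside the square of
half-side `k`. -/
structure Test (ψ : ℝ × ℝ → ℝ) (L k : ℝ) : Prop where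
  cont : Continuous ψ
  L_nonneg : 0 ≤ L
  k_nonneg : 0 ≤ k
  lip : ∀ z w, |ψ z - ψ w| ≤ L * ‖z - w‖
  supp : ∀ z, k - 1 < ‖z‖ → ψ z = 0

lemma Test.compact {ψ : ℝ × ℝ → ℝ} {L k : ℝ} (h : Test ψ L k) : HasCompactSupport ψ :=
  HasCompactSupport.intro (isCompact_closedBall 0 (k - 1)) fun z hz =>
    h.supp z (by simpa using hz)

lemma Test.diff {ψ : ℝ × ℝ → ℝ} {L k : ℝ} (h : Test ψ L k) {w : ℝ × ℝ} (hw : ‖w‖ ≤ 1)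
    (z : ℝ × ℝ) : |ψ (z - w) - ψ z| ≤ (Metric.closedBall (0 : ℝ × ℝ) k).indicator
      (fun _ => L * ‖w‖) z := by
  by_cases hz : z ∈ Metric.closedBall (0 : ℝ × ℝ) k
  · rw [indicator_of_mem hz]
    have := h.lip (z - w) z
    rwa [sub_sub_cancel_left, norm_neg] at this
  · rw [indicator_of_notMem hz]
    have hz' : k < ‖z‖ := by simpa using hz
    have h1 : ‖z‖ ≤ ‖z - w‖ + ‖w‖ := by simpa using norm_add_le (z - w) w
    rw [h.supp z (by linarith), h.supp (z - w) (by linarith)]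
    simp

lemma locInt {V : ℝ × ℝ → (Fin N → ℝ)} (hV : Measurable V) {g : ℝ × ℝ → ℝ} (hg : Continuous g)
    (h : ∀ z, ‖V z‖ ≤ g z) : LocallyIntegrable V volume := by
  refine (hg.locallyIntegrable (μ := volume)).mono hV.aestronglyMeasurable
    (Eventually.of_forall fun z => (h z).trans (le_abs_self _))

lemma shift_integrable {ψ : ℝ × ℝ → ℝ} (hψ : Continuous ψ) (hc : HasCompactSupport ψ)
    {V : ℝ × ℝ → (Fin N → ℝ)} (hV : LocallyIntegrable V volume) (w : ℝ × ℝ) :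
    Integrable (fun z => ψ (z - w) • V z) volume :=
  hV.integrable_smul_left_of_hasCompactSupport (hψ.comp (continuous_id.sub continuous_const))
    (hc.comp_homeomorph (Homeomorph.subRight w))

/-- Summation by parts: a translation of the plane moves a difference to the test function. -/
lemma shift_integral {ψ : ℝ × ℝ → ℝ} (hψ : Continuous ψ) (hc : HasCompactSupport ψ)
    {V : ℝ × ℝ → (Fin N → ℝ)} (hV : LocallyIntegrable V volume) (w : ℝ × ℝ) :
    Integrable (fun z => ψ z • (V (z + w) - V z)) volume ∧
    ∫ z, ψ z • (V (z + w) - V z) = ∫ z, (ψ (z - w) - ψ z) • V z := by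
  have i0 : Integrable (fun z => ψ z • V z) volume :=
    hV.integrable_smul_left_of_hasCompactSupport hψ hc
  have i1 := shift_integrable hψ hc hV w
  have i2 : Integrable (fun z => ψ z • V (z + w)) volume := by
    simpa using i1.comp_add_right w
  simp only [smul_sub, sub_smul]
  refine ⟨i2.sub i0, ?_⟩
  rw [integral_sub i2 i0, integral_sub i1 i0]
  congr 1
  have := integral_add_right_eq_self (μ := (volume : Measure (ℝ × ℝ))) (fun z => ψ (z - w) • V z) w
  simpa using this

lemma pair_le {ψ : ℝ × ℝ → ℝ} {L k : ℝ} (h : Test ψ L k) {w : ℝ × ℝ} (hw : ‖w‖ ≤ 1)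
    {V : ℝ × ℝ → (Fin N → ℝ)} {Q : ℝ} (hQ0 : 0 ≤ Q)
    (hQ : ∫⁻ z in Metric.closedBall (0 : ℝ × ℝ) k, ‖V z‖ₑ ≤ ENNReal.ofReal Q) :
    ‖∫ z, (ψ (z - w) - ψ z) • V z‖ ≤ L * ‖w‖ * Q := by
  have hL := h.L_nonneg
  have key : ‖∫ z, (ψ (z - w) - ψ z) • V z‖ₑ ≤ ENNReal.ofReal (L * ‖w‖ * Q) := by
    refine (enorm_integral_le_lintegral_enorm _).trans ?_
    have h1 : ∀ z, ‖(ψ (z - w) - ψ z) • V z‖ₑ ≤ (Metric.closedBall (0 : ℝ × ℝ) k).indicator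
        (fun z => ENNReal.ofReal (L * ‖w‖) * ‖V z‖ₑ) z := by
      intro z
      have hd := h.diff hw z
      rw [enorm_smul]
      by_cases hz : z ∈ Metric.closedBall (0 : ℝ × ℝ) k
      · rw [indicator_of_mem hz] at hd ⊢
        gcongr
        rw [← ofReal_norm]
        exact ENNReal.ofReal_le_ofReal hd
      · rw [indicator_of_notMem hz] at hd ⊢
        have : ψ (z - w) - ψ z = 0 := abs_eq_zero.1 (le_antisymm hd (abs_nonneg _))
        rw [this]; simp
    refine (lintegral_mono h1).trans ?_
    rw [lintegral_indicator Metric.isClosed_closedBall.measurableSet,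
      lintegral_const_mul' _ _ ENNReal.ofReal_ne_top,
      ENNReal.ofReal_mul (by positivity : 0 ≤ L * ‖w‖)]
    gcongr
  rw [← ofReal_norm] at key
  exact (ENNReal.ofReal_le_ofReal_iff (by positivity)).1 key

lemma closedBall_eq (k : ℝ) : Metric.closedBall (0 : ℝ × ℝ) k = Icc (-k) k ×ˢ Icc (-k) k := by
  have := closedBall_prod_same (0 : ℝ) (0 : ℝ) k
  rw [Real.closedBall_eq_Icc, zero_sub, zero_add] at this
  exact this.symm

/-- Integration over a square, from a bound uniform in time. -/
lemma box_le {V : ℝ × ℝ → (Fin N → ℝ)} (hV : Measurable V) {k Q : ℝ} (hk : 0 ≤ k)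
    (h : ∀ t ∈ Icc (-k) k, ∫⁻ x in Icc (-k) k, ‖V (t, x)‖ₑ ≤ ENNReal.ofReal Q) :
    ∫⁻ z in Metric.closedBall (0 : ℝ × ℝ) k, ‖V z‖ₑ ≤ ENNReal.ofReal (2 * k * Q) := by
  rw [closedBall_eq, Measure.volume_eq_prod, setLIntegral_prod _ hV.enorm.aemeasurable]
  refine (setLIntegral_mono' measurableSet_Icc h).trans ?_
  rw [setLIntegral_const, Real.volume_Icc, mul_comm, ENNReal.ofReal_mul (by positivity)]
  gcongr
  linarith

/-- The restriction to nonnegative times of a function of `(t, x)`. -/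
noncomputable def pos (V : ℝ → ℝ → (Fin N → ℝ)) (z : ℝ × ℝ) : Fin N → ℝ :=
  if 0 ≤ z.1 then V z.1 z.2 else 0

lemma measurable_pos {V : ℝ → ℝ → (Fin N → ℝ)} (h : Measurable fun z : ℝ × ℝ => V z.1 z.2) :
    Measurable (pos V) :=
  Measurable.ite (measurableSet_le measurable_const measurable_fst) h measurable_const

lemma pos_le {V : ℝ → ℝ → (Fin N → ℝ)} {z : ℝ × ℝ} {b : ℝ} (hb : 0 ≤ b)
    (h : 0 ≤ z.1 → ‖V z.1 z.2‖ ≤ b) : ‖pos V z‖ ≤ b := by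
  unfold pos
  split_ifs with hz
  · exact h hz
  · simpa using hb

/-- The initial layer of a grid function. -/
noncomputable def layer (d : ℝ) (w : ℝ → (Fin N → ℝ)) (z : ℝ × ℝ) : Fin N → ℝ :=
  if -d ≤ z.1 ∧ z.1 < 0 then w z.2 else 0

lemma measurable_layer (d : ℝ) {w : ℝ → (Fin N → ℝ)} (h : Measurable w) :
    Measurable (layer d w) :=
  Measurable.ite ((measurableSet_le measurable_const measurable_fst).inter
    (measurableSet_lt measurable_fst measurable_const)) (h.comp measurable_snd) measurable_const

/-- The error array of the accumulated deviations, cut off to the left of the grid. -/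
noncomputable def cut (d R : ℝ) (e : ℕ → ℕ → (Fin N → ℝ)) (t x : ℝ) : Fin N → ℝ :=
  if 0 ≤ x + R then cell d R e t x else 0

lemma pointwise_identity {ε A : ℝ} {M : ℕ} {W : ℕ → (Fin N → ℝ)} {u J c e : ℕ → ℕ → (Fin N → ℝ)}
    (h : Scheme F P ε A M W u J) {d : ℝ} (hd : 0 < d) (R : ℝ)
    (he : ∀ j, e 0 j = 0) (hc : ∀ n, c n 0 = 0)
    (hJ : ∀ n j, J n j = c n (j + 1) - c n j + (e (n + 1) j - e n j)) (z : ℝ × ℝ) :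
    pos (cell d R u) (z + (d, 0)) - pos (cell d R u) z
      - (pos (fun t x => F (cell d R u t x)) (z + (0, -d))
        - pos (fun t x => F (cell d R u t x)) z)
    = pos (cell d R c) (z + (0, d)) - pos (cell d R c) z
      + (pos (cut d R e) (z + (d, 0)) - pos (cut d R e) z)
      + layer d (fun x => W (ix d R x)) z := by
  obtain ⟨t, x⟩ := z
  have hxm : ix d R (x + -d) = ix d R x - 1 := by
    have := ix_sub hd R x 1
    rwa [Nat.cast_one, one_mul] at this
  simp only [pos, layer, cut, cell, Prod.mk_add_mk, add_zero, hxm]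
  rcases lt_or_ge t 0 with ht | ht
  · simp only [not_le.2 ht, if_false, ht, and_true, sub_zero]
    rcases lt_or_ge t (-d) with ht' | ht'
    · simp [not_le.2 ht', not_le.2 (by linarith : t + d < 0)]
    · have h0 : ix d 0 (t + d) = 0 := ix_neg hd (by linarith)
      simp [ht', (by linarith : 0 ≤ t + d), h0, he, h.init]
  · have h1 : ix d 0 (t + d) = ix d 0 t + 1 := by
      have := ix_add hd (R := 0) (by linarith : 0 ≤ t + 0) 1
      rwa [Nat.cast_one, one_mul] at this
    generalize ix d 0 t = n at h1
    simp only [ht, (by linarith : 0 ≤ t + d), if_true, not_lt.2 ht, and_false, if_false, h1,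
      add_zero]
    rcases lt_or_ge (x + R) 0 with hx | hx
    · simp [not_le.2 hx, ix_neg hd (by linarith : x + R < d),
        ix_neg hd (by linarith : x + d + R < d), h.left, hc]
    · have h2 : ix d R (x + d) = ix d R x + 1 := by
        have := ix_add hd hx 1
        rwa [Nat.cast_one, one_mul] at this
      simp only [hx, if_true, h2]
      rw [← hJ]
      cases ix d R x with
      | zero => simp [h.left, h.J_zero]
      | succ j =>
        rw [h.upwind, Nat.add_sub_cancel]
        abel

/-- The weak formulation tested on the approximate solution, up to the contributions of the
arrays `c` and `e`. -/
lemma weak_identity {ε A : ℝ} {M : ℕ} {W : ℕ → (Fin N → ℝ)} {u J c e : ℕ → ℕ → (Fin N → ℝ)}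
    (h : Scheme F P ε A M W u J) {d : ℝ} (hd : 0 < d) (R : ℝ)
    (he : ∀ j, e 0 j = 0) (hc : ∀ n, c n 0 = 0)
    (hJ : ∀ n j, J n j = c n (j + 1) - c n j + (e (n + 1) j - e n j))
    {BF : ℝ} (hBF : ∀ v, ‖v - P‖ ≤ ε → ‖F v‖ ≤ BF) {Bc Be : ℝ} (hBc : ∀ n j, ‖c n j‖ ≤ Bc)
    (hBe : ∀ n j, ‖e n j‖ ≤ Be * Real.sqrt n)
    {ψ : ℝ × ℝ → ℝ} {L k : ℝ} (hψ : Test ψ L k) :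
    (∫ z, (ψ (z - (d, 0)) - ψ z) • pos (cell d R u) z)
      - (∫ z, (ψ (z - (0, -d)) - ψ z) • pos (fun t x => F (cell d R u t x)) z)
    = (∫ z, (ψ (z - (0, d)) - ψ z) • pos (cell d R c) z)
      + (∫ z, (ψ (z - (d, 0)) - ψ z) • pos (cut d R e) z)
      + ∫ z, ψ z • layer d (fun x => W (ix d R x)) z := by
  have hu : ∀ n j, ‖u n j‖ ≤ ε + ‖P‖ := fun n j => by
    have := norm_add_le (u n j - P) P
    rw [sub_add_cancel] at this
    linarith [h.near n j]
  have hBe0 : 0 ≤ Be := by simpa using (norm_nonneg _).trans (hBe 1 0)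
  have l1 : LocallyIntegrable (pos (cell d R u)) volume :=
    locInt (measurable_pos (measurable_cell d R u)) (continuous_const (y := ε + ‖P‖))
      fun z => pos_le ((norm_nonneg _).trans (hu 0 0)) fun _ => hu _ _
  have l2 : LocallyIntegrable (pos fun t x => F (cell d R u t x)) volume :=
    locInt (measurable_pos (measurable_cell d R fun n j => F (u n j))) (continuous_const (y := BF))
      fun z => pos_le ((norm_nonneg _).trans (hBF _ (h.near 0 0))) fun _ => hBF _ (h.near _ _)
  have l3 : LocallyIntegrable (pos (cell d R c)) volume :=
    locInt (measurable_pos (measurable_cell d R c)) (continuous_const (y := Bc))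
      fun z => pos_le ((norm_nonneg _).trans (hBc 0 0)) fun _ => hBc _ _
  have l4 : LocallyIntegrable (pos (cut d R e)) volume := by
    refine locInt (g := fun z => Be * Real.sqrt (z.1 / d)) (measurable_pos (Measurable.ite
      (measurableSet_le measurable_const (measurable_snd.add_const R)) (measurable_cell d R e)
      measurable_const)) (by fun_prop) fun z => pos_le (by positivity) fun hz => ?_
    unfold cut
    split_ifs
    · refine (hBe _ _).trans ?_
      gcongr
      rw [le_div_iff₀ hd]
      simpa using (ix_bounds hd (by linarith : 0 ≤ z.1 + 0)).1
    · simpa using mul_nonneg hBe0 (Real.sqrt_nonneg _)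
  have l5 : LocallyIntegrable (layer d fun x => W (ix d R x)) volume := by
    refine locInt (measurable_layer d ?_) (continuous_const (y := ε + ‖P‖)) fun z => ?_
    · exact Measurable.of_discrete.comp (measurable_ix d R)
    · unfold layer
      split_ifs
      · rw [← h.init]; exact hu 0 _
      · simpa using (norm_nonneg _).trans (hu 0 0)
  have s1 := shift_integral hψ.cont hψ.compact l1 (d, 0)
  have s2 := shift_integral hψ.cont hψ.compact l2 (0, -d)
  have s3 := shift_integral hψ.cont hψ.compact l3 (0, d)
  have s4 := shift_integral hψ.cont hψ.compact l4 (d, 0)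
  have i5 : Integrable (fun z => ψ z • layer d (fun x => W (ix d R x)) z) volume :=
    l5.integrable_smul_left_of_hasCompactSupport hψ.cont hψ.compact
  have s34 := s3.1.add s4.1
  rw [Pi.add_def] at s34
  rw [← s1.2, ← s2.2, ← s3.2, ← s4.2, ← integral_sub s1.1 s2.1, ← integral_add s3.1 s4.1,
    ← integral_add s34 i5]
  refine integral_congr_ae (Eventually.of_forall fun z => ?_)
  beta_reduce
  rw [← smul_sub, ← smul_add, ← smul_add, pointwise_identity h hd R he hc hJ z]

lemma norm_time (d : ℝ) : ‖((d, 0) : ℝ × ℝ)‖ = |d| := by simp [Prod.norm_def]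

lemma norm_space (d : ℝ) : ‖((0, d) : ℝ × ℝ)‖ = |d| := by simp [Prod.norm_def]

lemma weak_error {ε A : ℝ} {M : ℕ} (hM : 0 < M) {W : ℕ → (Fin N → ℝ)}
    {u J : ℕ → ℕ → (Fin N → ℝ)}
    (h : Scheme F P ε A M W u J) {d : ℝ} (hd : 0 < d) (hd1 : d ≤ 1) (R : ℝ)
    {BF : ℝ} (hBF : ∀ v, ‖v - P‖ ≤ ε → ‖F v‖ ≤ BF)
    {ψ : ℝ × ℝ → ℝ} {L k : ℝ} (hψ : Test ψ L k) :
    ‖(∫ z, (ψ (z - (d, 0)) - ψ z) • pos (cell d R u) z)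
      - (∫ z, (ψ (z - (0, -d)) - ψ z) • pos (fun t x => F (cell d R u t x)) z)
      - ∫ z, ψ z • layer d (fun x => W (ix d R x)) z‖
    ≤ d * (L * (2 * k * (4 * A * (M * d)))
      + L * (2 * k * (2 * k * (A * Real.sqrt (N * (k / d)) / M)))) := by
  obtain ⟨c, e, he0, hc0, hJ, he, hc⟩ := decomposition hM J
  have hA0 : 0 ≤ A := by simpa using h.var 0 0
  have hL := hψ.L_nonneg
  have hk := hψ.k_nonneg
  have hM0 : (0 : ℝ) < M := by exact_mod_cast hM
  have hBc : ∀ n j, ‖c n j‖ ≤ 2 * A := fun n j => (hc n j).trans (by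
    have h1 := h.J_sum n (j + M)
    have h2 : 0 ≤ ∑ i ∈ Finset.range (j - M), ‖J n i‖ := Finset.sum_nonneg fun _ _ => norm_nonneg _
    linarith)
  have hBe : ∀ n j, ‖e n j‖ ≤ A * Real.sqrt (N * n) / M := fun n j => by
    rw [he, norm_smul, Real.norm_of_nonneg (by positivity), div_eq_inv_mul]
    gcongr
    exact h.block n (j / M)
  have hBe' : ∀ n j, ‖e n j‖ ≤ A * Real.sqrt N / M * Real.sqrt n := fun n j => by
    refine (hBe n j).trans (le_of_eq ?_)
    rw [Real.sqrt_mul (by positivity)]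
    ring
  rw [weak_identity h hd R he0 hc0 hJ hBF hBc hBe' hψ, add_sub_cancel_right]
  have b3 : ‖∫ z, (ψ (z - (0, d)) - ψ z) • pos (cell d R c) z‖
      ≤ L * ‖((0, d) : ℝ × ℝ)‖ * (2 * k * (4 * A * (M * d))) := by
    refine pair_le hψ (by rw [norm_space, abs_of_pos hd]; exact hd1) (by positivity)
      (box_le (measurable_pos (measurable_cell d R c)) hk fun t _ => ?_)
    have hg : Monotone fun x => ∑ i ∈ Finset.range (ix d R (x - M * d)), 2 * ‖J (ix d 0 t) i‖ :=
      fun x y hxy => mono_cum hd R (q := fun i => 2 * ‖J (ix d 0 t) i‖) (fun _ => by positivity)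
        (by linarith : x - M * d ≤ y - M * d)
    have := mono_shift hg (A := 2 * A) (fun x => Finset.sum_nonneg fun _ _ => by positivity)
      (fun x => by rw [← Finset.mul_sum]; linarith [h.J_sum (ix d 0 t) (ix d R (x - M * d))])
      (by positivity : 0 ≤ 2 * (M * d)) (-k) k
    rw [(by ring : 2 * (M * d) * (2 * A) = 4 * A * (M * d))] at this
    refine le_trans (lintegral_mono fun x => ?_) this
    rw [← ofReal_norm]
    refine ENNReal.ofReal_le_ofReal (pos_le (sub_nonneg.2 (hg (by
      have : 0 ≤ M * d := by positivity
      linarith))) fun _ => ?_)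
    rcases lt_or_ge (x + R) 0 with hx | hx
    · simp only [cell]
      rw [ix_neg hd (by linarith : x + R < d), hc0, norm_zero]
      exact sub_nonneg.2 (hg (by
        have : 0 ≤ M * d := by positivity
        linarith))
    · refine (hc _ _).trans (le_of_eq ?_)
      rw [(by ring : x + 2 * (M * d) - M * d = x + M * d), ix_add hd hx, ix_sub hd,
        ← Finset.mul_sum, ← Finset.mul_sum]
      ring
  have b4 : ‖∫ z, (ψ (z - (d, 0)) - ψ z) • pos (cut d R e) z‖
      ≤ L * ‖((d, 0) : ℝ × ℝ)‖ * (2 * k * (2 * k * (A * Real.sqrt (N * (k / d)) / M))) := by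
    refine pair_le hψ (by rw [norm_time, abs_of_pos hd]; exact hd1) (by positivity)
      (box_le (measurable_pos (Measurable.ite
      (measurableSet_le measurable_const (measurable_snd.add_const R)) (measurable_cell d R e)
      measurable_const)) hk fun t ht => ?_)
    have hb : ∀ x, ‖pos (cut d R e) (t, x)‖ₑ
        ≤ ENNReal.ofReal (A * Real.sqrt (N * (k / d)) / M) := by
      intro x
      rw [← ofReal_norm]
      refine ENNReal.ofReal_le_ofReal (pos_le (by positivity) fun ht0 => ?_)
      unfold cut
      split_ifs
      · refine (hBe _ _).trans ?_
        gcongr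
        rw [le_div_iff₀ hd]
        have h1 := (ix_bounds hd (by linarith [ht0] : 0 ≤ t + 0)).1
        have h2 := ht.2
        linarith
      · rw [norm_zero]; positivity
    refine (lintegral_mono hb).trans ?_
    rw [setLIntegral_const, Real.volume_Icc, mul_comm, ← ENNReal.ofReal_mul (by linarith)]
    exact ENNReal.ofReal_le_ofReal (le_of_eq (by ring))
  rw [norm_space, abs_of_pos hd] at b3
  rw [norm_time, abs_of_pos hd] at b4
  refine (norm_add_le _ _).trans ?_
  linarith

end Glimm

namespace Glimm

/-! ### Initial data -/

variable {N : ℕ} {F : (Fin N → ℝ) → (Fin N → ℝ)} {P : Fin N → ℝ}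

lemma layer_error {ψ : ℝ × ℝ → ℝ} {L k : ℝ} (hψ : Test ψ L k) {d : ℝ} (hd : 0 < d)
    {w : ℝ → (Fin N → ℝ)} (hw : Measurable w) {B : ℝ} (hB : ∀ x, ‖w x‖ ≤ B) :
    ‖d⁻¹ • (∫ z, ψ z • layer d w z) - ∫ x, ψ (0, x) • w x‖ ≤ L * B * (2 * k) * d := by
  have hL := hψ.L_nonneg
  have hk := hψ.k_nonneg
  have hB0 : 0 ≤ B := (norm_nonneg _).trans (hB 0)
  have hψ0 : Integrable (fun x => ψ (0, x)) volume := by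
    refine (hψ.cont.comp (by fun_prop : Continuous fun x : ℝ => ((0 : ℝ), x)))
      |>.integrable_of_hasCompactSupport ?_
    refine HasCompactSupport.intro (isCompact_closedBall (0 : ℝ) (k - 1)) fun x hx =>
      hψ.supp _ ?_
    rw [norm_space]
    simpa using hx
  have hψw : Integrable (fun x => ψ (0, x) • w x) volume :=
    hψ0.smul_bdd B hw.aestronglyMeasurable (Eventually.of_forall hB)
  let χ : ℝ → ℝ := (Ico (-d) 0).indicator fun _ => 1
  have hχ : Integrable χ volume :=
    (integrable_indicator_iff measurableSet_Ico).2 (integrableOn_const (by simp) (by simp))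
  have hχd : ∫ t, χ t = d := by
    simp only [χ]
    rw [integral_indicator measurableSet_Ico]
    simp [hd.le]
  have hlay : ∀ z, layer d w z = χ z.1 • w z.2 := by
    intro z
    simp only [layer, χ, indicator, mem_Ico]
    split_ifs <;> simp
  have i2 : Integrable (fun z : ℝ × ℝ => χ z.1 • (ψ (0, z.2) • w z.2)) volume :=
    hχ.smul_prod hψw
  have e2 : ∫ z : ℝ × ℝ, χ z.1 • (ψ (0, z.2) • w z.2) = d • ∫ x, ψ (0, x) • w x := by
    rw [Measure.volume_eq_prod, integral_prod_smul χ (fun x => ψ (0, x) • w x), hχd]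
  have i1 : Integrable (fun z => ψ z • layer d w z) volume := by
    refine (locInt (measurable_layer d hw) (continuous_const (y := B)) fun z => ?_)
      |>.integrable_smul_left_of_hasCompactSupport hψ.cont hψ.compact
    unfold layer
    split_ifs
    · exact hB _
    · simpa using hB0
  have e3 : (∫ x, ψ (0, x) • w x) = d⁻¹ • ∫ z : ℝ × ℝ, χ z.1 • (ψ (0, z.2) • w z.2) := by
    rw [e2, smul_smul, inv_mul_cancel₀ hd.ne', one_smul]
  rw [e3, ← smul_sub, ← integral_sub i1 i2, norm_smul, Real.norm_of_nonneg (by positivity)]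
  have key : ‖∫ z, (ψ z • layer d w z - χ z.1 • (ψ (0, z.2) • w z.2))‖
      ≤ L * d * B * (volume : Measure (ℝ × ℝ)).real (Ico (-d) 0 ×ˢ Icc (-k) k) := by
    rw [← setIntegral_eq_integral_of_forall_compl_eq_zero (s := Ico (-d) 0 ×ˢ Icc (-k) k)]
    · refine norm_setIntegral_le_of_norm_le_const ?_ fun z hz => ?_
      · rw [Measure.volume_eq_prod, Measure.prod_prod]
        simp [ENNReal.mul_lt_top]
      · have h1 : χ z.1 = 1 := indicator_of_mem hz.1 _
        rw [hlay, h1, one_smul, one_smul, ← sub_smul, norm_smul]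
        have h2 := hψ.lip z (0, z.2)
        have h3 : ‖z - (0, z.2)‖ ≤ d := by
          have : z - (0, z.2) = (z.1, 0) := by ext <;> simp
          rw [this, norm_time, abs_le]
          exact ⟨hz.1.1, by linarith [hz.1.2]⟩
        gcongr
        · exact h2.trans (by gcongr)
        · exact hB _
    · intro z hz
      by_cases hz1 : z.1 ∈ Ico (-d) 0
      · have hz2 : k < |z.2| := by
          by_contra hcon
          exact hz ⟨hz1, abs_le.1 (not_lt.1 hcon)⟩
        have h4 : ψ z = 0 := hψ.supp z (by
          have := norm_snd_le z
          rw [Real.norm_eq_abs] at this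
          linarith)
        have h5 : ψ (0, z.2) = 0 := hψ.supp _ (by rw [norm_space]; linarith)
        rw [h4, h5]; simp
      · have h1 : χ z.1 = 0 := indicator_of_notMem hz1 _
        rw [hlay, h1]; simp
  have hvol : (volume : Measure (ℝ × ℝ)).real (Ico (-d) 0 ×ˢ Icc (-k) k) = d * (2 * k) := by
    rw [measureReal_def, Measure.volume_eq_prod, Measure.prod_prod, Real.volume_Ico,
      Real.volume_Icc, ← ENNReal.ofReal_mul (by linarith), ENNReal.toReal_ofReal]
    · ring
    · have : 0 ≤ d * (2 * k) := by positivity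
      linarith
  rw [hvol] at key
  calc _ ≤ d⁻¹ * (L * d * B * (d * (2 * k))) := by gcongr
    _ = _ := by field_simp

/-- Facts on a function of total variation at most `T`. -/
lemma bv_facts {U₀ : ℝ → (Fin N → ℝ)} {T : ℝ} (hT0 : 0 ≤ T)
    (hT : eVariationOn U₀ univ ≤ ENNReal.ofReal T) :
    (∀ x y, ‖U₀ x - U₀ y‖ ≤ T) ∧ (∀ᵐ x, ContinuousAt U₀ x) ∧
    (∀ d R : ℝ, 0 ≤ d → ∀ L, ∑ j ∈ Finset.range L,
      ‖U₀ (-R + (j + 1 : ℕ) * d) - U₀ (-R + j * d)‖ ≤ T) := by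
  refine ⟨fun x y => ?_, ?_, fun d R hd L => ?_⟩
  · have := (eVariationOn.edist_le U₀ (mem_univ x) (mem_univ y)).trans hT
    rwa [edist_eq_enorm_sub, ← ofReal_norm, ENNReal.ofReal_le_ofReal_iff hT0] at this
  · have hb : BoundedVariationOn U₀ univ := (hT.trans_lt ENNReal.ofReal_lt_top).ne
    filter_upwards [hb.locallyBoundedVariationOn.ae_differentiableAt] with x hx
    exact hx.continuousAt
  · have hm : Monotone fun j : ℕ => -R + j * d := fun i j hij => by
      have : (i : ℝ) ≤ j := by exact_mod_cast hij
      have := mul_le_mul_of_nonneg_right this hd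
      simp only; linarith
    have := (eVariationOn.sum_le (f := U₀) (n := L) hm fun i => mem_univ _).trans hT
    simp only [edist_eq_enorm_sub, ← ofReal_norm] at this
    rwa [← ENNReal.ofReal_sum_of_nonneg fun _ _ => norm_nonneg _,
      ENNReal.ofReal_le_ofReal_iff hT0] at this

/-- The sampled initial data converge at continuity points. -/
lemma sample_tendsto {U₀ : ℝ → (Fin N → ℝ)} {d R : ℕ → ℝ} (hd : ∀ n, 0 < d n)
    (hd0 : Tendsto d atTop (nhds 0)) (hR : Tendsto R atTop atTop) {x : ℝ}
    (hx : ContinuousAt U₀ x) :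
    Tendsto (fun n => U₀ (-R n + ix (d n) (R n) x * d n)) atTop (nhds (U₀ x)) := by
  refine hx.tendsto.comp ?_
  rw [tendsto_iff_norm_sub_tendsto_zero]
  refine squeeze_zero' (Eventually.of_forall fun _ => norm_nonneg _) ?_ hd0
  filter_upwards [hR.eventually_ge_atTop (-x)] with n hn
  have := ix_bounds (hd n) (by linarith : 0 ≤ x + R n)
  rw [Real.norm_eq_abs, abs_le]
  constructor <;> linarith [this.1, this.2]

end Glimm

namespace Glimm

/-! ### The sequence of approximate solutions -/

variable {N : ℕ} {F : (Fin N → ℝ) → (Fin N → ℝ)} {P : Fin N → ℝ}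

/-- Mesh `d = (ν + 1)⁻⁴` and blocks of `M = (ν + 1)³` cells: the width `M d` of a block tends to
zero, while the accumulated deviations `d ^ (-1/2) / M` do so as well. -/
lemma exists_approx (S : Sys N F P) {BF : ℝ} (hBF : ∀ v, ‖v - P‖ ≤ S.ε → ‖F v‖ ≤ BF)
    {U₀ : ℝ → (Fin N → ℝ)} {T : ℝ} (hT0 : 0 ≤ T)
    (hT : eVariationOn U₀ univ ≤ ENNReal.ofReal T)
    (hsm : ∀ x, Small S (U₀ x) (2 * S.Λ * T)) :
    ∃ (d : ℕ → ℝ) (V : ℕ → ℝ → ℝ → (Fin N → ℝ)), (∀ n, 0 < d n) ∧ (∀ n, d n ≤ 1) ∧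
      Tendsto d atTop (nhds 0) ∧
      (∀ n, Approx F P S.ε (6 * S.B * S.Λ * T) (d n) (V n)) ∧
      ∀ ψ L k, Test ψ L k → Tendsto (fun n => (d n)⁻¹ •
        ((∫ z, (ψ (z - (d n, 0)) - ψ z) • pos (V n) z)
          - ∫ z, (ψ (z - (0, -d n)) - ψ z) • pos (fun t x => F (V n t x)) z))
        atTop (nhds (∫ x, ψ (0, x) • U₀ x)) := by
  obtain ⟨hosc, hae, hsum⟩ := bv_facts hT0 hT
  let r : ℕ → ℝ := fun n => (n : ℝ) + 1
  have hr : ∀ n, 0 < r n := fun n => by simp only [r]; positivity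
  have hr1 : ∀ n, 1 ≤ r n := fun n => by simp [r]
  have hrT : Tendsto r atTop atTop := tendsto_atTop_add_const_right _ _ tendsto_natCast_atTop_atTop
  have hri : Tendsto (fun n => (r n)⁻¹) atTop (nhds 0) := hrT.inv_tendsto_atTop
  let d : ℕ → ℝ := fun n => (r n ^ 4)⁻¹
  let M : ℕ → ℕ := fun n => (n + 1) ^ 3
  have hM : ∀ n, 0 < M n := fun n => by simp only [M]; positivity
  have hMr : ∀ n, (M n : ℝ) = r n ^ 3 := fun n => by simp [M, r]
  have hd : ∀ n, 0 < d n := fun n => by have := hr n; simp only [d]; positivity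
  have hd1 : ∀ n, d n ≤ 1 := fun n => inv_le_one_of_one_le₀ (one_le_pow₀ (hr1 n))
  have hd0 : Tendsto d atTop (nhds 0) := by
    have := hri.pow 4
    simpa [d] using this
  let W : ℕ → ℕ → (Fin N → ℝ) := fun n j => U₀ (-r n + j * d n)
  have hs : ∀ n, ∃ u J, Scheme F P S.ε (6 * S.B * S.Λ * T) (M n) (W n) u J := fun n =>
    scheme S (hM n) (hsm _) (hsum (d n) (r n) (hd n).le)
  choose u J hsch using hs
  refine ⟨d, fun n => cell (d n) (r n) (u n), hd, hd1, hd0,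
    fun n => (hsch n).approx (hd n) (r n), ?_⟩
  intro ψ L k hψ
  let A := 6 * S.B * S.Λ * T
  let w : ℕ → ℝ → (Fin N → ℝ) := fun n x => W n (ix (d n) (r n) x)
  have hB : ∀ x, ‖U₀ x‖ ≤ ‖U₀ 0‖ + T := fun x => by
    have := norm_le_norm_add_norm_sub (U₀ 0) (U₀ x)
    linarith [hosc 0 x]
  have hwm : ∀ n, Measurable (w n) := fun n =>
    (Measurable.of_discrete (f := W n)).comp (measurable_ix _ _)
  have t1 : Tendsto (fun n => ∫ x, ψ (0, x) • w n x) atTop (nhds (∫ x, ψ (0, x) • U₀ x)) := by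
    have hψc : Continuous fun x : ℝ => ψ (0, x) := hψ.cont.comp (by fun_prop)
    have hψ0 : Integrable (fun x => ψ (0, x)) volume := by
      refine hψc.integrable_of_hasCompactSupport ?_
      refine HasCompactSupport.intro (isCompact_closedBall (0 : ℝ) (k - 1)) fun x hx =>
        hψ.supp _ ?_
      rw [norm_space]
      simpa using hx
    refine tendsto_integral_of_dominated_convergence (fun x => ‖ψ (0, x)‖ * (‖U₀ 0‖ + T))
      (fun n => hψc.aestronglyMeasurable.smul (hwm n).aestronglyMeasurable)
      (hψ0.norm.mul_const _) (fun n => Eventually.of_forall fun x => ?_) ?_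
    · rw [norm_smul]
      gcongr
      exact hB _
    · filter_upwards [hae] with x hx
      exact (sample_tendsto hd hd0 hrT hx).const_smul _
  have t2 : Tendsto (fun n => (d n)⁻¹ • (∫ z, ψ z • layer (d n) (w n) z)) atTop
      (nhds (∫ x, ψ (0, x) • U₀ x)) := by
    have h0 : Tendsto (fun n => (d n)⁻¹ • (∫ z, ψ z • layer (d n) (w n) z)
        - ∫ x, ψ (0, x) • w n x) atTop (nhds 0) := by
      refine squeeze_zero_norm (fun n => layer_error hψ (hd n) (hwm n) fun x => hB _) ?_
      simpa using hd0.const_mul (L * (‖U₀ 0‖ + T) * (2 * k))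
    simpa using h0.add t1
  have h0 : Tendsto (fun n => (d n)⁻¹ •
        ((∫ z, (ψ (z - (d n, 0)) - ψ z) • pos (cell (d n) (r n) (u n)) z)
          - (∫ z, (ψ (z - (0, -d n)) - ψ z) • pos (fun t x => F (cell (d n) (r n) (u n) t x)) z)
          - ∫ z, ψ z • layer (d n) (w n) z)) atTop (nhds 0) := by
    refine squeeze_zero_norm (a := fun n => L * (2 * k * (4 * A * (r n)⁻¹))
      + L * (2 * k * (2 * k * (A * Real.sqrt (N * k) * (r n)⁻¹)))) (fun n => ?_) ?_
    · rw [norm_smul, Real.norm_of_nonneg (inv_nonneg.2 (hd n).le)]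
      have hrn := hr n
      have e1 : (M n : ℝ) * d n = (r n)⁻¹ := by
        rw [hMr]; simp only [d]; field_simp
      have e2 : A * Real.sqrt (N * (k / d n)) / M n = A * Real.sqrt (N * k) * (r n)⁻¹ := by
        have : (N : ℝ) * (k / d n) = N * k * (r n ^ 2) ^ 2 := by
          simp only [d]; rw [div_inv_eq_mul]; ring
        rw [this, Real.sqrt_mul (mul_nonneg (by positivity) hψ.k_nonneg),
          Real.sqrt_sq (by positivity), hMr]
        field_simp
      have := weak_error (hM n) (hsch n) (hd n) (hd1 n) (r n) hBF hψ
      have h3 : 0 ≤ (d n)⁻¹ := inv_nonneg.2 (hd n).le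
      refine (mul_le_mul_of_nonneg_left this h3).trans (le_of_eq ?_)
      rw [← mul_assoc, inv_mul_cancel₀ (hd n).ne', one_mul, e1, e2]
    · have g : Tendsto (fun n => (L * (2 * k * (4 * A)) + L * (2 * k * (2 * k * (A *
          Real.sqrt (N * k))))) * (r n)⁻¹) atTop (nhds 0) := by
        simpa using hri.const_mul (L * (2 * k * (4 * A)) + L * (2 * k * (2 * k * (A *
          Real.sqrt (N * k)))))
      refine g.congr fun n => by ring
  have := h0.add t2
  rw [zero_add] at this
  refine this.congr fun n => ?_
  rw [← smul_add, sub_add_cancel]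

end Glimm

namespace Glimm

/-! ### Compactness -/

variable {N : ℕ} {F : (Fin N → ℝ) → (Fin N → ℝ)} {P : Fin N → ℝ}

/-- Replacing `(t, x)` by a nearby point, slightly earlier and slightly to the left, changes an
approximate solution little in `L¹`. -/
lemma Approx.round {ε A d : ℝ} {V : ℝ → ℝ → (Fin N → ℝ)} (h : Approx F P ε A d V)
    (hA : 0 ≤ A) (hd : 0 ≤ d) {s t η : ℝ} (hs : 0 ≤ s) (hst : s ≤ t) (hη : t ≤ s + η)
    {ξ : ℝ → ℝ} (hξ1 : ∀ x, ξ x ≤ x) (hξ2 : ∀ x, x - η ≤ ξ x) (a b : ℝ) :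
    ∫⁻ x in Icc a b, ‖V t x - V s (ξ x)‖ₑ ≤ ENNReal.ofReal (A * (2 * η + d)) := by
  obtain ⟨g, hg, hg0, hgA, hgV⟩ := h.var s
  have hη0 : 0 ≤ η := by linarith
  have hm : Measurable fun x => ‖V t x - V s x‖ₑ := by
    have h1 : ∀ r, Measurable fun x => V r x := fun r =>
      h.meas.comp (measurable_const.prodMk measurable_id)
    exact ((h1 t).sub (h1 s)).enorm
  have hg' : Monotone fun x => g (x - η) := fun x y hxy => hg (by linarith)
  have k1 := mono_shift hg' (fun x => hg0 _) (fun x => hgA _) hη0 a b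
  have k2 := h.time s t a b hs hst
  calc _ ≤ ∫⁻ x in Icc a b, (‖V t x - V s x‖ₑ
        + ENNReal.ofReal (g (x + η - η) - g (x - η))) := by
        refine lintegral_mono fun x => ?_
        have e : V t x - V s (ξ x) = (V t x - V s x) + (V s x - V s (ξ x)) := by abel
        rw [e]
        refine (enorm_add_le _ _).trans ?_
        gcongr
        rw [← ofReal_norm, add_sub_cancel_right]
        refine ENNReal.ofReal_le_ofReal ((hgV _ _ (hξ1 x)).trans ?_)
        linarith [hg (hξ2 x)]
    _ = _ := lintegral_add_left hm _
    _ ≤ ENNReal.ofReal (A * (t - s + d)) + ENNReal.ofReal (η * A) := add_le_add k2 k1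
    _ = ENNReal.ofReal (A * (t - s + d) + η * A) :=
        (ENNReal.ofReal_add (mul_nonneg hA (by linarith)) (by positivity)).symm
    _ ≤ _ := ENNReal.ofReal_le_ofReal (by nlinarith)

/-- The square `[0, K] × [-K, K]`. -/
def box (K : ℕ) : Set (ℝ × ℝ) := Icc (0 : ℝ) K ×ˢ Icc (-K : ℝ) K

lemma cauchy_box {ε A : ℝ} (hA : 0 ≤ A) {d : ℕ → ℝ} {V : ℕ → ℝ → ℝ → (Fin N → ℝ)}
    (hd : ∀ n, 0 < d n) (hd0 : Tendsto d atTop (nhds 0))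
    (h : ∀ n, Approx F P ε A (d n) (V n))
    (hconv : ∀ q r : ℚ, ∃ l, Tendsto (fun n => V n q r) atTop (nhds l))
    (K : ℕ) {η : ℝ} (hη : 0 < η) :
    ∀ᶠ n0 in atTop, ∀ n ≥ n0, ∀ m ≥ n0,
      ∫⁻ z in box K, ‖V n z.1 z.2 - V m z.1 z.2‖ₑ ≤ ENNReal.ofReal η := by
  obtain ⟨θ, hθ, hθη⟩ : ∃ θ : ℝ, 0 < θ ∧ K * (6 * A * θ + 2 * K * θ) ≤ η := by
    refine ⟨η / (K * (6 * A + 2 * K) + 1), by positivity, ?_⟩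
    have h1 : 0 ≤ K * (6 * A + 2 * K) := by positivity
    have : (K : ℝ) * (6 * A * (η / (K * (6 * A + 2 * K) + 1))
      + 2 * K * (η / (K * (6 * A + 2 * K) + 1)))
      = η * ((K * (6 * A + 2 * K)) / (K * (6 * A + 2 * K) + 1)) := by ring
    rw [this]
    refine mul_le_of_le_one_right hη.le ((div_le_one (by positivity)).2 (by linarith))
  obtain ⟨p, hp⟩ := exists_nat_gt θ⁻¹
  have hp0 : (0 : ℝ) < p := (inv_pos.2 hθ).trans hp
  have hpθ : (p : ℝ)⁻¹ ≤ θ := inv_le_of_inv_le₀ hθ hp.le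
  -- the approximations are uniformly close on the finitely many grid points met by the box
  have hfin : ∀ᶠ n0 in atTop, ∀ i ∈ Finset.range (K * p + 1),
      ∀ l ∈ Finset.Icc (-(K * p : ℤ)) (K * p), ∀ n ≥ n0, ∀ m ≥ n0,
      ‖V n ((i / p : ℚ) : ℝ) ((l / p : ℚ) : ℝ) - V m ((i / p : ℚ) : ℝ) ((l / p : ℚ) : ℝ)‖ ≤ θ := by
    rw [eventually_all_finset]
    intro i _
    rw [eventually_all_finset]
    intro l _
    obtain ⟨y, hy⟩ := hconv (i / p) (l / p)
    obtain ⟨n1, hn1⟩ := Metric.cauchySeq_iff.1 hy.cauchySeq θ hθ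
    filter_upwards [eventually_ge_atTop n1] with n0 hn0 n hn m hm
    have := hn1 n (hn0.trans hn) m (hn0.trans hm)
    rw [dist_eq_norm] at this
    exact this.le
  have hdθ : ∀ᶠ n0 in atTop, ∀ n ≥ n0, d n ≤ θ :=
    eventually_forall_ge_atTop.2 (hd0.eventually_le_const hθ)
  filter_upwards [hfin, hdθ] with n0 hgrid hdn n hn m hm
  have hmeas : ∀ n, Measurable fun z : ℝ × ℝ => V n z.1 z.2 := fun n => (h n).meas
  have hmeas' : Measurable fun z : ℝ × ℝ => ‖V n z.1 z.2 - V m z.1 z.2‖ₑ :=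
    ((hmeas n).sub (hmeas m)).enorm
  rw [box, Measure.volume_eq_prod, setLIntegral_prod _ hmeas'.aemeasurable]
  have hslice : ∀ t ∈ Icc (0 : ℝ) K, ∫⁻ x in Icc (-K : ℝ) K, ‖V n t x - V m t x‖ₑ
      ≤ ENNReal.ofReal (6 * A * θ + 2 * K * θ) := by
    intro t ht
    let s : ℝ := ((⌊t * p⌋₊ / p : ℚ) : ℝ)
    let ξ : ℝ → ℝ := fun x => ((⌊x * p⌋ / p : ℚ) : ℝ)
    have hs0 : s = (⌊t * p⌋₊ : ℝ) / p := by simp [s]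
    have hξ0 : ∀ x, ξ x = (⌊x * p⌋ : ℝ) / p := fun x => by simp [ξ]
    have htp : 0 ≤ t * p := mul_nonneg ht.1 hp0.le
    have hs : 0 ≤ s := by rw [hs0]; positivity
    have hst : s ≤ t := by rw [hs0, div_le_iff₀ hp0]; exact Nat.floor_le htp
    have hts : t ≤ s + θ := by
      have h1 := (Nat.lt_floor_add_one (t * p)).le
      rw [← le_div_iff₀ hp0, add_div, ← hs0, one_div] at h1
      linarith
    have hξ1 : ∀ x, ξ x ≤ x := fun x => by
      rw [hξ0, div_le_iff₀ hp0]; exact Int.floor_le _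
    have hξ2 : ∀ x, x - θ ≤ ξ x := fun x => by
      have h1 := (Int.lt_floor_add_one (x * p)).le
      rw [← le_div_iff₀ hp0, add_div, ← hξ0, one_div] at h1
      linarith
    have hξm : Measurable ξ := by
      have : ξ = fun x : ℝ => (⌊x * (p : ℝ)⌋ : ℝ) / p := funext hξ0
      rw [this]
      fun_prop
    have hVm : ∀ n t, Measurable fun x => V n t x := fun n t =>
      (hmeas n).comp (measurable_const.prodMk measurable_id)
    have hVξ : ∀ n, Measurable fun x => ‖V n t x - V n s (ξ x)‖ₑ := fun n =>
      ((hVm n t).sub ((hVm n s).comp hξm)).enorm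
    have r1 := (h n).round hA (hd n).le hs hst hts hξ1 hξ2 (-K) K
    have r2 := (h m).round hA (hd m).le hs hst hts hξ1 hξ2 (-K) K
    calc _ ≤ ∫⁻ x in Icc (-K : ℝ) K, (‖V n t x - V n s (ξ x)‖ₑ
          + (‖V m t x - V m s (ξ x)‖ₑ + ENNReal.ofReal θ)) := by
          refine setLIntegral_mono' measurableSet_Icc fun x hx => ?_
          have e : V n t x - V m t x = (V n t x - V n s (ξ x))
            + (-(V m t x - V m s (ξ x)) + (V n s (ξ x) - V m s (ξ x))) := by abel
          rw [e]
          refine (enorm_add_le _ _).trans ?_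
          gcongr
          refine (enorm_add_le _ _).trans ?_
          rw [enorm_neg]
          gcongr
          rw [← ofReal_norm]
          refine ENNReal.ofReal_le_ofReal (hgrid _ ?_ _ ?_ n hn m hm)
          · rw [Finset.mem_range, Nat.lt_succ_iff]
            refine Nat.floor_le_of_le ?_
            push_cast
            exact mul_le_mul_of_nonneg_right ht.2 hp0.le
          · rw [Finset.mem_Icc]
            constructor
            · refine Int.le_floor.2 ?_
              push_cast
              nlinarith [hx.1]
            · refine Int.cast_le (R := ℝ).1 ((Int.floor_le _).trans ?_)
              push_cast
              exact mul_le_mul_of_nonneg_right hx.2 hp0.le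
      _ = (∫⁻ x in Icc (-K : ℝ) K, ‖V n t x - V n s (ξ x)‖ₑ)
          + ((∫⁻ x in Icc (-K : ℝ) K, ‖V m t x - V m s (ξ x)‖ₑ)
          + ENNReal.ofReal θ * ENNReal.ofReal (K - -K)) := by
          rw [lintegral_add_left (hVξ n), lintegral_add_left (hVξ m), setLIntegral_const,
            Real.volume_Icc]
      _ ≤ ENNReal.ofReal (A * (2 * θ + d n)) + (ENNReal.ofReal (A * (2 * θ + d m))
          + ENNReal.ofReal θ * ENNReal.ofReal (K - -K)) := by gcongr
      _ = ENNReal.ofReal (A * (2 * θ + d n) + (A * (2 * θ + d m) + θ * (K - -K))) := by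
          have := (hd n).le
          have := (hd m).le
          have hK : (0 : ℝ) ≤ K - -K := by simp
          rw [ENNReal.ofReal_add (by positivity) (by positivity),
            ENNReal.ofReal_add (by positivity) (by positivity), ENNReal.ofReal_mul hθ.le]
      _ ≤ _ := by
          have h1 := mul_le_mul_of_nonneg_left (hdn n hn) hA
          have h2 := mul_le_mul_of_nonneg_left (hdn m hm) hA
          exact ENNReal.ofReal_le_ofReal (by linarith)
  refine (setLIntegral_mono' measurableSet_Icc hslice).trans ?_
  rw [setLIntegral_const, Real.volume_Icc, sub_zero, mul_comm,
    ← ENNReal.ofReal_mul (by positivity)]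
  exact ENNReal.ofReal_le_ofReal hθη

/-- A sequence of approximate solutions has a subsequence converging almost everywhere at
nonnegative times. -/
lemma exists_subseq {ε A : ℝ} (hA : 0 ≤ A) {d : ℕ → ℝ} {V : ℕ → ℝ → ℝ → (Fin N → ℝ)}
    (hd : ∀ n, 0 < d n) (hd0 : Tendsto d atTop (nhds 0))
    (h : ∀ n, Approx F P ε A (d n) (V n)) :
    ∃ φ : ℕ → ℕ, StrictMono φ ∧ ∀ᵐ z : ℝ × ℝ, 0 ≤ z.1 →
      ∃ l, Tendsto (fun n => V (φ n) z.1 z.2) atTop (nhds l) := by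
  obtain ⟨l, -, φ₀, hφ₀, hl⟩ := IsCompact.tendsto_subseq
    (isCompact_univ_pi fun _ : ℚ × ℚ => isCompact_closedBall P ε)
    (x := fun n q => V n q.1 q.2)
    (fun n q _ => by rw [mem_closedBall_iff_norm]; exact (h n).near _ _)
  rw [tendsto_pi_nhds] at hl
  have hc := cauchy_box hA (fun n => hd (φ₀ n)) (hd0.comp hφ₀.tendsto_atTop)
    (fun n => h (φ₀ n)) (fun q r => ⟨l (q, r), hl (q, r)⟩)
  obtain ⟨φ₁, hφ₁, hb⟩ := extraction_forall_of_eventually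
    fun K : ℕ => hc K (by positivity : (0 : ℝ) < (1 / 2) ^ K / 2)
  refine ⟨φ₀ ∘ φ₁, hφ₀.comp hφ₁, ?_⟩
  have hboxm : ∀ K, MeasurableSet (box K) := fun K => measurableSet_Icc.prod measurableSet_Icc
  have hK : ∀ K : ℕ, ∀ᵐ z : ℝ × ℝ, z ∈ box K →
      ∃ l, Tendsto (fun n => V ((φ₀ ∘ φ₁) n) z.1 z.2) atTop (nhds l) := by
    intro K
    rw [← ae_restrict_iff' (hboxm K)]
    have key := Lp.ae_tendsto_of_cauchy_eLpNorm (p := 1) (μ := volume.restrict (box K))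
      (f := fun n z => V ((φ₀ ∘ φ₁) (n + K)) z.1 z.2)
      (fun n => (h _).meas.aestronglyMeasurable) le_rfl
      (B := fun n => ENNReal.ofReal ((1 / 2) ^ n)) ?_ ?_
    · filter_upwards [key] with z hz
      obtain ⟨y, hy⟩ := hz
      exact ⟨y, (tendsto_add_atTop_iff_nat K).1 hy⟩
    · rw [← ENNReal.ofReal_tsum_of_nonneg (fun n => by positivity)
        (summable_geometric_of_lt_one (by norm_num) (by norm_num))]
      exact ENNReal.ofReal_ne_top
    · intro n0 n m hn hm
      rw [eLpNorm_one_eq_lintegral_enorm]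
      have h1 := hb (n0 + K) (φ₁ (n + K)) (hφ₁.monotone (by omega)) (φ₁ (m + K))
        (hφ₁.monotone (by omega))
      have hsub : box K ⊆ box (n0 + K) := by
        have : (K : ℝ) ≤ (n0 + K : ℕ) := by push_cast; linarith [(n0.cast_nonneg : (0 : ℝ) ≤ n0)]
        exact prod_mono (Icc_subset_Icc_right this) (Icc_subset_Icc (by linarith) this)
      refine (lintegral_mono_set hsub).trans_lt (h1.trans_lt ?_)
      rw [ENNReal.ofReal_lt_ofReal_iff (by positivity)]
      have h2 : ((1 : ℝ) / 2) ^ (n0 + K) ≤ (1 / 2) ^ n0 :=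
        pow_le_pow_of_le_one (by norm_num) (by norm_num) (by omega)
      have h3 : (0 : ℝ) < (1 / 2) ^ (n0 + K) := by positivity
      linarith
  filter_upwards [ae_all_iff.2 hK] with z hz hz0
  obtain ⟨K, hK⟩ := exists_nat_ge (max z.1 |z.2|)
  exact hz K ⟨⟨hz0, (le_max_left _ _).trans hK⟩, abs_le.1 ((le_max_right _ _).trans hK)⟩

end Glimm

namespace Glimm

/-! ### Passage to the limit -/

variable {N : ℕ} {F : (Fin N → ℝ) → (Fin N → ℝ)} {P : Fin N → ℝ}

/-- A bounded weak solution with values in `Q` and total variation at most `A` at every time. The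
weak formulation is tested componentwise, and `pos` extends functions by zero to negative times. -/
structure Sol (F : (Fin N → ℝ) → (Fin N → ℝ)) (U₀ : ℝ → (Fin N → ℝ)) (Q : Set (Fin N → ℝ)) (A : ℝ)
    (U : ℝ → ℝ → (Fin N → ℝ)) : Prop where
  mem : ∀ t x, U t x ∈ Q
  meas : AEStronglyMeasurable (pos U) volume
  measF : AEStronglyMeasurable (pos fun t x => F (U t x)) volume
  var : ∀ t, eVariationOn (U t) univ ≤ ENNReal.ofReal A
  weak : ∀ ψ : ℝ × ℝ → ℝ, ContDiff ℝ (⊤ : ℕ∞) ψ → HasCompactSupport ψ →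
    (∫ z, (fderiv ℝ ψ z (1, 0) • pos U z + fderiv ℝ ψ z (0, 1) • pos (fun t x => F (U t x)) z))
      + ∫ x, ψ (0, x) • U₀ x = 0

lemma Approx.variation {ε A d : ℝ} {V : ℝ → ℝ → (Fin N → ℝ)} (h : Approx F P ε A d V) (t : ℝ) :
    eVariationOn (V t) univ ≤ ENNReal.ofReal A := by
  obtain ⟨g, hg, hg0, hgA, hgV⟩ := h.var t
  refine iSup_le fun ⟨n, u, hu, _⟩ => ?_
  have h1 : ∀ i ∈ Finset.range n, edist (V t (u (i + 1))) (V t (u i))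
      ≤ ENNReal.ofReal (g (u (i + 1)) - g (u i)) := fun i _ => by
    rw [edist_eq_enorm_sub, ← ofReal_norm]
    exact ENNReal.ofReal_le_ofReal (hgV _ _ (hu (Nat.le_succ i)))
  refine (Finset.sum_le_sum h1).trans ?_
  rw [← ENNReal.ofReal_sum_of_nonneg fun i _ => sub_nonneg.2 (hg (hu (Nat.le_succ i))),
    Finset.sum_range_sub fun i => g (u i)]
  exact ENNReal.ofReal_le_ofReal (by linarith [hgA (u n), hg0 (u 0)])

/-- A smooth compactly supported function is a test function in the sense of `Test`. -/
lemma exists_test {ψ : ℝ × ℝ → ℝ} (hψ : ContDiff ℝ (⊤ : ℕ∞) ψ) (hc : HasCompactSupport ψ) :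
    ∃ L k, Test ψ L k := by
  obtain ⟨L, hL⟩ := ContDiff.lipschitzWith_of_hasCompactSupport hc hψ (by simp)
  obtain ⟨r, hr⟩ := hc.isCompact.isBounded.subset_closedBall (0 : ℝ × ℝ)
  refine ⟨L, |r| + 1, hψ.continuous, L.2, by positivity, fun z w => ?_, fun z hz => ?_⟩
  · have := hL.dist_le_mul z w
    rwa [Real.dist_eq, dist_eq_norm] at this
  · by_contra hne
    have h1 := hr (subset_tsupport ψ hne)
    rw [mem_closedBall_zero_iff] at h1
    linarith [le_abs_self r]

/-- Convergence of difference quotients of a test function, integrated against a boundedly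
convergent sequence. -/
lemma pairing_tendsto {ψ : ℝ × ℝ → ℝ} (hψ : ContDiff ℝ (⊤ : ℕ∞) ψ) {L k : ℝ} (hT : Test ψ L k)
    {w : ℝ × ℝ} (hw : ‖w‖ ≤ 1) {d : ℕ → ℝ} (hd : ∀ n, 0 < d n) (hd1 : ∀ n, d n ≤ 1)
    (hd0 : Tendsto d atTop (nhds 0)) {V : ℕ → ℝ × ℝ → (Fin N → ℝ)} {U : ℝ × ℝ → (Fin N → ℝ)}
    {b : ℝ} (hV : ∀ n, Measurable (V n)) (hb : ∀ n z, ‖V n z‖ ≤ b)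
    (hlim : ∀ᵐ z, Tendsto (fun n => V n z) atTop (nhds (U z))) :
    Tendsto (fun n => (d n)⁻¹ • ∫ z, (ψ (z - d n • w) - ψ z) • V n z) atTop
      (nhds (∫ z, (-fderiv ℝ ψ z w) • U z)) := by
  have hL := hT.L_nonneg
  have hb0 : 0 ≤ b := (norm_nonneg _).trans (hb 0 0)
  simp_rw [← integral_smul]
  refine tendsto_integral_of_dominated_convergence
    ((Metric.closedBall (0 : ℝ × ℝ) k).indicator fun _ => L * b) (fun n => ?_) ?_
    (fun n => Eventually.of_forall fun z => ?_) ?_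
  · have h1 : Measurable fun z => ψ (z - d n • w) - ψ z :=
      ((hT.cont.comp (continuous_id.sub continuous_const)).sub hT.cont).measurable
    exact ((h1.smul (hV n)).const_smul (d n)⁻¹).aestronglyMeasurable
  · rw [integrable_indicator_iff Metric.isClosed_closedBall.measurableSet]
    exact integrableOn_const (measure_closedBall_lt_top).ne
  · have hdw : ‖d n • w‖ ≤ 1 := by
      rw [norm_smul, Real.norm_eq_abs, abs_of_pos (hd n)]
      exact mul_le_one₀ (hd1 n) (norm_nonneg _) hw
    have h1 := hT.diff hdw z
    rw [norm_smul, norm_smul, Real.norm_eq_abs, Real.norm_eq_abs, abs_of_pos (inv_pos.2 (hd n))]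
    by_cases hz : z ∈ Metric.closedBall (0 : ℝ × ℝ) k
    · rw [indicator_of_mem hz] at h1 ⊢
      have h2 : L * ‖d n • w‖ ≤ L * d n := by
        rw [norm_smul, Real.norm_eq_abs, abs_of_pos (hd n)]
        exact mul_le_mul_of_nonneg_left (mul_le_of_le_one_right (hd n).le hw) hL
      calc _ ≤ (d n)⁻¹ * ((L * d n) * b) := by
            gcongr
            · exact inv_nonneg.2 (hd n).le
            · exact mul_nonneg hL (hd n).le
            · exact h1.trans h2
            · exact hb n z
        _ = L * b := by field_simp [(hd n).ne']
    · rw [indicator_of_notMem hz] at h1 ⊢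
      rw [le_antisymm h1 (abs_nonneg _)]; simp
  · filter_upwards [hlim] with z hz
    have h1 : HasLineDerivAt ℝ ψ (fderiv ℝ ψ z (-w)) z (-w) :=
      ((hψ.differentiable (by simp)) z).hasFDerivAt.hasLineDerivAt _
    have h2 : Tendsto d atTop (nhdsWithin 0 (Ioi 0)) :=
      tendsto_nhdsWithin_iff.2 ⟨hd0, Eventually.of_forall hd⟩
    have h3 := (h1.tendsto_slope_zero_right.comp h2).smul hz
    rw [map_neg] at h3
    refine h3.congr fun n => ?_
    simp only [Function.comp, smul_neg, ← sub_eq_add_neg, smul_assoc]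

lemma integrable_pair {g : ℝ × ℝ → ℝ} (hg : Continuous g) (hc : HasCompactSupport g)
    {U : ℝ × ℝ → (Fin N → ℝ)} (hU : AEStronglyMeasurable U volume) {b : ℝ}
    (hb : ∀ z, ‖U z‖ ≤ b) : Integrable (fun z => g z • U z) volume :=
  (hg.integrable_of_hasCompactSupport hc).smul_bdd b hU (Eventually.of_forall hb)

lemma fderiv_apply_compact {ψ : ℝ × ℝ → ℝ} (hψ : ContDiff ℝ (⊤ : ℕ∞) ψ)
    (hc : HasCompactSupport ψ) (w : ℝ × ℝ) :
    Continuous (fun z => fderiv ℝ ψ z w) ∧ HasCompactSupport (fun z => fderiv ℝ ψ z w) :=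
  ⟨(hψ.continuous_fderiv (by simp)).clm_apply continuous_const, hc.fderiv_apply ℝ w⟩

lemma solution_of_approx {ε A BF : ℝ} (hε : 0 ≤ ε) (hA : 0 ≤ A)
    (hFc : ContinuousOn F (Metric.closedBall P ε))
    (hBF : ∀ v, ‖v - P‖ ≤ ε → ‖F v‖ ≤ BF) {U₀ : ℝ → (Fin N → ℝ)}
    {d : ℕ → ℝ} {V : ℕ → ℝ → ℝ → (Fin N → ℝ)} (hd : ∀ n, 0 < d n) (hd1 : ∀ n, d n ≤ 1)
    (hd0 : Tendsto d atTop (nhds 0)) (h : ∀ n, Approx F P ε A (d n) (V n))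
    (hcons : ∀ ψ L k, Test ψ L k → Tendsto (fun n => (d n)⁻¹ •
        ((∫ z, (ψ (z - (d n, 0)) - ψ z) • pos (V n) z)
          - ∫ z, (ψ (z - (0, -d n)) - ψ z) • pos (fun t x => F (V n t x)) z))
        atTop (nhds (∫ x, ψ (0, x) • U₀ x))) :
    ∃ U, Sol F U₀ (Metric.closedBall P ε) A U := by
  obtain ⟨φ, hφ, hconv⟩ := exists_subseq hA hd hd0 h
  have hφt := hφ.tendsto_atTop
  have hmem : ∀ n t x, V n t x ∈ Metric.closedBall P ε := fun n t x => by
    rw [mem_closedBall_iff_norm]; exact (h n).near t x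
  -- an ultrafilter limit selects a value at every point, compatibly with all limits
  have hult : ∀ t x, ∃ l ∈ Metric.closedBall P ε,
      Tendsto (fun n => V (φ n) t x) (hyperfilter ℕ : Filter ℕ) (nhds l) := by
    intro t x
    obtain ⟨l, hl, hl2⟩ := (isCompact_closedBall P ε).ultrafilter_le_nhds
      ((hyperfilter ℕ).map fun n => V (φ n) t x)
      (by
        rw [le_principal_iff, Ultrafilter.coe_map, mem_map]
        exact Eventually.of_forall fun n => hmem _ t x)
    exact ⟨l, hl, hl2⟩
  choose U hU hUlim using hult
  have hlim : ∀ᵐ z : ℝ × ℝ, 0 ≤ z.1 →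
      Tendsto (fun n => V (φ n) z.1 z.2) atTop (nhds (U z.1 z.2)) := by
    filter_upwards [hconv] with z hz hz0
    obtain ⟨l, hl⟩ := hz hz0
    rwa [tendsto_nhds_unique (hUlim z.1 z.2) (hl.mono_left Nat.hyperfilter_le_atTop)]
  have hlim1 : ∀ᵐ z : ℝ × ℝ, Tendsto (fun n => pos (V (φ n)) z) atTop (nhds (pos U z)) := by
    filter_upwards [hlim] with z hz
    unfold pos
    split_ifs with h0
    · exact hz h0
    · exact tendsto_const_nhds
  have hlim2 : ∀ᵐ z : ℝ × ℝ, Tendsto (fun n => pos (fun t x => F (V (φ n) t x)) z) atTop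
      (nhds (pos (fun t x => F (U t x)) z)) := by
    filter_upwards [hlim] with z hz
    unfold pos
    split_ifs with h0
    · exact (hFc _ (hU z.1 z.2)).tendsto.comp (tendsto_nhdsWithin_iff.2
        ⟨hz h0, Eventually.of_forall fun n => hmem _ _ _⟩)
    · exact tendsto_const_nhds
  have m1 : ∀ n, Measurable (pos (V (φ n))) := fun n => measurable_pos (h _).meas
  have m2 : ∀ n, Measurable (pos fun t x => F (V (φ n) t x)) := fun n =>
    measurable_pos (V := fun t x => F (V (φ n) t x)) (h _).measF
  have hP : ∀ v, ‖v - P‖ ≤ ε → ‖v‖ ≤ ‖P‖ + ε := fun v hv => by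
    have := norm_add_le P (v - P)
    rw [add_sub_cancel] at this
    linarith
  have hBF0 : 0 ≤ BF := (norm_nonneg _).trans (hBF P (by simpa using hε))
  have mU := aestronglyMeasurable_of_tendsto_ae atTop (fun n => (m1 n).aestronglyMeasurable) hlim1
  have mF := aestronglyMeasurable_of_tendsto_ae atTop (fun n => (m2 n).aestronglyMeasurable) hlim2
  have hUn : ∀ t x, ‖U t x - P‖ ≤ ε := fun t x => mem_closedBall_iff_norm.1 (hU t x)
  refine ⟨U, hU, mU, mF, fun t => ?_, fun ψ hψ hc => ?_⟩
  · by_contra! hlt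
    obtain ⟨n, hn⟩ := (eVariationOn.lowerSemicontinuous_aux (F := fun n => V (φ n) t)
      (p := (hyperfilter ℕ : Filter ℕ)) (fun x _ => hUlim t x) hlt).exists
    exact absurd ((h (φ n)).variation t) (not_le.2 hn)
  · obtain ⟨L, k, hT⟩ := exists_test hψ hc
    have hdφ := hd0.comp hφt
    have t1 := pairing_tendsto hψ hT (w := (1, 0)) (by simp [Prod.norm_def])
      (fun n => hd (φ n)) (fun n => hd1 (φ n)) hdφ m1
      (fun n z => pos_le (b := ‖P‖ + ε) (by positivity) fun _ => hP _ ((h _).near _ _)) hlim1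
    have t2 := pairing_tendsto hψ hT (w := (0, -1)) (by simp [Prod.norm_def])
      (fun n => hd (φ n)) (fun n => hd1 (φ n)) hdφ m2
      (fun n z => pos_le hBF0 fun _ => hBF _ ((h _).near _ _)) hlim2
    have t3 := (hcons ψ L k hT).comp hφt
    have t4 := tendsto_nhds_unique (t3.congr fun n => ?_) (t1.sub t2)
    · obtain ⟨c1, s1⟩ := fderiv_apply_compact hψ hc (1, 0)
      obtain ⟨c2, s2⟩ := fderiv_apply_compact hψ hc (0, 1)
      have e : ∀ z, fderiv ℝ ψ z (0, -1) = -fderiv ℝ ψ z (0, 1) := fun z => by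
        rw [← map_neg]; simp
      rw [t4, integral_add]
      · simp only [e, neg_smul, neg_neg, integral_neg]
        abel
      · exact integrable_pair c1 s1 mU fun z =>
          pos_le (b := ‖P‖ + ε) (by positivity) fun _ => hP _ (hUn _ _)
      · exact integrable_pair c2 s2 mF fun z => pos_le hBF0 fun _ => hBF _ (hUn _ _)
    · simp only [Function.comp, Prod.smul_mk, smul_eq_mul, mul_one, mul_zero, mul_neg, smul_sub]

end Glimm

namespace Glimm

/-! ### Change of frame -/

variable {N : ℕ} {F : (Fin N → ℝ) → (Fin N → ℝ)} {P : Fin N → ℝ}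

/-- The change of variables `(t, x) ↦ (a t, x + b t)`. -/
noncomputable def gal {a : ℝ} (ha : 0 < a) (b : ℝ) : ℝ × ℝ ≃ₜ ℝ × ℝ where
  toFun z := (a * z.1, z.2 + b * z.1)
  invFun z := (a⁻¹ * z.1, z.2 - b * (a⁻¹ * z.1))
  left_inv z := by ext <;> simp [ha.ne']
  right_inv z := by ext <;> simp [ha.ne']
  continuous_toFun := by fun_prop
  continuous_invFun := by fun_prop

lemma gal_apply {a : ℝ} (ha : 0 < a) (b : ℝ) (z : ℝ × ℝ) :
    gal ha b z = (a * z.1, z.2 + b * z.1) := rfl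

lemma map_gal {a : ℝ} (ha : 0 < a) (b : ℝ) :
    Measure.map (gal ha b) (volume : Measure (ℝ × ℝ)) = ENNReal.ofReal a⁻¹ • volume := by
  have hdet : LinearMap.det (Matrix.toLin (Module.Basis.finTwoProd ℝ) (Module.Basis.finTwoProd ℝ)
      !![a, 0; b, 1]) = a := by simp
  have h1 : (Matrix.toLin (Module.Basis.finTwoProd ℝ) (Module.Basis.finTwoProd ℝ)
      !![a, 0; b, 1] : ℝ × ℝ → ℝ × ℝ) = gal ha b := by
    funext z
    rw [Matrix.toLin_finTwoProd_apply]
    simp [gal, add_comm]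
  have h2 := Measure.map_linearMap_addHaar_eq_smul_addHaar (volume : Measure (ℝ × ℝ))
    (f := Matrix.toLin (Module.Basis.finTwoProd ℝ) (Module.Basis.finTwoProd ℝ) !![a, 0; b, 1])
    (by rw [hdet]; exact ha.ne')
  rwa [h1, hdet, abs_of_pos (inv_pos.2 ha)] at h2

lemma integral_gal {E : Type*} [NormedAddCommGroup E] [NormedSpace ℝ E] {a : ℝ} (ha : 0 < a)
    (b : ℝ) (h : ℝ × ℝ → E) : ∫ z, h (gal ha b z) = a⁻¹ • ∫ z, h z := by
  rw [← (gal ha b).measurableEmbedding.integral_map, map_gal, integral_smul_measure,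
    ENNReal.toReal_ofReal (inv_nonneg.2 ha.le)]

lemma pos_gal {a : ℝ} (ha : 0 < a) (b : ℝ) (W : ℝ → ℝ → (Fin N → ℝ)) :
    (pos fun t x => W (a * t) (x + b * t)) = pos W ∘ gal ha b := by
  funext z
  by_cases hz : 0 ≤ z.1
  · have : 0 ≤ a * z.1 := mul_nonneg ha.le hz
    simp [pos, gal_apply, hz, this]
  · have : ¬ 0 ≤ a * z.1 := fun h => hz (nonneg_of_mul_nonneg_right h ha)
    simp only [pos, Function.comp, gal_apply, if_neg hz]
    exact (if_neg this).symm

lemma meas_gal {a : ℝ} (ha : 0 < a) (b : ℝ) {h : ℝ × ℝ → (Fin N → ℝ)}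
    (hh : AEStronglyMeasurable h volume) : AEStronglyMeasurable (h ∘ gal ha b) volume := by
  refine AEStronglyMeasurable.comp_aemeasurable ?_ (gal ha b).measurable.aemeasurable
  rw [map_gal]
  exact hh.smul_measure _

/-- Affine changes of the flux correspond to changes of frame. -/
lemma Sol.galilean {a b A : ℝ} (ha : 0 < a) {G : (Fin N → ℝ) → (Fin N → ℝ)}
    (hG : ∀ v, F v = a • G v - b • v) {U₀ : ℝ → (Fin N → ℝ)} {Q : Set (Fin N → ℝ)}
    {W : ℝ → ℝ → (Fin N → ℝ)} (h : Sol G U₀ Q A W) :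
    Sol F U₀ Q A fun t x => W (a * t) (x + b * t) := by
  have e1 := pos_gal ha b W
  have e2 := pos_gal ha b fun t x => F (W t x)
  have e3 : (pos fun t x => F (W t x)) = fun z => a • pos (fun t x => G (W t x)) z
      - b • pos W z := by
    funext z
    simp only [pos, hG]
    split_ifs <;> simp
  refine ⟨fun t x => h.mem _ _, ?_, ?_, fun t => ?_, fun ψ hψ hc => ?_⟩
  · rw [e1]; exact meas_gal ha b h.meas
  · rw [e2, e3]; exact meas_gal ha b ((h.measF.const_smul a).sub (h.meas.const_smul b))
  · refine le_trans ?_ (h.var (a * t))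
    exact eVariationOn.comp_le_of_monotoneOn (W (a * t)) (φ := fun x => x + b * t)
      (fun x _ y _ hxy => by simpa using hxy) (fun x _ => mem_univ _)
  · let χ : ℝ × ℝ → ℝ := fun z => ψ ((gal ha b).symm z)
    have hg' : ContDiff ℝ (⊤ : ℕ∞) fun z => (gal ha b).symm z := by
      change ContDiff ℝ (⊤ : ℕ∞) fun z : ℝ × ℝ => (a⁻¹ * z.1, z.2 - b * (a⁻¹ * z.1))
      fun_prop
    have hχ : ContDiff ℝ (⊤ : ℕ∞) χ := hψ.comp hg'
    have hχc : HasCompactSupport χ := hc.comp_homeomorph (gal ha b).symm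
    have hψχ : ψ = fun z => χ (gal ha b z) := by funext z; simp [χ]
    have hfd : ∀ z w, fderiv ℝ ψ z w = fderiv ℝ χ (gal ha b z) (gal ha b w) := by
      intro z w
      have k1 : HasFDerivAt (fun z => gal ha b z) ((a • ContinuousLinearMap.fst ℝ ℝ ℝ).prod
          (ContinuousLinearMap.snd ℝ ℝ ℝ + b • ContinuousLinearMap.fst ℝ ℝ ℝ)) z :=
        ((a • ContinuousLinearMap.fst ℝ ℝ ℝ).prod
          (ContinuousLinearMap.snd ℝ ℝ ℝ + b • ContinuousLinearMap.fst ℝ ℝ ℝ)).hasFDerivAt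
      have k2 := ((hχ.differentiable (by simp)) (gal ha b z)).hasFDerivAt.comp z k1
      have k3 : ψ = χ ∘ gal ha b := hψχ
      rw [k3, k2.fderiv]
      rfl
    have key := h.weak χ hχ hχc
    have hχ0 : ∀ x, χ (0, x) = ψ (0, x) := fun x => by
      rw [hψχ]; simp [gal]
    simp only [hχ0] at key
    rw [← key]
    congr 1
    have g1 : gal ha b (1, 0) = a • (1, 0) + b • (0, 1) := by simp [gal]
    have g2 : gal ha b (0, 1) = (0, 1) := by simp [gal]
    have := integral_gal ha b fun z => fderiv ℝ χ z (1, 0) • pos W z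
      + fderiv ℝ χ z (0, 1) • pos (fun t x => G (W t x)) z
    rw [eq_inv_smul_iff₀ ha.ne', ← integral_smul] at this
    rw [← this]
    congr 1
    funext z
    rw [e1, e2, e3, hfd, hfd, g1, g2, map_add, map_smul, map_smul]
    simp only [Function.comp, smul_eq_mul, add_smul, smul_sub, smul_add, smul_smul]
    rw [mul_comm _ a, mul_comm _ b]
    abel

end Glimm

namespace Glimm

/-! ### Vector-valued test functions -/

variable {N : ℕ} {F : (Fin N → ℝ) → (Fin N → ℝ)} {P : Fin N → ℝ}

lemma measurable_of_bv {U₀ : ℝ → (Fin N → ℝ)} (h : BoundedVariationOn U₀ univ) :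
    Measurable U₀ := by
  refine measurable_pi_iff.2 fun i => ?_
  have h1 : BoundedVariationOn ((fun v : Fin N → ℝ => v i) ∘ U₀) univ :=
    (LipschitzWith.eval i).comp_boundedVariationOn h
  obtain ⟨p, q, hp, hq, hpq⟩ := h1.locallyBoundedVariationOn.exists_monotoneOn_sub_monotoneOn
  have h2 : Measurable (p - q) :=
    (monotoneOn_univ.1 hp).measurable.sub (monotoneOn_univ.1 hq).measurable
  rwa [← hpq] at h2

lemma deriv_slice {φ : ℝ × ℝ → (Fin N → ℝ)} (hφ : ContDiff ℝ (⊤ : ℕ∞) φ) (z : ℝ × ℝ) (i : Fin N) :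
    deriv (fun s => φ (s, z.2)) z.1 i = fderiv ℝ (fun w => φ w i) z (1, 0) ∧
    deriv (fun y => φ (z.1, y)) z.2 i = fderiv ℝ (fun w => φ w i) z (0, 1) := by
  have hd : HasFDerivAt φ (fderiv ℝ φ z) z := ((hφ.differentiable (by simp)) z).hasFDerivAt
  have hi : fderiv ℝ (fun w => φ w i) z = (ContinuousLinearMap.proj i).comp (fderiv ℝ φ z) :=
    (hasFDerivAt_pi'.1 hd i).fderiv
  have h1 : HasDerivAt (fun s : ℝ => (s, z.2)) ((1 : ℝ), (0 : ℝ)) z.1 :=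
    (hasDerivAt_id z.1).prodMk (hasDerivAt_const z.1 z.2)
  have h2 : HasDerivAt (fun y : ℝ => (z.1, y)) ((0 : ℝ), (1 : ℝ)) z.2 :=
    (hasDerivAt_const z.2 z.1).prodMk (hasDerivAt_id z.2)
  have k1 := (show HasFDerivAt φ (fderiv ℝ φ z) (z.1, z.2) from hd).comp_hasDerivAt z.1 h1
  have k2 := (show HasFDerivAt φ (fderiv ℝ φ z) (z.1, z.2) from hd).comp_hasDerivAt z.2 h2
  have k1' : deriv (fun s => φ (s, z.2)) z.1 = fderiv ℝ φ z (1, 0) := k1.deriv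
  have k2' : deriv (fun y => φ (z.1, y)) z.2 = fderiv ℝ φ z (0, 1) := k2.deriv
  rw [k1', k2', hi]
  exact ⟨rfl, rfl⟩

/-- The weak formulation with vector-valued test functions and iterated integrals. -/
lemma Sol.weak_vector {U₀ : ℝ → (Fin N → ℝ)} {Q : Set (Fin N → ℝ)} {A b : ℝ}
    {U : ℝ → ℝ → (Fin N → ℝ)} (h : Sol F U₀ Q A U) (hb0 : 0 ≤ b) (hQ : ∀ v ∈ Q, ‖v‖ ≤ b)
    (hQF : ∀ v ∈ Q, ‖F v‖ ≤ b) (hU₀ : Measurable U₀) (hU₀b : ∀ x, ‖U₀ x‖ ≤ b)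
    {φ : ℝ × ℝ → (Fin N → ℝ)} (hφ : ContDiff ℝ (⊤ : ℕ∞) φ) (hc : HasCompactSupport φ) :
    IntegrableOn (fun pt : ℝ × ℝ =>
        U pt.1 pt.2 ⬝ᵥ deriv (fun s => φ (s, pt.2)) pt.1
          + F (U pt.1 pt.2) ⬝ᵥ deriv (fun y => φ (pt.1, y)) pt.2)
      (Set.Ioi (0 : ℝ) ×ˢ Set.univ) ∧
    (∫ t in Set.Ioi (0 : ℝ), ∫ x : ℝ,
        (U t x ⬝ᵥ deriv (fun s => φ (s, x)) t
          + F (U t x) ⬝ᵥ deriv (fun y => φ (t, y)) x))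
      + (∫ x : ℝ, U₀ x ⬝ᵥ φ (0, x)) = 0 := by
  obtain ⟨ψ, hψ⟩ : ∃ ψ : Fin N → ℝ × ℝ → ℝ, ψ = fun i w => φ w i := ⟨_, rfl⟩
  have ψs : ∀ i, ContDiff ℝ (⊤ : ℕ∞) (ψ i) := fun i => by
    rw [hψ]; exact contDiff_pi.1 hφ i
  have ψc : ∀ i, HasCompactSupport (ψ i) := fun i => by
    rw [hψ]; exact hc.comp_left (g := fun v : Fin N → ℝ => v i) rfl
  obtain ⟨J, hJ⟩ : ∃ J : Fin N → ℝ × ℝ → (Fin N → ℝ), J = fun i z =>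
      fderiv ℝ (ψ i) z (1, 0) • pos U z + fderiv ℝ (ψ i) z (0, 1) • pos (fun t x => F (U t x)) z :=
    ⟨_, rfl⟩
  have iJ : ∀ i, Integrable (J i) := fun i => by
    rw [hJ]
    obtain ⟨c1, s1⟩ := fderiv_apply_compact (ψs i) (ψc i) (1, 0)
    obtain ⟨c2, s2⟩ := fderiv_apply_compact (ψs i) (ψc i) (0, 1)
    exact (integrable_pair c1 s1 h.meas fun z => pos_le hb0 fun _ => hQ _ (h.mem _ _)).add
      (integrable_pair c2 s2 h.measF fun z => pos_le hb0 fun _ => hQF _ (h.mem _ _))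
  have iJi : ∀ i j, Integrable (fun z => J i z j) := fun i j => (iJ i).eval j
  have hS : MeasurableSet (Ioi (0 : ℝ) ×ˢ (univ : Set ℝ)) := measurableSet_Ioi.prod .univ
  have iS : Integrable fun z => ∑ i, J i z i := integrable_finsetSum _ fun i _ => iJi i i
  have hI : ∀ z ∈ Ioi (0 : ℝ) ×ˢ (univ : Set ℝ), (∑ i, J i z i) =
      U z.1 z.2 ⬝ᵥ deriv (fun s => φ (s, z.2)) z.1
          + F (U z.1 z.2) ⬝ᵥ deriv (fun y => φ (z.1, y)) z.2 := by
    intro z hz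
    have hz0 : 0 ≤ z.1 := le_of_lt hz.1
    simp only [dotProduct, ← Finset.sum_add_distrib]
    refine Finset.sum_congr rfl fun i _ => ?_
    obtain ⟨k1, k2⟩ := deriv_slice hφ z i
    rw [k1, k2, hJ, hψ]
    simp only [pos, if_pos hz0, Pi.add_apply, Pi.smul_apply, smul_eq_mul]
    ring
  have iI := iS.integrableOn.congr_fun hI hS
  refine ⟨iI, ?_⟩
  have e1 := setIntegral_prod _ iI
  rw [Measure.restrict_univ] at e1
  rw [← e1, ← Measure.volume_eq_prod, ← setIntegral_congr_fun hS hI,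
    setIntegral_eq_integral_of_ae_compl_eq_zero, integral_finsetSum _ fun i _ => iJi i i]
  · have i0 : ∀ i j, Integrable fun x => (ψ i (0, x) • U₀ x) j := fun i => by
      have c0 : Continuous fun x : ℝ => ψ i (0, x) := (ψs i).continuous.comp (by fun_prop)
      have s0 : HasCompactSupport fun x : ℝ => ψ i (0, x) := by
        refine HasCompactSupport.of_support_subset_isCompact ((ψc i).isCompact.image continuous_snd)
          fun x hx => ⟨(0, x), subset_tsupport _ hx, rfl⟩
      exact Integrable.eval ((c0.integrable_of_hasCompactSupport s0).smul_bdd b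
        hU₀.aestronglyMeasurable (Eventually.of_forall hU₀b))
    have e2 : ∫ x, U₀ x ⬝ᵥ φ (0, x) = ∑ i, ∫ x, (ψ i (0, x) • U₀ x) i := by
      rw [← integral_finsetSum _ fun i _ => i0 i i]
      congr 1
      funext x
      simp only [dotProduct, hψ, Pi.smul_apply, smul_eq_mul]
      exact Finset.sum_congr rfl fun i _ => mul_comm _ _
    rw [e2, ← Finset.sum_add_distrib]
    refine Finset.sum_eq_zero fun i _ => ?_
    rw [← eval_integral (iJi i), ← eval_integral (i0 i), ← Pi.add_apply]
    have := h.weak (ψ i) (ψs i) (ψc i)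
    rw [hJ, this, Pi.zero_apply]
  · -- the line `t = 0` is a null set
    have hnull : (volume : Measure (ℝ × ℝ)) ({0} ×ˢ univ) = 0 := by
      rw [Measure.volume_eq_prod, Measure.prod_prod]; simp
    filter_upwards [compl_mem_ae_iff.2 hnull] with z hz hz2
    have hz0 : ¬ 0 ≤ z.1 := by
      intro h0
      rcases h0.lt_or_eq with h1 | h1
      · exact hz2 ⟨h1, trivial⟩
      · exact hz ⟨h1.symm, trivial⟩
    simp [hJ, pos, hz0]

lemma Sol.locallyIntegrable {U₀ : ℝ → (Fin N → ℝ)} {Q : Set (Fin N → ℝ)} {A b : ℝ}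
    {U : ℝ → ℝ → (Fin N → ℝ)} (h : Sol F U₀ Q A U) (hQ : ∀ v ∈ Q, ‖v‖ ≤ b) :
    LocallyIntegrableOn (fun pt : ℝ × ℝ => U pt.1 pt.2) (Set.Ioi (0 : ℝ) ×ˢ Set.univ) := by
  have hb0 : 0 ≤ b := (norm_nonneg _).trans (hQ _ (h.mem 0 0))
  have hS : MeasurableSet (Ioi (0 : ℝ) ×ˢ (univ : Set ℝ)) := measurableSet_Ioi.prod .univ
  have h1 : LocallyIntegrable (pos U) volume :=
    ((continuous_const (y := b)).locallyIntegrable (μ := volume)).mono h.meas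
      (Eventually.of_forall fun z =>
        (pos_le hb0 fun _ => hQ _ (h.mem _ _)).trans (le_abs_self _))
  intro z hz
  obtain ⟨s, hs, hi⟩ := h1.locallyIntegrableOn _ z hz
  refine ⟨s ∩ (Ioi (0 : ℝ) ×ˢ univ), inter_mem hs self_mem_nhdsWithin, ?_⟩
  refine (hi.mono_set inter_subset_left).congr ?_
  filter_upwards [ae_restrict_of_ae_restrict_of_subset inter_subset_right (ae_restrict_mem hS)]
    with w hw
  exact if_pos (le_of_lt hw.1)

end Glimm

namespace Glimm

/-! ### The local result -/

variable {N : ℕ} {F : (Fin N → ℝ) → (Fin N → ℝ)} {P : Fin N → ℝ}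

/-- All requirements on a `Sys` persist on smaller neighborhoods. -/
def Sys.shrink (S : Sys N F P) (ε : ℝ) (h0 : 0 < ε) (h : ε ≤ S.ε) : Sys N F P where
  ρ := S.ρ
  s := S.s
  B := S.B
  ε := ε
  Λ := S.Λ
  reg := S.reg
  ε_pos := h0
  ε_le := h.trans S.ε_le
  one_le_Λ := S.one_le_Λ
  rh k hk σ U hσ hU := S.rh k hk σ U (hσ.trans h) (hU.trans h)
  s_nonneg k hk σ U hσ hU := S.s_nonneg k hk σ U (hσ.trans h) (hU.trans h)
  s_le_one k hk σ U hσ hU := S.s_le_one k hk σ U (hσ.trans h) (hU.trans h)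
  s_mono i j hij hj σ σ' U U' h1 h2 h3 h4 :=
    S.s_mono i j hij hj σ σ' U U' (h1.trans h) (h2.trans h) (h3.trans h) (h4.trans h)
  solve U W hU hW := S.solve U W (hU.trans h) (hW.trans h)
  inj U α β hU hα hβ := S.inj U α β (hU.trans h) (fun k hk => (hα k hk).trans h)
    fun k hk => (hβ k hk).trans h

/-- Existence near a constant state, for speeds in `(0, 1)`. -/
lemma exists_local_unit {O : Set (Fin N → ℝ)} (hO : IsOpen O) (hF : ContDiffOn ℝ 2 F O)
    (hP : P ∈ O) {lam : Fin N → ℝ} (hmono : StrictMono lam)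
    (hev : ∀ i, Module.End.HasEigenvalue
        ((fderiv ℝ F P).toLinearMap : Module.End ℝ (Fin N → ℝ)) (lam i))
    (h0 : ∀ i, 0 < lam i) (h1 : ∀ i, lam i < 1) :
    ∃ ε > 0, Metric.closedBall P ε ⊆ O ∧ ∃ δ > 0, ∃ C > 0, ∀ (U₀ : ℝ → (Fin N → ℝ)) (T : ℝ),
      0 ≤ T → T < δ → eVariationOn U₀ univ ≤ ENNReal.ofReal T → (∀ x, ‖U₀ x - P‖ ≤ ε / 2) →
      ∃ U, Sol F U₀ (Metric.closedBall P ε) (C * T) U := by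
  obtain ⟨S'⟩ := exists_sys hO hF hP hmono hev h0 h1
  obtain ⟨r, hr, hrO⟩ := Metric.nhds_basis_closedBall.mem_iff.1 (hO.mem_nhds hP)
  obtain ⟨S, hS⟩ : ∃ S : Sys N F P, S.ε ≤ r :=
    ⟨S'.shrink (min S'.ε r) (lt_min S'.ε_pos hr) (min_le_left _ _), min_le_right _ _⟩
  have hε := S.ε_pos
  have hΛ : 0 < S.Λ := zero_lt_one.trans_le S.one_le_Λ
  have hB : 0 < S.B := zero_lt_one.trans_le S.reg.one_le
  have hC := S.C_nonneg
  have hsub : Metric.closedBall P S.ε ⊆ O := (Metric.closedBall_subset_closedBall hS).trans hrO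
  have hFc : ContinuousOn F (Metric.closedBall P S.ε) := hF.continuousOn.mono hsub
  obtain ⟨BF, hBF⟩ := (isCompact_closedBall P S.ε).exists_bound_of_continuousOn hFc
  have hBF' : ∀ v, ‖v - P‖ ≤ S.ε → ‖F v‖ ≤ BF := fun v hv =>
    hBF v (mem_closedBall_iff_norm.2 hv)
  refine ⟨S.ε, hε, hsub, min (S.ε / (8 * S.Λ ^ 2 * S.B)) (1 / (10 * S.C * S.Λ + 1)),
    lt_min (by positivity) (by positivity), 6 * S.B * S.Λ, by positivity, ?_⟩
  intro U₀ T hT0 hTδ hT hnear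
  have t1 : T * (8 * S.Λ ^ 2 * S.B) ≤ S.ε :=
    (le_div_iff₀ (by positivity)).1 (hTδ.le.trans (min_le_left _ _))
  have t2 : T * (10 * S.C * S.Λ + 1) ≤ 1 :=
    (le_div_iff₀ (by positivity)).1 (hTδ.le.trans (min_le_right _ _))
  have hsm : ∀ x, Small S (U₀ x) (2 * S.Λ * T) := fun x =>
    ⟨hnear x, by linarith, by linarith, by positivity⟩
  obtain ⟨d, V, hd, hd1, hd0, hA, hcons⟩ := exists_approx S hBF' hT0 hT hsm
  exact solution_of_approx hε.le (by positivity) hFc hBF' hd hd1 hd0 hA hcons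

lemma exists_local {O : Set (Fin N → ℝ)} (hO : IsOpen O) (hF : ContDiffOn ℝ 2 F O)
    (hP : P ∈ O) {lam : Fin N → ℝ} (hmono : StrictMono lam)
    (hev : ∀ i, Module.End.HasEigenvalue
        ((fderiv ℝ F P).toLinearMap : Module.End ℝ (Fin N → ℝ)) (lam i)) :
    ∃ ε > 0, Metric.closedBall P ε ⊆ O ∧ ∃ δ > 0, ∃ C > 0, ∀ (U₀ : ℝ → (Fin N → ℝ)) (T : ℝ),
      0 ≤ T → T < δ → eVariationOn U₀ univ ≤ ENNReal.ofReal T → (∀ x, ‖U₀ x - P‖ ≤ ε / 2) →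
      ∃ U, Sol F U₀ (Metric.closedBall P ε) (C * T) U := by
  obtain ⟨b, hb0, hb⟩ : ∃ b : ℝ, 0 < b ∧ ∀ i, |lam i| < b := by
    refine ⟨1 + ∑ i, |lam i|, by positivity, fun i => ?_⟩
    have := Finset.single_le_sum (f := fun i => |lam i|) (fun i _ => abs_nonneg _)
      (Finset.mem_univ i)
    linarith
  obtain ⟨a, ha⟩ : ∃ a, a = 2 * b := ⟨_, rfl⟩
  have ha0 : 0 < a := by linarith
  -- in the moving, rescaled frame all speeds lie in `(0, 1)`
  obtain ⟨G, hG⟩ : ∃ G : (Fin N → ℝ) → (Fin N → ℝ), G = fun v => a⁻¹ • (F v + b • v) := ⟨_, rfl⟩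
  have hGF : ContDiffOn ℝ 2 G O := by
    rw [hG]
    exact (hF.add (contDiffOn_id.const_smul b)).const_smul a⁻¹
  have hFd : HasFDerivAt F (fderiv ℝ F P) P :=
    ((hF.contDiffAt (hO.mem_nhds hP)).differentiableAt (by norm_num)).hasFDerivAt
  have hGd : fderiv ℝ G P
      = a⁻¹ • (fderiv ℝ F P + b • ContinuousLinearMap.id ℝ (Fin N → ℝ)) := by
    rw [hG]
    exact ((hFd.add ((hasFDerivAt_id P).const_smul b)).const_smul a⁻¹).fderiv
  have hbi : ∀ i, -b < lam i ∧ lam i < b := fun i => abs_lt.1 (hb i)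
  obtain ⟨ε, hε, hsub, δ, hδ, C, hC, hsol⟩ := exists_local_unit hO hGF hP
    (lam := fun i => a⁻¹ * (lam i + b))
    (fun i j hij => mul_lt_mul_of_pos_left (by linarith [hmono hij]) (inv_pos.2 ha0))
    (fun i => by
      obtain ⟨v, hv⟩ := (hev i).exists_hasEigenvector
      refine Module.End.hasEigenvalue_of_hasEigenvector (x := v)
        ⟨Module.End.mem_eigenspace_iff.2 ?_, hv.2⟩
      have h1 : fderiv ℝ F P v = lam i • v := hv.apply_eq_smul
      change fderiv ℝ G P v = _
      rw [hGd]
      simp only [_root_.smul_apply, _root_.add_apply,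
        ContinuousLinearMap.id_apply, h1]
      rw [← add_smul, smul_smul])
    (fun i => mul_pos (inv_pos.2 ha0) (by linarith [(hbi i).1]))
    (fun i => by
      rw [inv_mul_lt_iff₀ ha0]
      linarith [(hbi i).2])
  refine ⟨ε, hε, hsub, δ, hδ, C, hC, fun U₀ T h0 h1 h2 h3 => ?_⟩
  obtain ⟨W, hW⟩ := hsol U₀ T h0 h1 h2 h3
  refine ⟨_, hW.galilean (F := F) (b := b) ha0 fun v => ?_⟩
  rw [hG]
  simp only
  rw [smul_inv_smul₀ ha0.ne', add_sub_cancel_right]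

/-- Uniform constants on a compact set from local ones, for a property monotone in the constant
`C`. -/
lemma patch {K : Set (Fin N → ℝ)} (hK : IsCompact K) {R : (ℝ → (Fin N → ℝ)) → ℝ → Prop}
    (hR : ∀ U₀ C C', C ≤ C' → R U₀ C → R U₀ C')
    (hloc : ∀ P ∈ K, ∃ S ∈ nhds P, ∃ δ : ℝ, 0 < δ ∧ ∃ C : ℝ, 0 < C ∧ ∀ U₀ : ℝ → (Fin N → ℝ),
      eVariationOn U₀ univ < ENNReal.ofReal δ → (∃ v ∈ S, Tendsto U₀ atBot (nhds v)) → R U₀ C) :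
    ∃ δ : ℝ, 0 < δ ∧ ∃ C : ℝ, 0 < C ∧ ∀ U₀ : ℝ → (Fin N → ℝ),
      eVariationOn U₀ univ < ENNReal.ofReal δ → (∃ v ∈ K, Tendsto U₀ atBot (nhds v)) →
      R U₀ C := by
  refine hK.induction_on (p := fun S : Set (Fin N → ℝ) => ∃ δ : ℝ, 0 < δ ∧ ∃ C : ℝ, 0 < C ∧
      ∀ U₀ : ℝ → (Fin N → ℝ), eVariationOn U₀ Set.univ < ENNReal.ofReal δ →
        (∃ Uminf ∈ S, Tendsto U₀ atBot (nhds Uminf)) → R U₀ C) ?_ ?_ ?_ ?_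
  · exact ⟨1, one_pos, 1, one_pos, fun U₀ _ h => by obtain ⟨v, hv, _⟩ := h; exact hv.elim⟩
  · rintro S S' hSS' ⟨δ, hδ, C, hC, h⟩
    exact ⟨δ, hδ, C, hC, fun U₀ h1 ⟨v, hv, h2⟩ => h U₀ h1 ⟨v, hSS' hv, h2⟩⟩
  · rintro S S' ⟨δ, hδ, C, hC, h⟩ ⟨δ', hδ', C', hC', h'⟩
    refine ⟨min δ δ', lt_min hδ hδ', max C C', lt_max_of_lt_left hC, fun U₀ h1 ⟨v, hv, h2⟩ => ?_⟩
    rcases hv with hv | hv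
    · exact hR U₀ _ _ (le_max_left _ _) (h U₀
        (h1.trans_le (ENNReal.ofReal_le_ofReal (min_le_left _ _))) ⟨v, hv, h2⟩)
    · exact hR U₀ _ _ (le_max_right _ _) (h' U₀
        (h1.trans_le (ENNReal.ofReal_le_ofReal (min_le_right _ _))) ⟨v, hv, h2⟩)
  · intro P hP
    obtain ⟨S, hS, h⟩ := hloc P hP
    exact ⟨S, mem_nhdsWithin_of_mem_nhds hS, h⟩

end Glimm

/-- **Glimm's theorem (1965).**
For a strictly hyperbolic system `∂ₜ U + ∂ₓ F(U) = 0` on a neighborhood `O` of a compact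
set `K ⊆ ℝ^N`, there are `δ > 0` and `C > 0` such that any initial data `U₀` of total
variation less than `δ` whose limit at `x → −∞` lies in `K` admits a global weak solution
`U` whose total variation in `x` satisfies `Tot.Var{U(t,·)} ≤ C · Tot.Var{U₀}` for a.e.
`t > 0`. -/
theorem glimm_existence
    (N : ℕ) (hN : 1 ≤ N)
    (K : Set (Fin N → ℝ)) (hK : IsCompact K)
    (O : Set (Fin N → ℝ)) (hO : IsOpen O) (hKO : K ⊆ O)
    (F : (Fin N → ℝ) → (Fin N → ℝ)) (hF : ContDiffOn ℝ 2 F O)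
    -- strict hyperbolicity: `DF(U)` has `N` distinct real eigenvalues for every `U ∈ O`
    (hyp : ∀ U ∈ O, ∃ lam : Fin N → ℝ, StrictMono lam ∧
      ∀ i : Fin N, Module.End.HasEigenvalue
        ((fderiv ℝ F U).toLinearMap : Module.End ℝ (Fin N → ℝ)) (lam i)) :
    ∃ δ : ℝ, 0 < δ ∧ ∃ C : ℝ, 0 < C ∧
      ∀ U₀ : ℝ → (Fin N → ℝ),
        eVariationOn U₀ Set.univ < ENNReal.ofReal δ →
        (∃ Uminf ∈ K, Tendsto U₀ atBot (nhds Uminf)) →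
        ∃ U : ℝ → ℝ → (Fin N → ℝ),
          -- values in `O`
          (∀ t x : ℝ, 0 < t → U t x ∈ O) ∧
          -- local integrability
          LocallyIntegrableOn (fun pt : ℝ × ℝ => U pt.1 pt.2)
            (Set.Ioi (0 : ℝ) ×ˢ Set.univ) ∧
          -- `U` is a weak solution of `∂ₜ U + ∂ₓ F(U) = 0` with data `U₀`
          (∀ φ : ℝ × ℝ → (Fin N → ℝ), ContDiff ℝ (⊤ : ℕ∞) φ → HasCompactSupport φ →
            IntegrableOn (fun pt : ℝ × ℝ =>
                U pt.1 pt.2 ⬝ᵥ deriv (fun s => φ (s, pt.2)) pt.1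
                  + F (U pt.1 pt.2) ⬝ᵥ deriv (fun y => φ (pt.1, y)) pt.2)
              (Set.Ioi (0 : ℝ) ×ˢ Set.univ) ∧
            (∫ t in Set.Ioi (0 : ℝ), ∫ x : ℝ,
                (U t x ⬝ᵥ deriv (fun s => φ (s, x)) t
                  + F (U t x) ⬝ᵥ deriv (fun y => φ (t, y)) x))
              + (∫ x : ℝ, U₀ x ⬝ᵥ φ (0, x)) = 0) ∧
          -- the BV estimate for a.e. `t > 0`
          (∀ᵐ t : ℝ, 0 < t →
            eVariationOn (U t) Set.univ ≤ ENNReal.ofReal C * eVariationOn U₀ Set.univ) := by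
  refine Glimm.patch hK ?_ ?_
  · rintro U₀ C C' hCC' ⟨U, u1, u2, u3, u4⟩
    refine ⟨U, u1, u2, u3, ?_⟩
    filter_upwards [u4] with t ht h0
    exact (ht h0).trans (mul_le_mul_left (ENNReal.ofReal_le_ofReal hCC') _)
  · intro P hPK
    have hP := hKO hPK
    obtain ⟨lam, hmono, hev⟩ := hyp P hP
    obtain ⟨ε, hε, hsub, δ, hδ, C, hC, hsol⟩ := Glimm.exists_local hO hF hP hmono hev
    refine ⟨Metric.ball P (ε / 4), Metric.ball_mem_nhds P (by positivity), min δ (ε / 4), lt_min hδ (by positivity), C, hC, ?_⟩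
    rintro U₀ hTV ⟨v, hv, hlim⟩
    have hfin : eVariationOn U₀ univ ≠ ⊤ := (hTV.trans ENNReal.ofReal_lt_top).ne
    obtain ⟨T, hTdef⟩ : ∃ T, T = (eVariationOn U₀ univ).toReal := ⟨_, rfl⟩
    have hT0 : 0 ≤ T := hTdef ▸ ENNReal.toReal_nonneg
    have hT : eVariationOn U₀ univ = ENNReal.ofReal T := by
      rw [hTdef, ENNReal.ofReal_toReal hfin]
    have hTlt : T < min δ (ε / 4) := by
      rw [hT] at hTV
      exact ((ENNReal.ofReal_lt_ofReal_iff_of_nonneg hT0).1 hTV)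
    have hosc := (Glimm.bv_facts hT0 hT.le).1
    have hnear : ∀ x, ‖U₀ x - P‖ ≤ ε / 2 := fun x => by
      have h1 : ‖U₀ x - v‖ ≤ T :=
        le_of_tendsto (tendsto_const_nhds.sub hlim).norm (Eventually.of_forall fun y => hosc x y)
      have h2 : ‖v - P‖ < ε / 4 := mem_ball_iff_norm.1 hv
      have h3 := norm_sub_le_norm_sub_add_norm_sub (U₀ x) v P
      have h4 := hTlt.trans_le (min_le_right _ _)
      linarith
    obtain ⟨U, hU⟩ := hsol U₀ T hT0 (hTlt.trans_le (min_le_left _ _)) hT.le hnear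
    obtain ⟨BF, hBF⟩ := (isCompact_closedBall P ε).exists_bound_of_continuousOn
      (hF.continuousOn.mono hsub)
    obtain ⟨b, hb⟩ : ∃ b, b = max (‖P‖ + ε) BF := ⟨_, rfl⟩
    have hP' : ∀ w, ‖w - P‖ ≤ ε → ‖w‖ ≤ b := fun w hw => by
      have := norm_add_le P (w - P)
      rw [add_sub_cancel] at this
      rw [hb]
      exact le_max_of_le_left (by linarith)
    have hQ : ∀ w ∈ Metric.closedBall P ε, ‖w‖ ≤ b := fun w hw =>
      hP' w (mem_closedBall_iff_norm.1 hw)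
    have hQF : ∀ w ∈ Metric.closedBall P ε, ‖F w‖ ≤ b := fun w hw => by
      rw [hb]; exact le_max_of_le_right (hBF w hw)
    have hb0 : 0 ≤ b := (norm_nonneg P).trans (hP' P (by simpa using hε.le))
    refine ⟨U, fun t x _ => hsub (hU.mem t x), hU.locallyIntegrable hQ, fun φ hφ hc =>
      hU.weak_vector hb0 hQ hQF (Glimm.measurable_of_bv hfin)
        (fun x => hP' _ ((hnear x).trans (by linarith))) hφ hc, Eventually.of_forall fun t _ => ?_⟩
    rw [hT, ← ENNReal.ofReal_mul hC.le]
    exact hU.var t
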